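/- arXiv:2605.04513 — 4 statements merged into one kernel-verified Lean document; each statement's English description precedes it below -/
import Mathlib

section
/- The following two statements (each quantified over all finite groups) are equivalent. (i) Conjecture 2.1: for every finite group G such that G/Z(G) has a normal subgroup S̄ which is nonabelian simple and has trivial centralizer in G/Z(G), every faithful irreducible complex character χ of G whose restriction to G^(∞) is irreducible, and every g ∈ G with χ(g) ≠ 0 and G = ⟨G^(∞), Z(G), g⟩, one has o(gZ(G))·χ(1) ∣ |G : Z(G)|. (ii) Conjecture 2.4: for every finite group H whose derived subgroup L = [H,H] is quasi-simple with Z(L) = Z(H), every faithful irreducible complex character χ of H, and every h ∈ H with χ(h) ≠ 0 and H = ⟨L, h⟩, one has o(hZ(H))·χ(1) ∣ |H : Z(H)|. -/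
/-- The solvable residual `G^(∞)` of a group `G`: for finite `G` this is the stable term
of the derived series, here realised as the intersection of all terms of the derived
series. -/
def solvableResidual (G : Type*) [Group G] : Subgroup G :=
  ⨅ n : ℕ, derivedSeries G n

/-- A group `L` is quasi-simple if it is perfect and `L/Z(L)` is simple. -/
def IsQuasisimple (L : Type*) [Group L] : Prop :=
  commutator L = ⊤ ∧ IsSimpleGroup (L ⧸ Subgroup.center L)

/-- **Conjecture 2.1.** For every finite group `G` such that `G/Z(G)` has a normal
subgroup `S̄` which is nonabelian simple and has trivial centralizer in `G/Z(G)`, every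
faithful irreducible complex character `χ` of `G` whose restriction to `G^(∞)` is
irreducible, and every `g ∈ G` with `χ(g) ≠ 0` and `G = ⟨G^(∞), Z(G), g⟩`, one has
`o(gZ(G))·χ(1) ∣ |G : Z(G)|`. -/
def Conjecture21 : Prop :=
  ∀ (G : Type) [Group G] [Finite G],
    (∃ S : Subgroup (G ⧸ Subgroup.center G), S.Normal ∧ IsSimpleGroup ↥S ∧
      (∃ a b : ↥S, a * b ≠ b * a) ∧
      Subgroup.centralizer (S : Set (G ⧸ Subgroup.center G)) = ⊥) →
    ∀ (V : FDRep ℂ G), CategoryTheory.Simple V → Function.Injective V.ρ →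
      CategoryTheory.Simple (FDRep.of (V.ρ.comp (solvableResidual G).subtype)) →
      ∀ g : G, V.character g ≠ 0 →
        solvableResidual G ⊔ Subgroup.center G ⊔ Subgroup.zpowers g = ⊤ →
        orderOf (QuotientGroup.mk g : G ⧸ Subgroup.center G) * Module.finrank ℂ V ∣
          (Subgroup.center G).index

/-- **Conjecture 2.4.** For every finite group `H` whose derived subgroup `L = [H,H]` is
quasi-simple with `Z(L) = Z(H)`, every faithful irreducible complex character `χ` of `H`,
and every `h ∈ H` with `χ(h) ≠ 0` and `H = ⟨L, h⟩`, one has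
`o(hZ(H))·χ(1) ∣ |H : Z(H)|`. -/
def Conjecture24 : Prop :=
  ∀ (H : Type) [Group H] [Finite H],
    IsQuasisimple ↥(commutator H) →
    Subgroup.map (commutator H).subtype (Subgroup.center ↥(commutator H)) =
      Subgroup.center H →
    ∀ (V : FDRep ℂ H), CategoryTheory.Simple V → Function.Injective V.ρ →
      ∀ h : H, V.character h ≠ 0 → commutator H ⊔ Subgroup.zpowers h = ⊤ →
        orderOf (QuotientGroup.mk h : H ⧸ Subgroup.center H) * Module.finrank ℂ V ∣
          (Subgroup.center H).index

/-!
Assuming Conjecture 2.4, every irreducible complex projective representation `ρ` of a finite group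
`P` satisfies `o(g) · deg ρ ∣ |P|` whenever `tr ρ(g) ≠ 0`, by induction on `|P|`; applied to
`P = G/Z(G)` this contains Conjecture 2.1. One may assume that `ρ` has trivial kernel. Let `N` be a
minimal normal subgroup of `P`. If `ρ` is not homogeneous on `N`, its isotypic components form a
nontrivial system of imprimitivity, and since `tr ρ(g) ≠ 0` some conjugate of `g` lies in the
stabilizer of a block, a smaller group. Otherwise `ρ = σ ⊗ τ` with `σ` irreducible on `N` and `τ`
trivial on `N`; the divisibilities for `σ` on `ker τ · ⟨g⟩` and for `τ` on `P / ker τ` multiply to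
the one for `ρ`, unless `τ` is scalar and `ρ` is irreducible on `N`. In that case one may take
`P = N⟨g⟩`, and there are three possibilities:

* `N` is abelian. Then `N ∩ Z(P) = 1`, which forces `⟨g⟩ ∩ N = 1`.
* `N` is a product of several nonabelian simple groups, cyclically permuted by `g`. Then the trace
  of `g` is governed by that of a power of `g` on a single tensor factor.
* `N` is nonabelian simple. Then `ρ` lifts to a faithful linear representation of a finite central
  extension of `P` to which Conjecture 2.4 applies.

Conversely, let `H = ⟨L, h⟩` be as in Conjecture 2.4 with `χ(h) ≠ 0`. Conjugation by `h` has finite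
order on the commutant of `L`, and an eigenvector for an eigenvalue `μ` is an invertible operator
`a` with `h a h⁻¹ = μ a`, so that `tr h ≠ 0` forces `μ = 1`. Hence the commutant of `L` commutes
with all of `H`, and `χ` is irreducible on `L = H^(∞)`.
-/

/-! ### Projective representations -/

section ScalarEquiv

variable {k A : Type*} [Field k] [Ring A] [Algebra k A] {a b c d : A}

/-- Equality up to a nonzero scalar. Invertible operators are related when they define the same
element of the projective linear group. -/
def ScalarEquiv (k : Type*) {A : Type*} [Field k] [Ring A] [Algebra k A] (a b : A) : Prop :=
  ∃ c : kˣ, a = c • b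

namespace ScalarEquiv

theorem refl (a : A) : ScalarEquiv k a a := ⟨1, (one_smul _ a).symm⟩

theorem symm (h : ScalarEquiv k a b) : ScalarEquiv k b a := by
  obtain ⟨t, rfl⟩ := h
  exact ⟨t⁻¹, (inv_smul_smul t b).symm⟩

theorem trans (hab : ScalarEquiv k a b) (hbc : ScalarEquiv k b c) : ScalarEquiv k a c := by
  obtain ⟨s, rfl⟩ := hab
  obtain ⟨t, rfl⟩ := hbc
  exact ⟨s * t, (mul_smul s t c).symm⟩

theorem mul (hab : ScalarEquiv k a b) (hcd : ScalarEquiv k c d) :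
    ScalarEquiv k (a * c) (b * d) := by
  obtain ⟨s, rfl⟩ := hab
  obtain ⟨t, rfl⟩ := hcd
  exact ⟨s * t, smul_mul_smul_comm s b t d⟩

theorem commute (h : ScalarEquiv k a b) (hb : Commute b c) : Commute a c := by
  obtain ⟨t, rfl⟩ := h
  exact hb.smul_left t

theorem commute_of_one (h : ScalarEquiv k a 1) (b : A) : Commute a b :=
  h.commute (Commute.one_left b)

theorem of_mul_right (hu : IsUnit c) (h : ScalarEquiv k (a * c) (b * c)) : ScalarEquiv k a b := by
  obtain ⟨t, ht⟩ := h
  exact ⟨t, hu.mul_left_injective (ht.trans (smul_mul_assoc t b c).symm)⟩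

theorem mem_iff (S : Submodule k A) (h : ScalarEquiv k a b) : a ∈ S ↔ b ∈ S := by
  obtain ⟨t, rfl⟩ := h
  exact S.smul_mem_iff t.ne_zero

theorem map {B : Type*} [Ring B] [Algebra k B] (f : A →ₗ[k] B) (h : ScalarEquiv k a b) :
    ScalarEquiv k (f a) (f b) := by
  obtain ⟨t, rfl⟩ := h
  exact ⟨t, map_smul f (t : k) b⟩

theorem of_map {B : Type*} [Ring B] [Algebra k B] {f : A →ₐ[k] B} (hf : Function.Injective f)
    (h : ScalarEquiv k (f a) (f b)) : ScalarEquiv k a b := by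
  obtain ⟨t, ht⟩ := h
  exact ⟨t, hf (ht.trans (map_smul f (t : k) b).symm)⟩

theorem smul_of_isUnit [Nontrivial A] {t : k} (hu : IsUnit (t • a)) : ScalarEquiv k (t • a) a := by
  refine ⟨Units.mk0 t ?_, rfl⟩
  rintro rfl
  exact not_isUnit_zero (zero_smul k a ▸ hu)

theorem map_ne_zero {M : Type*} [AddCommGroup M] [Module k M] (f : A →ₗ[k] M)
    (h : ScalarEquiv k a b) : f a ≠ 0 ↔ f b ≠ 0 := by
  obtain ⟨t, rfl⟩ := h
  rw [Units.smul_def, map_smul, Ne, smul_eq_zero_iff_right t.ne_zero]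

theorem apply_mem_iff {V : Type*} [AddCommGroup V] [Module k V] {a b : Module.End k V}
    (h : ScalarEquiv k a b) (W : Submodule k V) (v : V) : a v ∈ W ↔ b v ∈ W := by
  obtain ⟨t, rfl⟩ := h
  exact W.smul_mem_iff t.ne_zero

end ScalarEquiv

end ScalarEquiv

theorem conjAct_unit_smul_mul {A : Type*} [Ring A] {u : A} (hu : IsUnit u) (a : A) :
    ConjAct.toConjAct hu.unit • a * u = u * a := by
  rw [ConjAct.units_smul_def, ConjAct.ofConjAct_toConjAct, mul_assoc, IsUnit.val_inv_mul, mul_one,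
    IsUnit.unit_spec]

/-- A projective representation of the group `P` in the `k`-algebra `A`: a map `ρ : P → A` that is
multiplicative up to nonzero scalars. The scalars are not recorded. -/
structure IsProjectiveRep (k : Type*) {P A : Type*} [Group P] [Field k] [Ring A] [Algebra k A]
    (ρ : P → A) : Prop where
  one : ScalarEquiv k (ρ 1) 1
  mul : ∀ x y, ScalarEquiv k (ρ x * ρ y) (ρ (x * y))

namespace IsProjectiveRep

variable {k P A : Type*} [Group P] [Field k] [Ring A] [Algebra k A] {ρ : P → A}

theorem of_monoidHom (f : P →* A) : IsProjectiveRep k f where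
  one := by rw [map_one]; exact .refl 1
  mul x y := by rw [map_mul]; exact .refl _

theorem of_isUnit (hu : IsUnit (ρ 1)) (hmul : ∀ x y, ScalarEquiv k (ρ x * ρ y) (ρ (x * y))) :
    IsProjectiveRep k ρ where
  one := .of_mul_right hu (by simpa using hmul 1 1)
  mul := hmul

theorem comp (h : IsProjectiveRep k ρ) {Q : Type*} [Group Q] (f : Q →* P) :
    IsProjectiveRep k (ρ ∘ f) where
  one := by simpa using h.one
  mul x y := by simpa using h.mul (f x) (f y)

theorem restrict (h : IsProjectiveRep k ρ) (H : Subgroup P) :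
    IsProjectiveRep k fun x : H ↦ ρ x :=
  h.comp H.subtype

theorem mul_inv (h : IsProjectiveRep k ρ) (x : P) : ScalarEquiv k (ρ x * ρ x⁻¹) 1 := by
  simpa using (h.mul x x⁻¹).trans (by simpa using h.one)

theorem isUnit (h : IsProjectiveRep k ρ) (x : P) : IsUnit (ρ x) := by
  obtain ⟨s, hs⟩ := (h.mul_inv x).symm
  obtain ⟨t, ht⟩ := (h.mul_inv x⁻¹).symm
  rw [inv_inv] at ht
  exact isUnit_iff_exists_and_exists.2
    ⟨⟨s • ρ x⁻¹, by rw [mul_smul_comm, hs]⟩, ⟨t • ρ x⁻¹, by rw [smul_mul_assoc, ht]⟩⟩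

/-- The action of `P` on `A` by conjugation, `conj x a = ρ x * a * (ρ x)⁻¹`. Scalars are central,
so this is a genuine action by automorphisms. -/
noncomputable def conj (h : IsProjectiveRep k ρ) : P →* (A ≃ₐ[k] A) where
  toFun x := MulSemiringAction.toAlgEquiv k A (ConjAct.toConjAct (h.isUnit x).unit)
  map_one' := by
    ext a
    refine (h.isUnit 1).mul_left_injective ?_
    exact (conjAct_unit_smul_mul (h.isUnit 1) a).trans (h.one.commute_of_one a).eq
  map_mul' x y := by
    ext a
    obtain ⟨t, ht⟩ := h.mul x y
    refine ((h.isUnit x).mul (h.isUnit y)).mul_left_injective ?_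
    calc ConjAct.toConjAct (h.isUnit (x * y)).unit • a * (ρ x * ρ y) = ρ x * (ρ y * a) := by
          rw [ht, mul_smul_comm, conjAct_unit_smul_mul, ← smul_mul_assoc, ← ht, mul_assoc]
      _ = ConjAct.toConjAct (h.isUnit x).unit • ConjAct.toConjAct (h.isUnit y).unit • a *
          (ρ x * ρ y) := by
          symm
          rw [← mul_assoc, conjAct_unit_smul_mul, mul_assoc, conjAct_unit_smul_mul]

theorem conj_apply_mul (h : IsProjectiveRep k ρ) (x : P) (a : A) :
    h.conj x a * ρ x = ρ x * a := conjAct_unit_smul_mul (h.isUnit x) a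

theorem conj_apply_eq_iff (h : IsProjectiveRep k ρ) {x : P} {a b : A} :
    h.conj x a = b ↔ ρ x * a = b * ρ x := by
  rw [← h.conj_apply_mul, (h.isUnit x).mul_left_inj]

theorem conj_apply_rep (h : IsProjectiveRep k ρ) (x y : P) :
    ScalarEquiv k (h.conj x (ρ y)) (ρ (x * y * x⁻¹)) := by
  refine .of_mul_right (h.isUnit x) ?_
  rw [h.conj_apply_mul]
  exact (h.mul x y).trans (by simpa using (h.mul (x * y * x⁻¹) x).symm)

theorem trace_conj_apply {V : Type*} [AddCommGroup V] [Module k V] {ρ : P → Module.End k V}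
    (h : IsProjectiveRep k ρ) (x : P) (a : Module.End k V) :
    LinearMap.trace k V (h.conj x a) = LinearMap.trace k V a :=
  LinearMap.trace_conj k a (h.isUnit x).unit

/-- The elements whose operators commute with a given operator. -/
noncomputable def stabilizer (h : IsProjectiveRep k ρ) (a : A) : Subgroup P :=
  (MulAction.stabilizer (A ≃ₐ[k] A) a).comap h.conj

theorem mem_stabilizer (h : IsProjectiveRep k ρ) {a : A} {x : P} :
    x ∈ h.stabilizer a ↔ Commute (ρ x) a := h.conj_apply_eq_iff

/-- The kernel of a projective representation: the elements represented by scalars. -/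
def ker (h : IsProjectiveRep k ρ) : Subgroup P where
  carrier := {x | ScalarEquiv k (ρ x) 1}
  one_mem' := h.one
  mul_mem' {x y} hx hy := (h.mul x y).symm.trans (by simpa using hx.mul hy)
  inv_mem' {x} hx := by
    simpa using ((ScalarEquiv.refl (ρ x⁻¹)).mul hx.symm).trans (by simpa using h.mul_inv x⁻¹)

theorem mem_ker (h : IsProjectiveRep k ρ) {x : P} : x ∈ h.ker ↔ ScalarEquiv k (ρ x) 1 := Iff.rfl

instance ker_normal (h : IsProjectiveRep k ρ) : h.ker.Normal where
  conj_mem y hy x :=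
    (h.conj_apply_rep x y).symm.trans (by simpa using hy.map (h.conj x).toLinearMap)

theorem out_equiv (h : IsProjectiveRep k ρ) {K : Subgroup P} (hK : K ≤ h.ker) (x : P) :
    ScalarEquiv k (ρ (QuotientGroup.mk x : P ⧸ K).out) (ρ x) := by
  obtain ⟨y, hy⟩ := QuotientGroup.mk_out_eq_mul K x
  rw [hy]
  simpa using (h.mul x y).symm.trans ((ScalarEquiv.refl (ρ x)).mul (hK y.2))

theorem quotient (h : IsProjectiveRep k ρ) {K : Subgroup P} [K.Normal] (hK : K ≤ h.ker) :
    IsProjectiveRep k fun q : P ⧸ K ↦ ρ q.out where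
  one := (h.out_equiv hK 1).trans h.one
  mul p q := by
    induction p using QuotientGroup.induction_on with | H x => ?_
    induction q using QuotientGroup.induction_on with | H y => ?_
    exact ((h.out_equiv hK x).mul (h.out_equiv hK y)).trans
      ((h.mul x y).trans (h.out_equiv hK (x * y)).symm)

end IsProjectiveRep

/-- The family of operators `ρ` acts irreducibly: `V` is nonzero and has no proper nonzero
subspace stable under every `ρ x`. -/
structure IsIrreducibleFamily {k X V : Type*} [Field k] [AddCommGroup V] [Module k V]
    (ρ : X → Module.End k V) : Prop where
  nontrivial : Nontrivial V
  eq_bot_or_eq_top : ∀ W : Submodule k V, (∀ x, ∀ w ∈ W, ρ x w ∈ W) → W = ⊥ ∨ W = ⊤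

namespace IsIrreducibleFamily

variable {k X Y V : Type*} [Field k] [AddCommGroup V] [Module k V] {ρ : X → Module.End k V}
  {σ : Y → Module.End k V}

theorem of_forall_exists_eq_smul (h : IsIrreducibleFamily ρ)
    (hσ : ∀ x, ∃ (c : k) (y : Y), ρ x = c • σ y) : IsIrreducibleFamily σ where
  nontrivial := h.nontrivial
  eq_bot_or_eq_top W hW := h.eq_bot_or_eq_top W fun x w hw ↦ by
    obtain ⟨c, y, hxy⟩ := hσ x
    rw [hxy]
    exact W.smul_mem c (hW y w hw)

theorem of_forall_exists_equiv (h : IsIrreducibleFamily ρ)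
    (hσ : ∀ x, ∃ y, ScalarEquiv k (ρ x) (σ y)) : IsIrreducibleFamily σ :=
  h.of_forall_exists_eq_smul fun x ↦
    let ⟨y, c, hxy⟩ := hσ x
    ⟨c, y, hxy⟩

theorem of_subgroup {P : Type*} [Group P] {ρ : P → Module.End k V} {H : Subgroup P}
    (h : IsIrreducibleFamily fun x : H ↦ ρ x) : IsIrreducibleFamily ρ :=
  h.of_forall_exists_equiv fun x ↦ ⟨x, .refl _⟩

theorem mono {P : Type*} [Group P] {ρ : P → Module.End k V} {H K : Subgroup P} (hHK : H ≤ K)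
    (h : IsIrreducibleFamily fun x : H ↦ ρ x) : IsIrreducibleFamily fun x : K ↦ ρ x :=
  h.of_forall_exists_equiv fun x ↦ ⟨⟨x, hHK x.2⟩, .refl _⟩

theorem finrank_eq_one (h : IsIrreducibleFamily ρ) (hs : ∀ x, ScalarEquiv k (ρ x) 1) :
    Module.finrank k V = 1 := by
  have := h.nontrivial
  obtain ⟨v, hv⟩ := exists_ne (0 : V)
  have stable : ∀ x, ∀ w ∈ Submodule.span k {v}, ρ x w ∈ Submodule.span k {v} :=
    fun x w hw ↦ ((hs x).apply_mem_iff _ w).2 hw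
  rcases h.eq_bot_or_eq_top _ stable with hbot | htop
  · exact absurd (Submodule.span_singleton_eq_bot.1 hbot) hv
  · exact _root_.finrank_eq_one v hv ((Submodule.span_singleton_eq_top_iff k v).1 htop)

variable [IsAlgClosed k] [FiniteDimensional k V]

theorem exists_eq_smul_one (h : IsIrreducibleFamily ρ) {a : Module.End k V}
    (ha : ∀ x, Commute (ρ x) a) : ∃ c : k, a = c • (1 : Module.End k V) := by
  have := h.nontrivial
  obtain ⟨μ, hμ⟩ := Module.End.exists_eigenvalue a
  refine ⟨μ, ?_⟩
  have stable (x : X) : ∀ w ∈ a.eigenspace μ, ρ x w ∈ a.eigenspace μ :=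
    Module.End.mapsTo_genEigenspace_of_comm (ha x).symm μ 1
  rcases h.eq_bot_or_eq_top _ stable with hbot | htop
  · exact absurd hbot hμ
  · ext v
    exact Module.End.mem_eigenspace_iff.1 (htop ▸ Submodule.mem_top)

theorem equiv_one (h : IsIrreducibleFamily ρ) {a : Module.End k V} (hu : IsUnit a)
    (ha : ∀ x, Commute (ρ x) a) : ScalarEquiv k a 1 := by
  have := h.nontrivial
  obtain ⟨c, rfl⟩ := h.exists_eq_smul_one ha
  exact .smul_of_isUnit hu

theorem eq_zero_or_eq_one (h : IsIrreducibleFamily ρ) {e : Module.End k V}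
    (he : IsIdempotentElem e) (hc : ∀ x, Commute (ρ x) e) : e = 0 ∨ e = 1 := by
  have := h.nontrivial
  obtain ⟨c, rfl⟩ := h.exists_eq_smul_one hc
  have hc : c * c = c := smul_left_injective k (one_ne_zero (α := Module.End k V)) <| by
    simpa [smul_smul] using he.eq
  rcases (IsIdempotentElem.iff_eq_zero_or_one (p := c)).1 hc with rfl | rfl
  · exact .inl (zero_smul k _)
  · exact .inr (one_smul k _)

end IsIrreducibleFamily

/-! ### Imprimitivity -/

section Compress

variable {k V : Type*} [Field k] [AddCommGroup V] [Module k V] {e a b : Module.End k V}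

/-- The compression `v ↦ e (a v)` of an operator `a` to the range of `e`. -/
def compress (e : Module.End k V) : Module.End k V →ₗ[k] Module.End k (LinearMap.range e) where
  toFun a := e.rangeRestrict ∘ₗ a ∘ₗ (LinearMap.range e).subtype
  map_add' a b := by rw [LinearMap.add_comp, LinearMap.comp_add]
  map_smul' c a := by rw [LinearMap.smul_comp, LinearMap.comp_smul, RingHom.id_apply]

theorem coe_compress_apply (e a : Module.End k V) (v : LinearMap.range e) :
    (compress e a v : V) = e (a v) := rfl

theorem trace_compress [FiniteDimensional k V] (e a : Module.End k V) :
    LinearMap.trace k _ (compress e a) = LinearMap.trace k V (a * e) :=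
  LinearMap.trace_comp_comm' (a ∘ₗ (LinearMap.range e).subtype) e.rangeRestrict

theorem compress_one (he : IsIdempotentElem e) : compress e 1 = 1 := by
  ext ⟨_, v, rfl⟩
  exact LinearMap.congr_fun he.eq v

theorem compress_mul (he : IsIdempotentElem e) (hb : Commute b e) :
    compress e (a * b) = compress e a * compress e b := by
  ext ⟨_, v, rfl⟩
  change (e * (a * (b * e))) v = (e * (a * (e * (b * e)))) v
  rw [hb.eq, ← mul_assoc e e b, he.eq]

theorem trace_eq_finrank_range [FiniteDimensional k V] (he : IsIdempotentElem e) :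
    LinearMap.trace k V e = Module.finrank k (LinearMap.range e) :=
  (LinearMap.IsIdempotentElem.isProj_range e he).trace

namespace IsProjectiveRep

variable {P : Type*} [Group P] {ρ : P → Module.End k V}

theorem compress (h : IsProjectiveRep k ρ) (he : IsIdempotentElem e)
    (hcomm : ∀ x, Commute (ρ x) e) : IsProjectiveRep k fun x ↦ compress e (ρ x) where
  one := by simpa only [compress_one he] using h.one.map (_root_.compress e)
  mul x y := by
    rw [← compress_mul he (hcomm y)]
    exact (h.mul x y).map (_root_.compress e)

theorem irreducible_compress (h : IsProjectiveRep k ρ) (hi : IsIrreducibleFamily ρ) (he : e ≠ 0) :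
    IsIrreducibleFamily fun x ↦ _root_.compress e (ρ x) where
  nontrivial := Submodule.nontrivial_iff_ne_bot.2 (mt LinearMap.range_eq_bot.1 he)
  eq_bot_or_eq_top W hW := by
    set W' : Submodule k V := W.map (LinearMap.range e).subtype
    set U : Submodule k V := ⨆ x, W'.map (ρ x)
    have le_U (x : P) : W' ≤ U.comap (ρ x) :=
      Submodule.map_le_iff_le_comap.1 (le_iSup (fun x ↦ W'.map (ρ x)) x)
    have stable (y : P) : U ≤ U.comap (ρ y) := by
      refine iSup_le fun x ↦ Submodule.map_le_iff_le_comap.2 fun w hw ↦ ?_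
      exact ((h.mul y x).apply_mem_iff U w).2 (le_U (y * x) hw)
    have e_U : U ≤ W'.comap e := by
      refine iSup_le fun x ↦ Submodule.map_le_iff_le_comap.2 ?_
      rintro _ ⟨w, hw, rfl⟩
      exact ⟨_, hW x w hw, rfl⟩
    rcases hi.eq_bot_or_eq_top U stable with hbot | htop
    · refine Or.inl ((Submodule.eq_bot_iff W).2 fun w hw ↦ Subtype.ext ?_)
      exact (Submodule.eq_bot_iff U).1 hbot w
        ((h.one.apply_mem_iff U w).1 (le_U 1 (Submodule.mem_map_of_mem hw)))
    · refine Or.inr (eq_top_iff.2 ?_)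
      rintro ⟨_, v, rfl⟩ -
      obtain ⟨w, hw, hwv⟩ := e_U (htop ▸ Submodule.mem_top : v ∈ U)
      have w_eq : w = ⟨e v, v, rfl⟩ := Subtype.ext hwv
      rwa [← w_eq]

end IsProjectiveRep

end Compress

/-- The order-degree divisibility for `P`: if `g` has nonzero trace in an irreducible complex
projective representation of `P`, then `o(g)` times the degree divides `|P|`. -/
def OrderDegreeDvd (P : Type) [Group P] : Prop :=
  ∀ (V : Type) [AddCommGroup V] [Module ℂ V] [FiniteDimensional ℂ V] (ρ : P → Module.End ℂ V),
    IsProjectiveRep ℂ ρ → IsIrreducibleFamily ρ → ∀ g : P, LinearMap.trace ℂ V (ρ g) ≠ 0 →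
      orderOf g * Module.finrank ℂ V ∣ Nat.card P

/-- A nontrivial idempotent `e` whose conjugates under `ρ` are equal or orthogonal to `e`, so that
the distinct conjugates of the range of `e` form a system of imprimitivity. -/
structure IsImprimitivityIdempotent {k P V : Type*} [Field k] [AddCommGroup V] [Module k V]
    (ρ : P → Module.End k V) (e : Module.End k V) : Prop where
  isIdempotentElem : IsIdempotentElem e
  ne_zero : e ≠ 0
  ne_one : e ≠ 1
  commute_or_orthogonal : ∀ x, Commute (ρ x) e ∨ e * ρ x * e = 0

namespace IsImprimitivityIdempotent

variable {k P V : Type*} [Field k] [Group P] [AddCommGroup V] [Module k V]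
  {ρ : P → Module.End k V} {e : Module.End k V}

theorem mul_conj_apply (he : IsImprimitivityIdempotent ρ e) (h : IsProjectiveRep k ρ) (x : P)
    [Decidable (x ∈ h.stabilizer e)] :
    e * h.conj x e = if x ∈ h.stabilizer e then e else 0 := by
  refine (h.isUnit x).mul_left_injective ?_
  dsimp only
  rw [mul_assoc, h.conj_apply_mul, ← mul_assoc]
  split_ifs with hx
  · rw [mul_assoc, (h.mem_stabilizer.1 hx).eq, ← mul_assoc, he.isIdempotentElem.eq]
  · rw [(he.commute_or_orthogonal x).resolve_left (mt h.mem_stabilizer.2 hx), zero_mul]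

theorem irreducible_stabilizer (he : IsImprimitivityIdempotent ρ e) (h : IsProjectiveRep k ρ)
    (hi : IsIrreducibleFamily ρ) :
    IsIrreducibleFamily fun x : h.stabilizer e ↦ compress e (ρ x) := by
  refine (h.irreducible_compress hi he.ne_zero).of_forall_exists_eq_smul fun x ↦ ?_
  rcases he.commute_or_orthogonal x with hx | hx
  · exact ⟨1, ⟨x, h.mem_stabilizer.2 hx⟩, (one_smul k _).symm⟩
  · refine ⟨0, 1, ?_⟩
    ext ⟨_, v, rfl⟩
    simpa [coe_compress_apply] using LinearMap.congr_fun hx v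

variable [IsAlgClosed k] [FiniteDimensional k V]

theorem stabilizer_ne_top (he : IsImprimitivityIdempotent ρ e) (h : IsProjectiveRep k ρ)
    (hi : IsIrreducibleFamily ρ) : h.stabilizer e ≠ ⊤ := by
  intro htop
  have commute (x : P) : Commute (ρ x) e :=
    h.mem_stabilizer.1 (htop ▸ Subgroup.mem_top x : x ∈ h.stabilizer e)
  exact (hi.eq_zero_or_eq_one he.isIdempotentElem commute).elim he.ne_zero he.ne_one

theorem sum_conj_apply [Fintype P] (he : IsImprimitivityIdempotent ρ e)
    (h : IsProjectiveRep k ρ) (hi : IsIrreducibleFamily ρ) :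
    ∑ x, h.conj x e = (Nat.card (h.stabilizer e) : k) • (1 : Module.End k V) := by
  classical
  obtain ⟨c, hc⟩ : ∃ c : k, ∑ x, h.conj x e = c • (1 : Module.End k V) := by
    refine hi.exists_eq_smul_one fun y ↦ h.conj_apply_eq_iff.1 ?_
    rw [map_sum]
    exact Fintype.sum_equiv (Equiv.mulLeft y) _ _ fun x ↦ by simp
  have mul_sum : e * ∑ x, h.conj x e = (Nat.card (h.stabilizer e) : k) • e := by
    simp only [Finset.mul_sum, he.mul_conj_apply h, ← Finset.sum_filter, Finset.sum_const,
      Nat.cast_smul_eq_nsmul, Nat.card_eq_fintype_card, Fintype.card_subtype]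
  rw [hc, mul_smul_comm, mul_one] at mul_sum
  rw [hc, smul_left_injective k he.ne_zero mul_sum]

variable [CharZero k] [Finite P]

theorem card_mul_finrank_range (he : IsImprimitivityIdempotent ρ e) (h : IsProjectiveRep k ρ)
    (hi : IsIrreducibleFamily ρ) :
    Nat.card P * Module.finrank k (LinearMap.range e) =
      Nat.card (h.stabilizer e) * Module.finrank k V := by
  have := Fintype.ofFinite P
  have trace_sum := congrArg (LinearMap.trace k V) (he.sum_conj_apply h hi)
  simp only [map_sum, h.trace_conj_apply, Finset.sum_const, trace_eq_finrank_range
    he.isIdempotentElem, map_smul, LinearMap.trace_one, smul_eq_mul, nsmul_eq_mul,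
    Finset.card_univ, ← Nat.card_eq_fintype_card] at trace_sum
  exact_mod_cast trace_sum

theorem exists_conj_mem_stabilizer (he : IsImprimitivityIdempotent ρ e)
    (h : IsProjectiveRep k ρ) (hi : IsIrreducibleFamily ρ) {g : P}
    (hg : LinearMap.trace k V (ρ g) ≠ 0) :
    ∃ x, x * g * x⁻¹ ∈ h.stabilizer e ∧ LinearMap.trace k V (ρ (x * g * x⁻¹) * e) ≠ 0 := by
  have := Fintype.ofFinite P
  obtain ⟨x, hx⟩ : ∃ x, LinearMap.trace k V (ρ g * h.conj x e) ≠ 0 := by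
    by_contra! hzero
    have := congrArg (fun s ↦ LinearMap.trace k V (ρ g * s)) (he.sum_conj_apply h hi)
    simp [Finset.mul_sum, hzero, hg, Nat.card_pos.ne'] at this
  have trace_ne : LinearMap.trace k V (ρ (x⁻¹ * g * x⁻¹⁻¹) * e) ≠ 0 := by
    refine (((h.conj_apply_rep x⁻¹ g).mul (.refl e)).map_ne_zero _).1 ?_
    rwa [← h.trace_conj_apply x, map_mul, ← AlgEquiv.mul_apply, ← map_mul, mul_inv_cancel,
      map_one, AlgEquiv.one_apply]
  refine ⟨x⁻¹, ?_, trace_ne⟩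
  refine h.mem_stabilizer.2 <|
    (he.commute_or_orthogonal _).resolve_right fun hzero ↦ trace_ne ?_
  rw [← he.isIdempotentElem.eq, ← mul_assoc, LinearMap.trace_mul_comm, ← mul_assoc, hzero,
    map_zero]

end IsImprimitivityIdempotent

theorem IsImprimitivityIdempotent.orderOf_mul_finrank_dvd {P V : Type} [Group P] [Finite P]
    [AddCommGroup V] [Module ℂ V] [FiniteDimensional ℂ V] {ρ : P → Module.End ℂ V}
    {e : Module.End ℂ V} (he : IsImprimitivityIdempotent ρ e) (h : IsProjectiveRep ℂ ρ)
    (hi : IsIrreducibleFamily ρ) (hT : OrderDegreeDvd (h.stabilizer e)) {g : P}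
    (hg : LinearMap.trace ℂ V (ρ g) ≠ 0) :
    orderOf g * Module.finrank ℂ V ∣ Nat.card P := by
  obtain ⟨x, hx, trace_ne⟩ := he.exists_conj_mem_stabilizer h hi hg
  have dvd_card := hT (LinearMap.range e) (fun y ↦ compress e (ρ y))
    ((h.restrict _).compress he.isIdempotentElem fun y ↦ h.mem_stabilizer.1 y.2)
    (he.irreducible_stabilizer h hi) ⟨_, hx⟩ (by rwa [trace_compress])
  have order_eq : orderOf (⟨x * g * x⁻¹, hx⟩ : h.stabilizer e) = orderOf g := by
    rw [← Subgroup.orderOf_coe]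
    exact (MulAut.conj x).orderOf_eq g
  rw [order_eq] at dvd_card
  refine Nat.dvd_of_mul_dvd_mul_left (Nat.card_pos (α := h.stabilizer e)) ?_
  rw [mul_left_comm, ← he.card_mul_finrank_range h hi, mul_left_comm, mul_comm (Nat.card _)]
  exact Nat.mul_dvd_mul_right dvd_card _

/-! ### Enveloping algebras of normal subgroups -/

/-- A nonzero central idempotent `e` that is minimal among the central idempotents: every central
idempotent is either orthogonal to `e` or absorbs it. -/
structure IsPrimitiveCentralIdempotent {R : Type*} [Ring R] (e : R) : Prop where
  isIdempotentElem : IsIdempotentElem e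
  ne_zero : e ≠ 0
  mem_center : e ∈ Subring.center R
  mul_eq_zero_or_eq : ∀ f ∈ Subring.center R, IsIdempotentElem f → e * f = 0 ∨ e * f = e

namespace IsPrimitiveCentralIdempotent

variable {R S : Type*} [Ring R] [Ring S] {e f : R}

theorem commute (he : IsPrimitiveCentralIdempotent e) (a : R) : Commute a e :=
  Subring.mem_center_iff.1 he.mem_center a

theorem mul_eq_zero_or_eq_right (he : IsPrimitiveCentralIdempotent e)
    (hf : IsPrimitiveCentralIdempotent f) : e * f = 0 ∨ e = f := by
  rcases he.mul_eq_zero_or_eq f hf.mem_center hf.isIdempotentElem with h | h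
  · exact Or.inl h
  rcases hf.mul_eq_zero_or_eq e he.mem_center he.isIdempotentElem with h' | h'
  · exact Or.inl ((hf.commute e).eq.trans h')
  · exact Or.inr (h.symm.trans ((hf.commute e).eq.trans h'))

theorem map (he : IsPrimitiveCentralIdempotent e) (φ : R ≃+* S) :
    IsPrimitiveCentralIdempotent (φ e) where
  isIdempotentElem := he.isIdempotentElem.map φ
  ne_zero := (map_ne_zero_iff φ φ.injective).2 he.ne_zero
  mem_center := Subring.mem_center_iff.2 fun b ↦ by
    simpa using congrArg φ (he.commute (φ.symm b)).eq
  mul_eq_zero_or_eq f hf hff := by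
    have central : φ.symm f ∈ Subring.center R := Subring.mem_center_iff.2 fun b ↦ by
      simpa using congrArg φ.symm (Subring.mem_center_iff.1 hf (φ b))
    refine (he.mul_eq_zero_or_eq _ central (hff.map φ.symm)).imp (fun h ↦ ?_) fun h ↦ ?_
    all_goals simpa using congrArg φ h

theorem pi_single (k : Type*) [Field k] {ι : Type*} [DecidableEq ι] {A : ι → Type*}
    [∀ i, Ring (A i)] (i : ι) [Algebra k (A i)] [Algebra.IsCentral k (A i)] [Nontrivial (A i)] :
    IsPrimitiveCentralIdempotent (Pi.single i 1 : ∀ j, A j) where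
  isIdempotentElem := by rw [IsIdempotentElem, ← Pi.single_mul, mul_one]
  ne_zero := Pi.single_ne_zero_iff.2 one_ne_zero
  mem_center := Subring.mem_center_iff.2 fun b ↦ by
    rw [← Pi.single_mul_right, ← Pi.single_mul_left, one_mul, mul_one]
  mul_eq_zero_or_eq f hf hff := by
    have central : f i ∈ Subalgebra.center k (A i) := Subalgebra.mem_center_iff.2 fun b ↦ by
      simpa using congrFun (Subring.mem_center_iff.1 hf (Pi.single i b)) i
    obtain ⟨c, hc⟩ := Algebra.IsCentral.mem_center_iff (K := k) |>.1 central
    have idem : IsIdempotentElem c := (algebraMap k (A i)).injective <| by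
      rw [map_mul, ← hc]
      exact congrFun hff i
    rw [← Pi.single_mul_left, one_mul, hc]
    rcases IsIdempotentElem.iff_eq_zero_or_one.1 idem with rfl | rfl
    · exact Or.inl (by rw [map_zero, Pi.single_zero])
    · exact Or.inr (by rw [map_one])

end IsPrimitiveCentralIdempotent

theorem exists_algEquiv_matrix_or_primitiveCentralIdempotent (k B : Type*) [Field k]
    [IsAlgClosed k] [Ring B] [Algebra k B] [FiniteDimensional k B] [IsSemisimpleRing B]
    [Nontrivial B] :
    (∃ n : ℕ, NeZero n ∧ Nonempty (B ≃ₐ[k] Matrix (Fin n) (Fin n) k)) ∨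
      ∃ e : B, IsPrimitiveCentralIdempotent e ∧ e ≠ 1 := by
  obtain ⟨n, d, hd, ⟨φ⟩⟩ := IsSemisimpleRing.exists_algEquiv_pi_matrix_of_isAlgClosed k B
  rcases subsingleton_or_nontrivial (Fin n) with hn | hn
  · left
    rcases isEmpty_or_nonempty (Fin n) with hn' | ⟨⟨i⟩⟩
    · exact absurd (φ.injective (Subsingleton.elim _ _)) (one_ne_zero (α := B))
    let : Unique (Fin n) := uniqueOfSubsingleton i
    let ψ := RingEquiv.piUnique fun i ↦ Matrix (Fin (d i)) (Fin (d i)) k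
    exact ⟨_, hd default, ⟨φ.trans (AlgEquiv.ofRingEquiv (f := ψ) fun _ ↦ rfl)⟩⟩
  · right
    obtain ⟨i, j, hij⟩ := exists_pair_ne (Fin n)
    refine ⟨_, (IsPrimitiveCentralIdempotent.pi_single k i).map φ.symm.toRingEquiv, fun h ↦ ?_⟩
    have single_eq_one := congrFun (φ.symm.injective (h.trans (map_one φ.symm).symm)) j
    simp [Pi.single_eq_of_ne hij.symm] at single_eq_one

section Env

variable {k P A : Type*} [Field k] [Group P] [Ring A] [Algebra k A] {ρ : P → A} {N : Subgroup P}

/-- The enveloping algebra of a subgroup `N`: the subalgebra generated by the operators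
representing elements of `N`. -/
def env (k : Type*) {P A : Type*} [Field k] [Group P] [Ring A] [Algebra k A] (ρ : P → A)
    (N : Subgroup P) : Subalgebra k A :=
  Algebra.adjoin k (ρ '' N)

theorem mem_env {x : P} (hx : x ∈ N) : ρ x ∈ env k ρ N :=
  Algebra.subset_adjoin (Set.mem_image_of_mem ρ hx)

theorem commute_of_mem_env {a b : A} (hb : b ∈ env k ρ N) (ha : ∀ x ∈ N, Commute (ρ x) a) :
    Commute b a :=
  (Algebra.commute_of_mem_adjoin_of_forall_mem_commute hb <| by
    rintro _ ⟨x, hx, rfl⟩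
    exact (ha x hx).symm).symm

theorem apply_mem_of_mem_env {V : Type*} [AddCommGroup V] [Module k V] {ρ : P → Module.End k V}
    {W : Submodule k V} (hW : ∀ x ∈ N, ∀ w ∈ W, ρ x w ∈ W) {b : Module.End k V}
    (hb : b ∈ env k ρ N) : ∀ w ∈ W, b w ∈ W := by
  induction hb using Algebra.adjoin_induction with
  | mem _ hx => obtain ⟨x, hx, rfl⟩ := hx; exact hW x hx
  | algebraMap c => exact fun w hw ↦ W.smul_mem c hw
  | add _ _ _ _ ha hb => exact fun w hw ↦ W.add_mem (ha w hw) (hb w hw)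
  | mul _ _ _ _ ha hb => exact fun w hw ↦ ha _ (hb w hw)

namespace IsProjectiveRep

theorem env_map_conj (h : IsProjectiveRep k ρ) [hN : N.Normal] (x : P) :
    (env k ρ N).map (h.conj x : A →ₐ[k] A) = env k ρ N := by
  have map_le (y : P) : (env k ρ N).map (h.conj y : A →ₐ[k] A) ≤ env k ρ N := by
    rw [env, AlgHom.map_adjoin]
    refine Algebra.adjoin_le ?_
    rintro _ ⟨_, ⟨z, hz, rfl⟩, rfl⟩
    exact ((h.conj_apply_rep y z).mem_iff (env k ρ N).toSubmodule).2
      (mem_env (hN.conj_mem z hz y))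
  refine le_antisymm (map_le x) fun b hb ↦ ⟨h.conj x⁻¹ b, map_le x⁻¹ ⟨b, hb, rfl⟩, ?_⟩
  change (h.conj x * h.conj x⁻¹) b = b
  rw [← map_mul, mul_inv_cancel, map_one, AlgEquiv.one_apply]

/-- The conjugation action of `P` on the enveloping algebra of a normal subgroup. -/
noncomputable def envConj (h : IsProjectiveRep k ρ) (N : Subgroup P) [N.Normal] (x : P) :
    env k ρ N ≃ₐ[k] env k ρ N :=
  ((h.conj x).subalgebraMap (env k ρ N)).trans (Subalgebra.equivOfEq _ _ (h.env_map_conj x))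

theorem coe_envConj_apply_mul (h : IsProjectiveRep k ρ) [N.Normal] (x : P) (b : env k ρ N) :
    (h.envConj N x b : A) * ρ x = ρ x * b :=
  h.conj_apply_mul x b

variable {V : Type*} [AddCommGroup V] [Module k V] {ρ : P → Module.End k V}

theorem isImprimitivityIdempotent_of_env (h : IsProjectiveRep k ρ) [N.Normal] {e : env k ρ N}
    (he : IsPrimitiveCentralIdempotent e) (hne : e ≠ 1) :
    IsImprimitivityIdempotent ρ (e : Module.End k V) where
  isIdempotentElem := congrArg Subtype.val he.isIdempotentElem
  ne_zero := Subtype.coe_ne_coe.2 he.ne_zero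
  ne_one := Subtype.coe_ne_coe.2 hne
  commute_or_orthogonal x := by
    have conj_mul : ((h.envConj N x e : env k ρ N) : Module.End k V) * ρ x = ρ x * e :=
      h.coe_envConj_apply_mul x e
    rcases he.mul_eq_zero_or_eq_right (he.map (h.envConj N x).toRingEquiv) with horth | heq
    · right
      rw [mul_assoc, ← conj_mul, ← mul_assoc]
      exact (congrArg (fun b : env k ρ N ↦ (b : Module.End k V) * ρ x) horth).trans (zero_mul _)
    · left
      exact conj_mul.symm.trans
        (congrArg (fun b : env k ρ N ↦ (b : Module.End k V) * ρ x) heq.symm)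

variable [FiniteDimensional k V]

theorem jacobson_env_eq_bot (h : IsProjectiveRep k ρ) (hi : IsIrreducibleFamily ρ) [N.Normal] :
    Ring.jacobson (env k ρ N) = ⊥ := by
  have := hi.nontrivial
  have : Module.Finite (env k ρ N) V := .of_restrictScalars_finite k _ _
  let J : Submodule (env k ρ N) V := Module.jacobson (env k ρ N) V
  have stable (x : P) : ∀ w ∈ J.restrictScalars k, ρ x w ∈ J.restrictScalars k := fun w hw ↦ by
    let σ : env k ρ N →+* env k ρ N := (h.envConj N x).toRingEquiv
    have : RingHomSurjective σ := ⟨(h.envConj N x).surjective⟩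
    let f : V →ₛₗ[σ] V :=
      { toFun := ρ x
        map_add' := map_add _
        map_smul' b v := LinearMap.congr_fun (h.coe_envConj_apply_mul x b).symm v }
    exact Module.le_comap_jacobson f hw
  rcases hi.eq_bot_or_eq_top _ stable with hbot | htop
  · refine (Submodule.eq_bot_iff _).2 fun b hb ↦ Subtype.ext (LinearMap.ext fun v ↦ ?_)
    have bv_mem : b • v ∈ J.restrictScalars k :=
      Ring.jacobson_smul_top_le _ _ (Submodule.smul_mem_smul hb trivial)
    rwa [hbot] at bv_mem
  · exact absurd ((Submodule.restrictScalars_eq_top_iff _ _ _).1 htop)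
      (Module.jacobson_lt_top _ _).ne

theorem isSemisimpleRing_env (h : IsProjectiveRep k ρ) (hi : IsIrreducibleFamily ρ) [N.Normal] :
    IsSemisimpleRing (env k ρ N) :=
  have : IsArtinianRing (env k ρ N) := .of_finite k _
  IsArtinianRing.isSemisimpleRing_iff_jacobson.2 (h.jacobson_env_eq_bot hi)

theorem exists_algEquiv_matrix_or_imprimitivityIdempotent [IsAlgClosed k]
    (h : IsProjectiveRep k ρ) (hi : IsIrreducibleFamily ρ) (N : Subgroup P) [N.Normal] :
    (∃ n : ℕ, NeZero n ∧ Nonempty (env k ρ N ≃ₐ[k] Matrix (Fin n) (Fin n) k)) ∨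
      ∃ e, IsImprimitivityIdempotent ρ e := by
  have := hi.nontrivial
  have := h.isSemisimpleRing_env (N := N) hi
  exact (exists_algEquiv_matrix_or_primitiveCentralIdempotent k (env k ρ N)).imp_right
    fun ⟨e, he, hne⟩ ↦ ⟨e, h.isImprimitivityIdempotent_of_env he hne⟩

end IsProjectiveRep

end Env

/-! ### Tensor factorizations -/

section RankOne

variable {k U M : Type*} [Field k] [AddCommGroup U] [Module k U] [AddCommGroup M] [Module k M]

theorem smulRight_mul_mul_smulRight (f g : Module.Dual k U) (u v : U) (b : Module.End k U) :
    (f.smulRight u : Module.End k U) * b * g.smulRight v = f (b v) • g.smulRight u := by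
  ext w
  simp [smul_smul, mul_comm]

theorem isIrreducibleFamily_id [Nontrivial U] :
    IsIrreducibleFamily (id : Module.End k U → Module.End k U) where
  nontrivial := inferInstance
  eq_bot_or_eq_top W hW := by
    refine or_iff_not_imp_left.2 fun hne ↦ eq_top_iff.2 fun v _ ↦ ?_
    obtain ⟨w, hw, hw0⟩ := W.ne_bot_iff.1 hne
    obtain ⟨f, hf⟩ := Module.Projective.exists_dual_eq_one k hw0
    simpa [hf] using hW (f.smulRight v) w hw

variable [FiniteDimensional k U]

theorem linearMap_ext_smulRight {F G : Module.End k U →ₗ[k] M}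
    (h : ∀ (f : Module.Dual k U) (u : U), F (f.smulRight u) = G (f.smulRight u)) : F = G := by
  refine (LinearMap.cancel_right (dualTensorHomEquiv k U U).surjective).1 ?_
  exact TensorProduct.ext' fun f u ↦ h f u

theorem linearMap_apply_eq_trace_mul {F : Module.End k U →ₗ[k] k}
    (hF : ∀ a b, F (a * b) = F (b * a)) {f : Module.Dual k U} {u : U} (hfu : f u = 1)
    (b : Module.End k U) : F b = LinearMap.trace k U b * F (f.smulRight u) := by
  suffices F = (LinearMap.trace k U).smulRight (F (f.smulRight u)) from LinearMap.congr_fun this b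
  refine linearMap_ext_smulRight fun g v ↦ ?_
  calc F (g.smulRight v) = F ((f.smulRight v : Module.End k U) * 1 * g.smulRight u) := by
        rw [smulRight_mul_mul_smulRight, Module.End.one_apply, hfu, one_smul]
    _ = F ((g.smulRight u : Module.End k U) * 1 * f.smulRight v) := by
        rw [mul_one, hF, mul_one]
    _ = LinearMap.trace k U (g.smulRight v) * F (f.smulRight u) := by
        rw [smulRight_mul_mul_smulRight, LinearMap.trace_smulRight, map_smul, smul_eq_mul,
          Module.End.one_apply]

end RankOne

/-- A factorization `ρ = σ ⊗ τ` of a projective representation on `V ≅ U ⊗ W`, in which the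
enveloping algebra of `N` is the full endomorphism algebra of the first factor `U`. The isomorphism
is not recorded: `ι` is the embedding `b ↦ b ⊗ 1` and `τ₀ x = 1 ⊗ τ x`, and `W` is recovered as the
range of `ι` of the rank one idempotent given by the normalized pair `u`, `f`. -/
structure TensorFactorization {k P V : Type*} [Field k] [Group P] [AddCommGroup V] [Module k V]
    (ρ : P → Module.End k V) (N : Subgroup P) (U : Type*) [AddCommGroup U] [Module k U] where
  ι : Module.End k U →ₐ[k] Module.End k V
  ι_injective : Function.Injective ι
  range_ι : ι.range = env k ρ N
  σ : P → Module.End k U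
  τ₀ : P → Module.End k V
  isUnit_σ : ∀ x, IsUnit (σ x)
  eq_mul : ∀ x, ρ x = ι (σ x) * τ₀ x
  commute : ∀ x b, Commute (τ₀ x) (ι b)
  u : U
  f : Module.Dual k U
  f_u : f u = 1

theorem IsProjectiveRep.nonempty_tensorFactorization {k P V U : Type*} [Field k] [Group P]
    [AddCommGroup V] [Module k V] [AddCommGroup U] [Module k U] [Nontrivial U]
    {ρ : P → Module.End k V} (h : IsProjectiveRep k ρ) (N : Subgroup P) [N.Normal]
    (φ : env k ρ N ≃ₐ[k] Module.End k U) : Nonempty (TensorFactorization ρ N U) := by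
  choose T hT using fun x ↦
    AlgEquiv.eq_linearEquivConjAlgEquiv (φ.symm.trans ((h.envConj N x).trans φ))
  let ι : Module.End k U →ₐ[k] Module.End k V := (env k ρ N).val.comp φ.symm.toAlgHom
  let s (x : P) : (Module.End k U)ˣ := LinearMap.GeneralLinearGroup.ofLinearEquiv (T x)
  have ι_mul (x : P) (b : Module.End k U) : ι (s x * b * ↑(s x)⁻¹) * ρ x = ρ x * ι b := by
    have conj_eq : h.envConj N x (φ.symm b) = φ.symm (s x * b * ↑(s x)⁻¹) :=
      φ.eq_symm_apply.2 (DFunLike.congr_fun (hT x) b)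
    exact (congrArg (fun c : env k ρ N ↦ (c : Module.End k V) * ρ x) conj_eq).symm.trans
      (h.coe_envConj_apply_mul x (φ.symm b))
  obtain ⟨u, hu⟩ := exists_ne (0 : U)
  obtain ⟨f, hf⟩ := Module.Projective.exists_dual_eq_one k hu
  exact ⟨{
    ι := ι
    ι_injective := Subtype.val_injective.comp φ.symm.injective
    range_ι := by
      rw [AlgHom.range_comp, AlgHom.range_eq_top _ |>.2 φ.symm.surjective, Algebra.map_top,
        Subalgebra.range_val]
    σ x := s x
    τ₀ x := ι ↑(s x)⁻¹ * ρ x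
    isUnit_σ x := (s x).isUnit
    eq_mul x := by rw [← mul_assoc, ← map_mul, Units.mul_inv, map_one, one_mul]
    commute x b := by
      rw [Commute, SemiconjBy, mul_assoc, ← ι_mul, ← mul_assoc, ← map_mul, ← mul_assoc,
        ← mul_assoc, Units.inv_mul, one_mul, map_mul, mul_assoc]
    u := u
    f := f
    f_u := hf }⟩

namespace TensorFactorization

variable {k P V U : Type*} [Field k] [Group P] [AddCommGroup V] [Module k V]
  [AddCommGroup U] [Module k U] {ρ : P → Module.End k V} {N : Subgroup P}
  (D : TensorFactorization ρ N U)

/-- The idempotent whose range serves as the second tensor factor. -/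
noncomputable def e : Module.End k V := D.ι (D.f.smulRight D.u)

theorem isIdempotentElem_e : IsIdempotentElem D.e := by
  rw [e, IsIdempotentElem, ← map_mul]
  simpa [D.f_u] using congrArg D.ι (smulRight_mul_mul_smulRight D.f D.f D.u D.u 1)

theorem e_ne_zero : D.e ≠ 0 := by
  refine (map_ne_zero_iff D.ι D.ι_injective).2 fun h ↦ ?_
  have := congrArg D.f (LinearMap.congr_fun h D.u)
  simp [D.f_u] at this

theorem isUnit_τ₀ (h : IsProjectiveRep k ρ) (x : P) : IsUnit (D.τ₀ x) := by
  obtain ⟨s, hs⟩ := (D.isUnit_σ x).map D.ι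
  refine (Units.isUnit_units_mul s _).1 ?_
  rw [hs, ← D.eq_mul]
  exact h.isUnit x

theorem equiv_one_of_mem_env {a : Module.End k V} (ha : IsUnit a) (hmem : a ∈ env k ρ N)
    (hcomm : ∀ b, Commute a (D.ι b)) : ScalarEquiv k a 1 := by
  rw [← D.range_ι, AlgHom.mem_range] at hmem
  obtain ⟨b, rfl⟩ := hmem
  have b_center : b ∈ Subalgebra.center k (Module.End k U) :=
    Subalgebra.mem_center_iff.2 fun c ↦ D.ι_injective <| by
      simpa only [map_mul] using (hcomm c).symm.eq
  rw [Algebra.IsCentral.center_eq_bot k (Module.End k U)] at b_center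
  obtain ⟨c, rfl⟩ := Algebra.mem_bot.1 b_center
  have := nontrivial_of_ne _ _ D.e_ne_zero
  rw [AlgHom.commutes, Algebra.algebraMap_eq_smul_one] at ha ⊢
  exact .smul_of_isUnit ha

theorem τ₀_equiv_one (h : IsProjectiveRep k ρ) {x : P} (hx : x ∈ N) : ScalarEquiv k (D.τ₀ x) 1 := by
  refine D.equiv_one_of_mem_env (D.isUnit_τ₀ h x) ?_ (D.commute x)
  obtain ⟨s, hs⟩ := D.isUnit_σ x
  have τ₀_eq : D.τ₀ x = D.ι ↑s⁻¹ * ρ x := by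
    rw [D.eq_mul, ← mul_assoc, ← hs, ← map_mul, Units.inv_mul, map_one, one_mul]
  rw [τ₀_eq]
  exact mul_mem (D.range_ι ▸ D.ι.mem_range_self _) (mem_env hx)

theorem equiv_of_mul_equiv {s t : (Module.End k U)ˣ} {a b : (Module.End k V)ˣ}
    (ha : ∀ c, Commute (a : Module.End k V) (D.ι c))
    (hb : ∀ c, Commute (b : Module.End k V) (D.ι c)) (h : ScalarEquiv k (D.ι s * a) (D.ι t * b)) :
    ScalarEquiv k (s : Module.End k U) t ∧ ScalarEquiv k (a : Module.End k V) b := by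
  have quotient_equiv :
      ScalarEquiv k ((a * b⁻¹ : (Module.End k V)ˣ) : Module.End k V) (D.ι ↑(s⁻¹ * t)) := by
    have := (ScalarEquiv.refl (D.ι ↑s⁻¹)).mul (h.mul (.refl (↑b⁻¹ : Module.End k V)))
    rwa [mul_assoc (D.ι t), Units.mul_inv, mul_one, ← map_mul, ← mul_assoc, ← mul_assoc,
      ← map_mul, Units.inv_mul, map_one, one_mul] at this
  have quotient_equiv_one : ScalarEquiv k ((a * b⁻¹ : (Module.End k V)ˣ) : Module.End k V) 1 := by
    refine D.equiv_one_of_mem_env (Units.isUnit _) ?_ fun c ↦ (ha c).mul_left (hb c).units_inv_left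
    exact (quotient_equiv.mem_iff (env k ρ N).toSubmodule).2 (D.range_ι ▸ D.ι.mem_range_self _)
  constructor
  · have : ScalarEquiv k ((s⁻¹ * t : (Module.End k U)ˣ) : Module.End k U) 1 := by
      refine .of_map D.ι_injective ?_
      rw [map_one]
      exact quotient_equiv.symm.trans quotient_equiv_one
    simpa [← mul_assoc] using ((ScalarEquiv.refl (s : Module.End k U)).mul this).symm
  · simpa [mul_assoc] using quotient_equiv_one.mul (.refl (b : Module.End k V))

theorem mul_equiv (h : IsProjectiveRep k ρ) (x y : P) :
    ScalarEquiv k (D.σ x * D.σ y) (D.σ (x * y)) ∧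
      ScalarEquiv k (D.τ₀ x * D.τ₀ y) (D.τ₀ (x * y)) := by
  refine D.equiv_of_mul_equiv (s := (D.isUnit_σ x).unit * (D.isUnit_σ y).unit)
    (t := (D.isUnit_σ (x * y)).unit) (a := (D.isUnit_τ₀ h x).unit * (D.isUnit_τ₀ h y).unit)
    (b := (D.isUnit_τ₀ h (x * y)).unit) (fun c ↦ (D.commute x c).mul_left (D.commute y c))
    (D.commute (x * y)) ?_
  simp only [Units.val_mul, IsUnit.unit_spec, ← D.eq_mul, map_mul]
  rw [mul_assoc, ← mul_assoc (D.ι (D.σ y)), ← (D.commute x _).eq, mul_assoc, ← mul_assoc,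
    ← D.eq_mul, ← D.eq_mul]
  exact h.mul x y

theorem isProjectiveRep_σ (h : IsProjectiveRep k ρ) : IsProjectiveRep k D.σ :=
  .of_isUnit (D.isUnit_σ 1) fun x y ↦ (D.mul_equiv h x y).1

theorem isProjectiveRep_τ₀ (h : IsProjectiveRep k ρ) : IsProjectiveRep k D.τ₀ :=
  .of_isUnit (D.isUnit_τ₀ h 1) fun x y ↦ (D.mul_equiv h x y).2

theorem env_σ_eq_top (h : IsProjectiveRep k ρ) : env k D.σ N = ⊤ := by
  have env_le : env k ρ N ≤ (env k D.σ N).map D.ι := by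
    refine Algebra.adjoin_le ?_
    rintro _ ⟨x, hx, rfl⟩
    have rho_equiv : ScalarEquiv k (ρ x) (D.ι (D.σ x)) := by
      simpa [← D.eq_mul] using (ScalarEquiv.refl (D.ι (D.σ x))).mul (D.τ₀_equiv_one h hx)
    exact (rho_equiv.mem_iff ((env k D.σ N).map D.ι).toSubmodule).2 ⟨_, mem_env hx, rfl⟩
  refine eq_top_iff.2 fun b _ ↦ ?_
  obtain ⟨c, hc, hcb⟩ := env_le (D.range_ι ▸ D.ι.mem_range_self b)
  exact D.ι_injective hcb ▸ hc

theorem irreducible_σ (h : IsProjectiveRep k ρ) : IsIrreducibleFamily fun x : N ↦ D.σ x := by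
  have : Nontrivial U := ⟨D.u, 0, fun hu ↦ by simpa [hu] using D.f_u⟩
  refine ⟨this, fun W hW ↦ isIrreducibleFamily_id.eq_bot_or_eq_top W fun b ↦ ?_⟩
  exact apply_mem_of_mem_env (fun x hx ↦ hW ⟨x, hx⟩)
    (D.env_σ_eq_top h ▸ Algebra.mem_top : b ∈ env k D.σ N)

/-- The second tensor factor of the representation. -/
noncomputable def τ (x : P) : Module.End k (LinearMap.range D.e) := compress D.e (D.τ₀ x)

theorem coe_τ_apply (x : P) (v : LinearMap.range D.e) : (D.τ x v : V) = D.τ₀ x v := by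
  obtain ⟨_, v, rfl⟩ := v
  have comm : Commute (D.τ₀ x) D.e := D.commute x _
  change (D.e * (D.τ₀ x * D.e)) v = (D.τ₀ x * D.e) v
  rw [comm.eq, ← mul_assoc, D.isIdempotentElem_e.eq]

theorem isProjectiveRep_τ (h : IsProjectiveRep k ρ) : IsProjectiveRep k D.τ :=
  (D.isProjectiveRep_τ₀ h).compress D.isIdempotentElem_e fun x ↦ D.commute x _

theorem compress_eq_smul_τ (x : P) : compress D.e (ρ x) = D.f (D.σ x D.u) • D.τ x := by
  have sandwich : D.e * ρ x * D.e = D.f (D.σ x D.u) • (D.τ₀ x * D.e) := by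
    rw [D.eq_mul, e, mul_assoc, mul_assoc, (D.commute x _).eq, ← mul_assoc, ← mul_assoc, ← map_mul,
      ← map_mul, smulRight_mul_mul_smulRight, map_smul, smul_mul_assoc]
  ext ⟨_, v, rfl⟩
  rw [LinearMap.smul_apply, Submodule.coe_smul, coe_τ_apply]
  exact LinearMap.congr_fun sandwich v

theorem irreducible_τ (h : IsProjectiveRep k ρ) {Q : Type*} [Group Q] (f : Q →* P)
    (hi : IsIrreducibleFamily (ρ ∘ f)) : IsIrreducibleFamily (D.τ ∘ f) :=
  ((h.comp f).irreducible_compress hi D.e_ne_zero).of_forall_exists_eq_smul fun x ↦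
    ⟨_, x, D.compress_eq_smul_τ (f x)⟩

theorem τ_equiv_one (h : IsProjectiveRep k ρ) {x : P} (hx : x ∈ N) : ScalarEquiv k (D.τ x) 1 := by
  simpa only [compress_one D.isIdempotentElem_e, τ] using (D.τ₀_equiv_one h hx).map (compress D.e)

variable [FiniteDimensional k U]

theorem trace_ι_mul {c : Module.End k V} (hc : ∀ b, Commute c (D.ι b)) (b : Module.End k U) :
    LinearMap.trace k V (D.ι b * c) =
      LinearMap.trace k U b * LinearMap.trace k V (c * D.e) := by
  rw [e, (hc _).eq]
  refine linearMap_apply_eq_trace_mul (F := LinearMap.trace k V ∘ₗ LinearMap.mulRight k c ∘ₗ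
    D.ι.toLinearMap) (fun a b ↦ ?_) D.f_u b
  change LinearMap.trace k V (D.ι (a * b) * c) = LinearMap.trace k V (D.ι (b * a) * c)
  rw [map_mul D.ι, map_mul D.ι, mul_assoc, ← (hc b).eq, ← mul_assoc,
    LinearMap.trace_mul_comm, ← mul_assoc]

theorem τ₀_equiv_one_of_τ_equiv_one {x : P} (hτ : ScalarEquiv k (D.τ x) 1) :
    ScalarEquiv k (D.τ₀ x) 1 := by
  obtain ⟨c, hc⟩ := hτ
  refine ⟨c, ?_⟩
  have mul_e : D.τ₀ x * D.e = c • D.e := by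
    ext v
    refine (D.coe_τ_apply x ⟨D.e v, v, rfl⟩).symm.trans ?_
    rw [hc]
    rfl
  have mul_ι : LinearMap.mulLeft k (D.τ₀ x) ∘ₗ D.ι.toLinearMap = (c : k) • D.ι.toLinearMap := by
    refine linearMap_ext_smulRight fun g v ↦ ?_
    have factor : D.ι (g.smulRight v) = D.ι (D.f.smulRight v) * D.e * D.ι (g.smulRight D.u) := by
      simp [e, ← map_mul, smulRight_mul_mul_smulRight, D.f_u]
    change D.τ₀ x * D.ι (g.smulRight v) = c • D.ι (g.smulRight v)
    rw [factor, ← mul_assoc, ← mul_assoc, (D.commute x _).eq, mul_assoc (D.ι _), mul_e,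
      mul_smul_comm, smul_mul_assoc]
  simpa [Units.smul_def] using LinearMap.congr_fun mul_ι 1

theorem equiv_one {x : P} (hσ : ScalarEquiv k (D.σ x) 1) (hτ : ScalarEquiv k (D.τ x) 1) :
    ScalarEquiv k (ρ x) 1 := by
  rw [D.eq_mul]
  simpa using (hσ.map D.ι.toLinearMap).mul (D.τ₀_equiv_one_of_τ_equiv_one hτ)

variable [FiniteDimensional k V]

theorem trace_eq (x : P) : LinearMap.trace k V (ρ x) =
    LinearMap.trace k U (D.σ x) * LinearMap.trace k _ (D.τ x) := by
  rw [D.eq_mul, D.trace_ι_mul (D.commute x), τ, trace_compress]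

theorem finrank_eq [CharZero k] :
    Module.finrank k V = Module.finrank k U * Module.finrank k (LinearMap.range D.e) := by
  have := D.trace_ι_mul (c := 1) (fun b ↦ Commute.one_left _) 1
  rw [map_one, one_mul, one_mul, LinearMap.trace_one, LinearMap.trace_one,
    trace_eq_finrank_range D.isIdempotentElem_e] at this
  exact_mod_cast this

end TensorFactorization

/-! ### Minimal normal subgroups -/

section FiniteGroup

variable {P : Type*} [Group P]

theorem card_comap_mk' (M : Subgroup P) [M.Normal] (H : Subgroup (P ⧸ M)) :
    Nat.card (H.comap (QuotientGroup.mk' M)) = Nat.card M * Nat.card H :=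
  QuotientGroup.card_preimage_mk M H

theorem card_sup_zpowers (M : Subgroup P) [M.Normal] (g : P) :
    Nat.card (M ⊔ Subgroup.zpowers g : Subgroup P) =
      Nat.card M * orderOf (QuotientGroup.mk g : P ⧸ M) := by
  rw [← QuotientGroup.comap_map_mk', card_comap_mk', MonoidHom.map_zpowers, Nat.card_zpowers]
  rfl

theorem pow_orderOf_mk_mem (K : Subgroup P) [K.Normal] (g : P) :
    g ^ orderOf (QuotientGroup.mk g : P ⧸ K) ∈ K := by
  rw [← QuotientGroup.eq_one_iff, QuotientGroup.mk_pow, pow_orderOf_eq_one]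

theorem orderOf_dvd_orderOf_mk_mul_card (K : Subgroup P) [K.Normal] (g : P) :
    orderOf g ∣ orderOf (QuotientGroup.mk g : P ⧸ K) * Nat.card K := by
  rw [orderOf_dvd_iff_pow_eq_one, pow_mul]
  exact congrArg Subtype.val
    (pow_card_eq_one' (x := (⟨_, pow_orderOf_mk_mem K g⟩ : K)))

theorem card_lt_of_ne_top [Finite P] {H : Subgroup P} (hH : H ≠ ⊤) : Nat.card H < Nat.card P :=
  H.card_le_card_group.lt_of_ne (mt H.eq_top_of_card_eq hH)

theorem card_quotient_lt_of_ne_bot [Finite P] {K : Subgroup P} (hK : K ≠ ⊥) :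
    Nat.card (P ⧸ K) < Nat.card P := by
  rw [K.card_eq_card_quotient_mul_card_subgroup]
  exact lt_mul_of_one_lt_right Nat.card_pos (K.one_lt_card_iff_ne_bot.2 hK)

theorem mem_sup_zpowers (N : Subgroup P) (g : P) : g ∈ N ⊔ Subgroup.zpowers g :=
  (le_sup_right : Subgroup.zpowers g ≤ N ⊔ _) (Subgroup.mem_zpowers g)

theorem mem_center_of_sup_zpowers_eq_top {N : Subgroup P} {g x : P}
    (hgen : N ⊔ Subgroup.zpowers g = ⊤) (hN : x ∈ Subgroup.centralizer N) (hg : Commute g x) :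
    x ∈ Subgroup.center P := by
  have le_centralizer : N ⊔ Subgroup.zpowers g ≤ Subgroup.centralizer {x} :=
    sup_le (fun n hn ↦ Subgroup.mem_centralizer_singleton_iff.2 (hN n hn))
      (Subgroup.zpowers_le.2 (Subgroup.mem_centralizer_singleton_iff.2 hg))
  exact Subgroup.mem_center_iff.2 fun y ↦ Subgroup.mem_centralizer_singleton_iff.1
    (le_centralizer (hgen ▸ Subgroup.mem_top y))

/-- `S` is a minimal element among the nontrivial subgroups normalized by `M`. For `M = ⊤` these
are the minimal normal subgroups; for `M = S` the condition says that `S` is simple. -/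
structure IsMinimalNormalizedBy (M S : Subgroup P) : Prop where
  ne_bot : S ≠ ⊥
  le_normalizer : M ≤ Subgroup.normalizer (S : Set P)
  eq_bot_or_eq : ∀ K ≤ S, M ≤ Subgroup.normalizer (K : Set P) → K = ⊥ ∨ K = S

namespace IsMinimalNormalizedBy

theorem exists_le [Finite P] {M K : Subgroup P} (hK : K ≠ ⊥)
    (hMK : M ≤ Subgroup.normalizer (K : Set P)) : ∃ S ≤ K, IsMinimalNormalizedBy M S := by
  obtain ⟨S, hSK, hS⟩ := exists_minimal_le_of_wellFoundedLT
    (fun S : Subgroup P ↦ S ≠ ⊥ ∧ M ≤ Subgroup.normalizer (S : Set P)) K ⟨hK, hMK⟩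
  refine ⟨S, hSK, hS.prop.1, hS.prop.2, fun T hTS hT ↦ or_iff_not_imp_left.2 fun hT0 ↦ ?_⟩
  exact hTS.antisymm (hS.le_of_le ⟨hT0, hT⟩ hTS)

theorem normal {N : Subgroup P} (hN : IsMinimalNormalizedBy ⊤ N) : N.Normal :=
  Subgroup.normalizer_eq_top_iff.1 (top_le_iff.1 hN.le_normalizer)

theorem eq_bot_or_eq_of_normal {N K : Subgroup P} (hN : IsMinimalNormalizedBy ⊤ N) (hKN : K ≤ N)
    [K.Normal] : K = ⊥ ∨ K = N :=
  hN.eq_bot_or_eq K hKN (Subgroup.normalizer_eq_top K).ge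

theorem isSimpleGroup {S : Subgroup P} (hS : IsMinimalNormalizedBy S S) : IsSimpleGroup S where
  exists_pair_ne := ((Subgroup.nontrivial_iff_ne_bot S).2 hS.ne_bot).exists_pair_ne
  eq_bot_or_eq_top_of_normal K hK := by
    have hSK : S ≤ Subgroup.normalizer (K.map S.subtype : Set P) := by
      simpa [Subgroup.normalizer_eq_top, ← MonoidHom.range_eq_map] using
        Subgroup.le_normalizer_map (H := K) S.subtype
    exact (hS.eq_bot_or_eq _ (Subgroup.map_subtype_le K) hSK).imp
      (Subgroup.map_eq_bot_iff_of_injective K S.subtype_injective).1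
      fun hKS ↦ Subgroup.map_injective S.subtype_injective <| by
        simpa [← MonoidHom.range_eq_map] using hKS

end IsMinimalNormalizedBy

end FiniteGroup

section Reductions

variable {P V : Type} [Group P] [AddCommGroup V] [Module ℂ V] [FiniteDimensional ℂ V]
  {ρ : P → Module.End ℂ V}

theorem OrderDegreeDvd.orderOf_mk_mul_finrank_dvd {K : Subgroup P} [K.Normal]
    (hPK : OrderDegreeDvd (P ⧸ K)) (h : IsProjectiveRep ℂ ρ) (hi : IsIrreducibleFamily ρ)
    (hK : K ≤ h.ker) {g : P} (hg : LinearMap.trace ℂ V (ρ g) ≠ 0) :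
    orderOf (QuotientGroup.mk g : P ⧸ K) * Module.finrank ℂ V ∣ Nat.card (P ⧸ K) :=
  hPK V _ (h.quotient hK)
    (hi.of_forall_exists_equiv fun x ↦ ⟨QuotientGroup.mk x, (h.out_equiv hK x).symm⟩) _
    (((h.out_equiv hK g).map_ne_zero (LinearMap.trace ℂ V)).2 hg)

theorem OrderDegreeDvd.orderOf_mul_finrank_dvd_card {H : Subgroup P} (hH : OrderDegreeDvd H)
    (h : IsProjectiveRep ℂ ρ) (hi : IsIrreducibleFamily fun x : H ↦ ρ x) {g : P} (hgH : g ∈ H)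
    (hg : LinearMap.trace ℂ V (ρ g) ≠ 0) :
    orderOf g * Module.finrank ℂ V ∣ Nat.card H := by
  simpa using hH V _ (h.restrict H) hi ⟨g, hgH⟩ hg

theorem IsProjectiveRep.trace_one_ne_zero [Nontrivial V] (h : IsProjectiveRep ℂ ρ) :
    LinearMap.trace ℂ V (ρ 1) ≠ 0 :=
  (h.one.map_ne_zero (LinearMap.trace ℂ V)).2 <| by
    simpa using (Module.finrank_pos (R := ℂ) (M := V)).ne'

theorem OrderDegreeDvd.finrank_dvd_card {H : Subgroup P} (hH : OrderDegreeDvd H)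
    (h : IsProjectiveRep ℂ ρ) (hi : IsIrreducibleFamily fun x : H ↦ ρ x) :
    Module.finrank ℂ V ∣ Nat.card H := by
  have := hi.nontrivial
  simpa using hH.orderOf_mul_finrank_dvd_card h hi H.one_mem h.trace_one_ne_zero

theorem IsProjectiveRep.orderOf_mul_finrank_dvd_of_quotient_ker (h : IsProjectiveRep ℂ ρ)
    (hi : IsIrreducibleFamily ρ) (hker : OrderDegreeDvd (P ⧸ h.ker)) {g : P}
    (hg : LinearMap.trace ℂ V (ρ g) ≠ 0) :
    orderOf g * Module.finrank ℂ V ∣ Nat.card P := by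
  calc orderOf g * Module.finrank ℂ V
      ∣ orderOf (QuotientGroup.mk g : P ⧸ h.ker) * Nat.card h.ker * Module.finrank ℂ V :=
        mul_dvd_mul_right (orderOf_dvd_orderOf_mk_mul_card h.ker g) _
    _ = orderOf (QuotientGroup.mk g : P ⧸ h.ker) * Module.finrank ℂ V * Nat.card h.ker :=
        mul_right_comm _ _ _
    _ ∣ Nat.card (P ⧸ h.ker) * Nat.card h.ker :=
        mul_dvd_mul_right (hker.orderOf_mk_mul_finrank_dvd h hi le_rfl hg) _
    _ = Nat.card P := h.ker.card_eq_card_quotient_mul_card_subgroup.symm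

variable {N : Subgroup P}

theorem IsProjectiveRep.inf_center_eq_bot (h : IsProjectiveRep ℂ ρ) (hker : h.ker = ⊥)
    (hN : IsMinimalNormalizedBy ⊤ N) (hi : IsIrreducibleFamily fun x : N ↦ ρ x) :
    N ⊓ Subgroup.center P = ⊥ := by
  refine (Subgroup.eq_bot_iff_forall _).2 fun n ⟨hnN, hnZ⟩ ↦ ?_
  have : (Subgroup.zpowers n).Normal :=
    ⟨fun m hm x ↦ by
      rwa [Subgroup.mem_center_iff.1 ((Subgroup.zpowers_le.2 hnZ) hm) x, mul_inv_cancel_right]⟩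
  rcases hN.eq_bot_or_eq_of_normal (Subgroup.zpowers_le.2 hnN) with hbot | htop
  · exact Subgroup.zpowers_eq_bot.1 hbot
  · have commutes : N ≤ h.stabilizer (ρ n) := by
      rw [← htop, Subgroup.zpowers_le, h.mem_stabilizer]
      exact Commute.refl _
    have hn : n ∈ h.ker := hi.equiv_one (h.isUnit n) fun x ↦ h.mem_stabilizer.1 (commutes x.2)
    rwa [hker, Subgroup.mem_bot] at hn

theorem IsProjectiveRep.orderOf_mul_finrank_dvd_of_le_centralizer (h : IsProjectiveRep ℂ ρ)
    (hker : h.ker = ⊥) (hN : IsMinimalNormalizedBy ⊤ N) (hNab : N ≤ Subgroup.centralizer N)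
    (hi : IsIrreducibleFamily fun x : N ↦ ρ x) (ih : N ≠ ⊤ → OrderDegreeDvd N) {g : P}
    (hgen : N ⊔ Subgroup.zpowers g = ⊤) :
    orderOf g * Module.finrank ℂ V ∣ Nat.card P := by
  have := hN.normal
  have inf_center := h.inf_center_eq_bot hker hN hi
  have hN_top : N ≠ ⊤ := by
    rintro rfl
    rw [Subgroup.coe_top, Subgroup.centralizer_univ, top_le_iff] at hNab
    exact hN.ne_bot (by simpa [hNab] using inf_center)
  have orderOf_dvd : orderOf g ∣ orderOf (QuotientGroup.mk g : P ⧸ N) := by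
    have hgN := pow_orderOf_mk_mem N g
    have hgZ := mem_center_of_sup_zpowers_eq_top hgen (hNab hgN) (Commute.self_pow g _)
    rw [orderOf_dvd_iff_pow_eq_one, ← Subgroup.mem_bot, ← inf_center]
    exact ⟨hgN, hgZ⟩
  rw [← Subgroup.card_top, ← hgen, card_sup_zpowers, mul_comm]
  exact mul_dvd_mul ((ih hN_top).finrank_dvd_card h hi) orderOf_dvd

end Reductions

section Conjugates

open scoped Pointwise

variable {P : Type*} [Group P] {N S : Subgroup P}

theorem conj_smul_eq_self_iff {x : P} :
    MulAut.conj x • S = S ↔ x ∈ Subgroup.normalizer (S : Set P) :=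
  Subgroup.mem_normalizer_iff_map_conj_eq.symm

theorem le_normalizer_conj_smul [hN : N.Normal] (hS : N ≤ Subgroup.normalizer (S : Set P))
    (x : P) : N ≤ Subgroup.normalizer ((MulAut.conj x • S : Subgroup P) : Set P) := by
  calc N = MulAut.conj x • N := (Subgroup.Normal.conj_smul_eq_self x N).symm
    _ ≤ MulAut.conj x • Subgroup.normalizer (S : Set P) :=
      Subgroup.pointwise_smul_le_pointwise_smul_iff.2 hS
    _ = Subgroup.normalizer ((MulAut.conj x • S : Subgroup P) : Set P) :=
      Subgroup.map_equiv_normalizer_eq S (MulAut.conj x)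

theorem le_normalizer_commutator_self (hS : N ≤ Subgroup.normalizer (S : Set P)) :
    N ≤ Subgroup.normalizer ((⁅S, S⁆ : Subgroup P) : Set P) := fun n hn ↦ by
  rw [Subgroup.mem_normalizer_iff_map_conj_eq, Subgroup.map_commutator]
  congr 1 <;> exact Subgroup.mem_normalizer_iff_map_conj_eq.1 (hS hn)

namespace IsMinimalNormalizedBy

theorem le_centralizer_or_le_commutator (hS : IsMinimalNormalizedBy N S) :
    S ≤ Subgroup.centralizer S ∨ S ≤ ⁅S, S⁆ :=
  (hS.eq_bot_or_eq _ (Subgroup.commutator_le_self S)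
    (le_normalizer_commutator_self hS.le_normalizer)).imp
    Subgroup.commutator_eq_bot_iff_le_centralizer.1 Eq.ge

theorem conj_smul_eq_self_or_le_centralizer [Finite P] [N.Normal]
    (hS : IsMinimalNormalizedBy N S) (hSN : S ≤ N) (x : P) :
    MulAut.conj x • S = S ∨ MulAut.conj x • S ≤ Subgroup.centralizer S := by
  have le_normalizer := le_normalizer_conj_smul hS.le_normalizer x
  have conj_le : MulAut.conj x • S ≤ N :=
    (Subgroup.pointwise_smul_le_pointwise_smul_iff.2 hSN).trans
      (Subgroup.Normal.conj_smul_eq_self x N).le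
  rcases hS.eq_bot_or_eq (S ⊓ MulAut.conj x • S) inf_le_left
    ((le_inf hS.le_normalizer le_normalizer).trans Subgroup.inf_normalizer_le_normalizer_inf)
    with hbot | heq
  · refine .inr (Subgroup.commutator_eq_bot_iff_le_centralizer.1 (eq_bot_iff.2 ?_))
    exact hbot ▸ le_inf
      (Subgroup.le_normalizer_iff_commutator_le_right.1 (conj_le.trans hS.le_normalizer))
      (Subgroup.le_normalizer_iff_commutator_le_left.1 (hSN.trans le_normalizer))
  · refine .inl (Subgroup.eq_of_le_of_card_ge (inf_eq_left.1 heq) ?_).symm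
    exact (Nat.card_congr (Subgroup.equivSMul (MulAut.conj x) S).toEquiv).ge

end IsMinimalNormalizedBy

variable {g : P}

theorem normal_of_sup_zpowers_eq_top (hgen : N ⊔ Subgroup.zpowers g = ⊤)
    (hN : N ≤ Subgroup.normalizer (S : Set P)) (hg : g ∈ Subgroup.normalizer (S : Set P)) :
    S.Normal := by
  rw [← Subgroup.normalizer_eq_top_iff, eq_top_iff, ← hgen]
  exact sup_le hN (Subgroup.zpowers_le.2 hg)

theorem conj_smul_iSup_conj_zpow_smul (g : P) (S : Subgroup P) :
    MulAut.conj g • ⨆ i : ℤ, MulAut.conj (g ^ i) • S = ⨆ i : ℤ, MulAut.conj (g ^ i) • S := by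
  calc MulAut.conj g • ⨆ i : ℤ, MulAut.conj (g ^ i) • S
      = ⨆ i : ℤ, MulAut.conj g • MulAut.conj (g ^ i) • S :=
        Subgroup.map_iSup (MulAut.conj g : P →* P) fun i : ℤ ↦ MulAut.conj (g ^ i) • S
    _ = ⨆ i : ℤ, MulAut.conj (g ^ (1 + i)) • S := by
        simp only [zpow_one_add, map_mul, mul_smul]
    _ = ⨆ i : ℤ, MulAut.conj (g ^ i) • S :=
        (Equiv.addLeft (1 : ℤ)).iSup_comp (g := fun i ↦ MulAut.conj (g ^ i) • S)

namespace IsMinimalNormalizedBy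

theorem notMem_normalizer (hN : IsMinimalNormalizedBy ⊤ N) (hS : IsMinimalNormalizedBy N S)
    (hSN : S ≤ N) (hgen : N ⊔ Subgroup.zpowers g = ⊤) (hne : S ≠ N) :
    g ∉ Subgroup.normalizer (S : Set P) := fun hg ↦
  have := normal_of_sup_zpowers_eq_top hgen hS.le_normalizer hg
  (hN.eq_bot_or_eq_of_normal hSN).elim hS.ne_bot hne

theorem le_iSup_conj_zpow_smul (hN : IsMinimalNormalizedBy ⊤ N) (hS : IsMinimalNormalizedBy N S)
    (hSN : S ≤ N) (hgen : N ⊔ Subgroup.zpowers g = ⊤) :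
    N ≤ ⨆ i : ℤ, MulAut.conj (g ^ i) • S := by
  have := hN.normal
  have le_iSup : S ≤ ⨆ i : ℤ, MulAut.conj (g ^ i) • S :=
    le_iSup_of_le 0 (by simp)
  have iSup_le : ⨆ i : ℤ, MulAut.conj (g ^ i) • S ≤ N := iSup_le fun i ↦
    (Subgroup.pointwise_smul_le_pointwise_smul_iff.2 hSN).trans
      (Subgroup.Normal.conj_smul_eq_self _ N).le
  have : (⨆ i : ℤ, MulAut.conj (g ^ i) • S).Normal := by
    refine normal_of_sup_zpowers_eq_top hgen ?_
      (conj_smul_eq_self_iff.1 (conj_smul_iSup_conj_zpow_smul g S))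
    exact (le_iInf fun i ↦ le_normalizer_conj_smul hS.le_normalizer (g ^ i)).trans
      (Subgroup.iInf_normalizer_le_normalizer_iSup _)
  rcases hN.eq_bot_or_eq_of_normal iSup_le with hbot | heq
  · exact absurd (le_bot_iff.1 (hbot ▸ le_iSup)) hS.ne_bot
  · exact heq.ge

theorem le_sup_centralizer [Finite P] (hN : IsMinimalNormalizedBy ⊤ N)
    (hS : IsMinimalNormalizedBy N S) (hSN : S ≤ N) (hgen : N ⊔ Subgroup.zpowers g = ⊤) :
    N ≤ S ⊔ Subgroup.centralizer S := by
  have := hN.normal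
  refine (hN.le_iSup_conj_zpow_smul hS hSN hgen).trans (iSup_le fun i ↦ ?_)
  rcases hS.conj_smul_eq_self_or_le_centralizer hSN (g ^ i) with heq | hle
  · exact heq.le.trans le_sup_left
  · exact hle.trans le_sup_right

theorem le_commutator [Finite P] (hN : IsMinimalNormalizedBy ⊤ N) (hS : IsMinimalNormalizedBy N S)
    (hSN : S ≤ N) (hgen : N ⊔ Subgroup.zpowers g = ⊤)
    (hcen : Subgroup.centralizer (N : Set P) = ⊥) : S ≤ ⁅S, S⁆ := by
  refine hS.le_centralizer_or_le_commutator.resolve_left fun hab ↦ hS.ne_bot (le_bot_iff.1 ?_)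
  have hNS : N ≤ Subgroup.centralizer S :=
    (hN.le_sup_centralizer hS hSN hgen).trans (sup_le hab le_rfl)
  exact hcen ▸ Subgroup.le_centralizer_iff.1 hNS

theorem zpow_mem_centralizer (hN : IsMinimalNormalizedBy ⊤ N) (hS : IsMinimalNormalizedBy N S)
    (hSN : S ≤ N) (hgen : N ⊔ Subgroup.zpowers g = ⊤)
    {j : ℤ} (hj : g ^ j ∈ Subgroup.centralizer (S : Set P)) :
    g ^ j ∈ Subgroup.centralizer (N : Set P) := by
  suffices N ≤ Subgroup.centralizer {g ^ j} from fun n hn ↦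
    Subgroup.mem_centralizer_singleton_iff.1 (this hn)
  refine (hN.le_iSup_conj_zpow_smul hS hSN hgen).trans (iSup_le fun i ↦ ?_)
  rintro _ ⟨s, hs, rfl⟩
  have hi := Commute.zpow_zpow_self g i j
  exact Subgroup.mem_centralizer_singleton_iff.2 ((hi.mul_left (hj s hs)).mul_left hi.inv_left)

end IsMinimalNormalizedBy

end Conjugates

section PerfectSubgroup

open scoped commutatorElement

variable {k P A V : Type*} [Field k] [Group P] [Ring A] [Algebra k A] [AddCommGroup V] [Module k V]
  {X S N : Subgroup P}

namespace IsProjectiveRep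

-- The scalar by which `y ∈ X` multiplies `ρ x` is multiplicative in `y`, hence `1` on commutators.
theorem commutator_le_stabilizer {ρ : P → A} (h : IsProjectiveRep k ρ) {x : P}
    (hx : x ∈ Subgroup.centralizer (X : Set P)) : ⁅X, X⁆ ≤ h.stabilizer (ρ x) := by
  have equiv_self : ∀ y ∈ X, ScalarEquiv k (h.conj y (ρ x)) (ρ x) := fun y hy ↦ by
    simpa only [hx y hy, mul_inv_cancel_right] using h.conj_apply_rep y x
  have conj_mul : ∀ a ∈ X, ∀ b ∈ X, h.conj (a * b) (ρ x) = h.conj (b * a) (ρ x) :=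
    fun a ha b hb ↦ by
      obtain ⟨c, hc⟩ := equiv_self a ha
      obtain ⟨d, hd⟩ := equiv_self b hb
      simp only [map_mul, AlgEquiv.mul_apply, hc, hd, Units.smul_def, map_smul]
      exact smul_comm _ _ _
  refine Subgroup.commutator_le.2 fun a ha b hb ↦ ?_
  have factor : ⁅a, b⁆ = (b⁻¹ * a⁻¹)⁻¹ * (a⁻¹ * b⁻¹) := by
    rw [commutatorElement_def]; group
  change h.conj ⁅a, b⁆ (ρ x) = ρ x
  rw [factor, map_mul, AlgEquiv.mul_apply, conj_mul _ (inv_mem ha) _ (inv_mem hb),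
    ← AlgEquiv.mul_apply, ← map_mul, inv_mul_cancel, map_one, AlgEquiv.one_apply]

variable {ρ : P → Module.End k V}

theorem centralizer_le_ker [IsAlgClosed k] [FiniteDimensional k V] (h : IsProjectiveRep k ρ)
    (hX : X ≤ ⁅X, X⁆) (hi : IsIrreducibleFamily fun x : X ↦ ρ x) :
    Subgroup.centralizer (X : Set P) ≤ h.ker := fun x hx ↦
  hi.equiv_one (h.isUnit x) fun y ↦
    h.mem_stabilizer.1 (h.commutator_le_stabilizer hx (hX y.2))

theorem exists_algEquiv_matrix_env [IsAlgClosed k] [FiniteDimensional k V]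
    (h : IsProjectiveRep k ρ) [S.Normal] (hS : S ≤ ⁅S, S⁆)
    (hi : IsIrreducibleFamily fun x : (S ⊔ Subgroup.centralizer S : Subgroup P) ↦ ρ x) :
    ∃ n, NeZero n ∧ Nonempty (env k ρ S ≃ₐ[k] Matrix (Fin n) (Fin n) k) := by
  have := hi.nontrivial
  have := h.isSemisimpleRing_env hi.of_subgroup (N := S)
  refine (exists_algEquiv_matrix_or_primitiveCentralIdempotent k (env k ρ S)).resolve_right ?_
  rintro ⟨e, he, he_one⟩
  have le_stabilizer : S ⊔ Subgroup.centralizer S ≤ h.stabilizer (e : Module.End k V) := by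
    refine sup_le (fun s hs ↦ h.mem_stabilizer.2 ?_) fun c hc ↦ h.mem_stabilizer.2 ?_
    · exact congrArg Subtype.val (he.commute ⟨ρ s, mem_env hs⟩).eq
    · exact (commute_of_mem_env e.2 fun s hs ↦
        h.mem_stabilizer.1 (h.commutator_le_stabilizer hc (hS hs))).symm
  have commutes (x : (S ⊔ Subgroup.centralizer S : Subgroup P)) :=
    h.mem_stabilizer.1 (le_stabilizer x.2)
  rcases hi.eq_zero_or_eq_one (congrArg Subtype.val he.isIdempotentElem) commutes with h0 | h1
  · exact he.ne_zero (Subtype.ext h0)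
  · exact he_one (Subtype.ext h1)

end IsProjectiveRep

namespace TensorFactorization

variable {U : Type*} [AddCommGroup U] [Module k U] [FiniteDimensional k U]
  {ρ : P → Module.End k V} [S.Normal] (D : TensorFactorization ρ S U)

theorem ker_σ_eq_centralizer [IsAlgClosed k] (h : IsProjectiveRep k ρ) (hker : h.ker = ⊥)
    (hS : S ≤ ⁅S, S⁆) : (D.isProjectiveRep_σ h).ker = Subgroup.centralizer S := by
  have hσ := D.isProjectiveRep_σ h
  refine le_antisymm ?_ (hσ.centralizer_le_ker hS (D.irreducible_σ h))
  have inf_le : hσ.ker ⊓ S ≤ h.ker := fun x ⟨hxσ, hxS⟩ ↦ D.equiv_one hxσ (D.τ_equiv_one h hxS)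
  exact Subgroup.commutator_eq_bot_iff_le_centralizer.1
    (le_bot_iff.1 ((Subgroup.commutator_le_inf _ _).trans (hker ▸ inf_le)))

end TensorFactorization

end PerfectSubgroup

section Reductions

variable {P V : Type} [Group P] [AddCommGroup V] [Module ℂ V] [FiniteDimensional ℂ V]
  {ρ : P → Module.End ℂ V} {N S : Subgroup P} [S.Normal]

theorem IsProjectiveRep.orderOf_mul_finrank_dvd_card_mul (h : IsProjectiveRep ℂ ρ)
    (hi : IsIrreducibleFamily fun x : S ↦ ρ x) {g : P} (hg : LinearMap.trace ℂ V (ρ g) ≠ 0)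
    (hdisj : Disjoint (Subgroup.zpowers g) h.ker) {m : ℕ} (hm : g ^ m ∈ S ⊔ h.ker)
    (ih : ∀ H : Subgroup (P ⧸ h.ker), OrderDegreeDvd H) :
    orderOf g * Module.finrank ℂ V ∣ Nat.card S * m := by
  set S' : Subgroup (P ⧸ h.ker) := S.map (QuotientGroup.mk' h.ker)
  set g' : P ⧸ h.ker := QuotientGroup.mk g
  have : S'.Normal := Subgroup.Normal.map ‹_› _ (QuotientGroup.mk'_surjective _)
  have orderOf_dvd : orderOf g ∣ orderOf g' := by
    rw [orderOf_dvd_iff_pow_eq_one]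
    exact Subgroup.disjoint_def.1 hdisj (Subgroup.npow_mem_zpowers g _) (pow_orderOf_mk_mem _ g)
  have orderOf_mk_dvd : orderOf (QuotientGroup.mk g' : (P ⧸ h.ker) ⧸ S') ∣ m := by
    have hm' : g' ^ m ∈ S' := by
      have := Subgroup.mem_map_of_mem (QuotientGroup.mk' h.ker) hm
      rwa [Subgroup.map_sup, (Subgroup.map_eq_bot_iff _).2 (QuotientGroup.ker_mk' _).ge,
        sup_bot_eq] at this
    rwa [orderOf_dvd_iff_pow_eq_one, ← QuotientGroup.mk_pow, QuotientGroup.eq_one_iff]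
  have irreducible : IsIrreducibleFamily
      fun q : (S' ⊔ Subgroup.zpowers g' : Subgroup (P ⧸ h.ker)) ↦ ρ q.1.out :=
    hi.of_forall_exists_equiv fun s ↦
      ⟨⟨QuotientGroup.mk s.1, Subgroup.mem_sup_left
        (Subgroup.mem_map_of_mem (QuotientGroup.mk' _) s.2)⟩,
        (h.out_equiv le_rfl s.1).symm⟩
  calc orderOf g * Module.finrank ℂ V ∣ orderOf g' * Module.finrank ℂ V :=
        mul_dvd_mul_right orderOf_dvd _
    _ ∣ Nat.card (S' ⊔ Subgroup.zpowers g' : Subgroup (P ⧸ h.ker)) :=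
        (ih _).orderOf_mul_finrank_dvd_card (h.quotient le_rfl) irreducible (mem_sup_zpowers S' g')
          (((h.out_equiv le_rfl g).map_ne_zero (LinearMap.trace ℂ V)).2 hg)
    _ = Nat.card S' * orderOf (QuotientGroup.mk g' : (P ⧸ h.ker) ⧸ S') := card_sup_zpowers S' g'
    _ ∣ Nat.card S * m := mul_dvd_mul (Subgroup.card_map_dvd S _) orderOf_mk_dvd

theorem IsProjectiveRep.finrank_mul_card_dvd_card (h : IsProjectiveRep ℂ ρ)
    (hi : IsIrreducibleFamily fun x : N ↦ ρ x) (hSN : S ≤ N) (hS : S ≤ h.ker)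
    (ih : ∀ H : Subgroup (P ⧸ S), OrderDegreeDvd H) :
    Module.finrank ℂ V * Nat.card S ∣ Nat.card N := by
  have irreducible : IsIrreducibleFamily fun q : N.map (QuotientGroup.mk' S) ↦ ρ q.1.out :=
    hi.of_forall_exists_equiv fun n ↦
      ⟨⟨QuotientGroup.mk n.1, Subgroup.mem_map_of_mem (QuotientGroup.mk' S) n.2⟩,
        (h.out_equiv hS n.1).symm⟩
  have card_eq : Nat.card N = Nat.card S * Nat.card (N.map (QuotientGroup.mk' S)) := by
    rw [← card_comap_mk', QuotientGroup.comap_map_mk', sup_eq_right.2 hSN]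
  rw [card_eq, mul_comm]
  exact mul_dvd_mul_left _ ((ih _).finrank_dvd_card (h.quotient hS) irreducible)

end Reductions

/-! ### Commuting conjugates permuted by a group element -/

section PermutedFactors

open scoped Pointwise

variable {k P V : Type*} [Field k] [Group P] [AddCommGroup V] [Module k V]
  {ρ : P → Module.End k V} {S T : Subgroup P}

theorem env_subgroupOf (hST : S ≤ T) :
    env k (fun t : T ↦ ρ t) (S.subgroupOf T) = env k ρ S := by
  have image_eq : (fun t : T ↦ ρ t) '' (S.subgroupOf T) = ρ '' S := by
    ext a
    constructor
    · rintro ⟨t, ht, rfl⟩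
      exact ⟨t, ht, rfl⟩
    · rintro ⟨s, hs, rfl⟩
      exact ⟨⟨s, hST hs⟩, hs, rfl⟩
  rw [env, env, image_eq]

namespace IsProjectiveRep

theorem commute_conj_of_mem_env (h : IsProjectiveRep k ρ) (hS : S ≤ ⁅S, S⁆) {z : P}
    (hz : MulAut.conj z • S ≤ Subgroup.centralizer S) {x y : Module.End k V}
    (hx : x ∈ env k ρ S) (hy : y ∈ env k ρ S) : Commute y (h.conj z x) := by
  have commute_rep : ∀ s ∈ S, Commute (ρ s) (h.conj z⁻¹ y) := fun s hs ↦ by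
    have hzs : z * s * z⁻¹ ∈ Subgroup.centralizer (S : Set P) :=
      hz (Subgroup.smul_mem_pointwise_smul s (MulAut.conj z) S hs)
    have hys : Commute y (ρ (z * s * z⁻¹)) := commute_of_mem_env hy fun t ht ↦
      h.mem_stabilizer.1 (h.commutator_le_stabilizer hzs (hS ht))
    refine Commute.of_map (h.conj z).injective ?_
    rw [← AlgEquiv.mul_apply, ← map_mul, mul_inv_cancel, map_one, AlgEquiv.one_apply]
    exact (h.conj_apply_rep z s).commute hys.symm
  have := (commute_of_mem_env hx commute_rep).symm.map (h.conj z)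
  rwa [← AlgEquiv.mul_apply, ← map_mul, mul_inv_cancel, map_one, AlgEquiv.one_apply] at this

theorem trace_mul_mul (h : IsProjectiveRep k ρ) (g : P) (x y : Module.End k V) :
    LinearMap.trace k V (x * y * ρ g) = LinearMap.trace k V (y * h.conj g x * ρ g) := by
  rw [mul_assoc y, h.conj_apply_mul, mul_assoc x, LinearMap.trace_mul_comm, mul_assoc]

theorem trace_mul_mul_pow (h : IsProjectiveRep k ρ) {g : P} {x y : Module.End k V} {n : ℕ}
    (hn : 1 ≤ n) (hcomm : ∀ i, 0 < i → i < n → Commute y (h.conj (g ^ i) x)) :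
    LinearMap.trace k V (x * y * ρ g) = LinearMap.trace k V (y * h.conj (g ^ n) x * ρ g) := by
  induction n, hn using Nat.le_induction with
  | base => rw [pow_one, h.trace_mul_mul]
  | succ i hi ih =>
    rw [ih fun j hj hji ↦ hcomm j hj (hji.trans i.lt_succ_self),
      (hcomm i hi i.lt_succ_self).eq, h.trace_mul_mul, ← AlgEquiv.mul_apply, ← map_mul, pow_succ']

end IsProjectiveRep

namespace TensorFactorization

variable {U : Type*} [AddCommGroup U] [Module k U]

theorem conj_ι (D : TensorFactorization ρ S U) (h : IsProjectiveRep k ρ) (x : P)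
    (b : Module.End k U) : h.conj x (D.ι b) = D.ι ((D.isProjectiveRep_σ h).conj x b) := by
  rw [h.conj_apply_eq_iff, D.eq_mul, mul_assoc, (D.commute x b).eq, ← mul_assoc, ← mul_assoc,
    ← map_mul, ← map_mul, (D.isProjectiveRep_σ h).conj_apply_mul]

-- `a ↦ trace (ι (a * (σ (g ^ n))⁻¹) * ρ g)` is a trace form on `End U`, hence a multiple of the
-- trace, and its value at `σ (g ^ n)` is `trace (ρ g)`.
theorem trace_σ_ne_zero [FiniteDimensional k U] (D : TensorFactorization (fun t : T ↦ ρ t)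
    (S.subgroupOf T) U) (h : IsProjectiveRep k ρ) (hST : S ≤ T) (hS : S ≤ ⁅S, S⁆) {g : P} {n : ℕ}
    (hn : 1 ≤ n) (hcentralizer : ∀ i, 0 < i → i < n →
      MulAut.conj (g ^ i) • S ≤ Subgroup.centralizer S)
    (hgT : g ^ n ∈ T) (hg : LinearMap.trace k V (ρ g) ≠ 0) :
    LinearMap.trace k U (D.σ ⟨g ^ n, hgT⟩) ≠ 0 := by
  have hσ := D.isProjectiveRep_σ (h.restrict T)
  obtain ⟨s, hs⟩ := hσ.isUnit ⟨g ^ n, hgT⟩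
  have conj_eq (b : Module.End k U) : h.conj (g ^ n) (D.ι b) = D.ι (s * b * ↑s⁻¹) := by
    have hb : hσ.conj ⟨g ^ n, hgT⟩ b = s * b * ↑s⁻¹ := by
      rw [hσ.conj_apply_eq_iff, ← hs, Units.inv_mul_cancel_right]
    exact (D.conj_ι (h.restrict T) ⟨g ^ n, hgT⟩ b).trans (congrArg D.ι hb)
  have mem_env (b : Module.End k U) : D.ι b ∈ env k ρ S := by
    rw [← env_subgroupOf hST, ← D.range_ι]
    exact ⟨b, rfl⟩
  let F : Module.End k U →ₗ[k] k := LinearMap.trace k V ∘ₗ LinearMap.mulRight k (ρ g) ∘ₗ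
    D.ι.toLinearMap ∘ₗ LinearMap.mulRight k (↑s⁻¹ : Module.End k U)
  have hF (a : Module.End k U) : F a = LinearMap.trace k V (D.ι (a * ↑s⁻¹) * ρ g) := rfl
  have F_mul_comm (a b : Module.End k U) : F (a * b) = F (b * a) := by
    rw [hF, hF, mul_assoc, map_mul D.ι a, h.trace_mul_mul_pow hn fun i hi hin ↦
      h.commute_conj_of_mem_env hS (hcentralizer i hi hin) (mem_env _) (mem_env _), conj_eq,
      ← map_mul D.ι]
    simp only [mul_assoc, Units.inv_mul_cancel_left]
  intro trace_eq_zero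
  refine hg ?_
  calc LinearMap.trace k V (ρ g) = F s := by rw [hF, Units.mul_inv, map_one, one_mul]
    _ = 0 := by rw [linearMap_apply_eq_trace_mul F_mul_comm D.f_u, hs, trace_eq_zero, zero_mul]

end TensorFactorization

theorem subgroupOf_le_commutator (hST : S ≤ T) (hS : S ≤ ⁅S, S⁆) :
    S.subgroupOf T ≤ ⁅S.subgroupOf T, S.subgroupOf T⁆ := by
  rwa [← Subgroup.map_le_map_iff_of_injective T.subtype_injective, Subgroup.map_commutator,
    Subgroup.map_subgroupOf_eq_of_le hST]

theorem centralizer_subgroupOf (hST : S ≤ T) :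
    (Subgroup.centralizer (S : Set P)).subgroupOf T = Subgroup.centralizer (S.subgroupOf T) := by
  ext t
  exact ⟨fun ht s hs ↦ Subtype.ext (ht s hs), fun ht s hs ↦
    congrArg Subtype.val (ht ⟨s, hST hs⟩ hs)⟩

theorem IsIrreducibleFamily.subgroupOf (hST : S ≤ T) (h : IsIrreducibleFamily fun x : S ↦ ρ x) :
    IsIrreducibleFamily fun x : S.subgroupOf T ↦ ρ x :=
  h.of_forall_exists_equiv fun x ↦ ⟨⟨⟨x, hST x.2⟩, x.2⟩, .refl _⟩

end PermutedFactors

section Reductions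

open scoped Pointwise

variable {P V : Type} [Group P] [AddCommGroup V] [Module ℂ V] [FiniteDimensional ℂ V]
  {ρ : P → Module.End ℂ V} {N S : Subgroup P} {g : P}

theorem TensorFactorization.orderOf_mul_finrank_dvd_mul_card [Finite P] [S.Normal] {U : Type}
    [AddCommGroup U] [Module ℂ U] [FiniteDimensional ℂ U] (D : TensorFactorization ρ S U)
    (h : IsProjectiveRep ℂ ρ) (hker : h.ker = ⊥) (hS : S ≤ ⁅S, S⁆) (hSN : S ≤ N)
    (hNS : N ≤ S ⊔ Subgroup.centralizer S) (hi : IsIrreducibleFamily fun x : N ↦ ρ x)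
    (hg : LinearMap.trace ℂ U (D.σ g) ≠ 0)
    (hdisj : Disjoint (Subgroup.zpowers g) (Subgroup.centralizer S)) {m : ℕ} (hm : g ^ m ∈ N)
    (ih : ∀ (K : Subgroup P) [K.Normal] (H : Subgroup (P ⧸ K)), OrderDegreeDvd H) :
    orderOf g * Module.finrank ℂ V ∣ m * Nat.card N := by
  have hσ := D.isProjectiveRep_σ h
  have ker_σ : hσ.ker = Subgroup.centralizer S := D.ker_σ_eq_centralizer h hker hS
  have dvd_σ : orderOf g * Module.finrank ℂ U ∣ Nat.card S * m :=
    hσ.orderOf_mul_finrank_dvd_card_mul (D.irreducible_σ h) hg (ker_σ ▸ hdisj)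
      (ker_σ ▸ hNS hm) (ih hσ.ker)
  have dvd_τ : Module.finrank ℂ (LinearMap.range D.e) * Nat.card S ∣ Nat.card N :=
    (D.isProjectiveRep_τ h).finrank_mul_card_dvd_card (D.irreducible_τ h N.subtype hi) hSN
      (fun x hx ↦ D.τ_equiv_one h hx) (ih S)
  refine Nat.dvd_of_mul_dvd_mul_left (Nat.card_pos (α := S)) ?_
  calc Nat.card S * (orderOf g * Module.finrank ℂ V)
      = orderOf g * Module.finrank ℂ U *
          (Module.finrank ℂ (LinearMap.range D.e) * Nat.card S) := by
        rw [D.finrank_eq]; ring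
    _ ∣ Nat.card S * m * Nat.card N := mul_dvd_mul dvd_σ dvd_τ
    _ = Nat.card S * (m * Nat.card N) := mul_assoc _ _ _

theorem orderOf_eq_mul_orderOf_pow [Finite P] {n : ℕ} (hn : n ∣ orderOf g) :
    orderOf g = n * orderOf (g ^ n) := by
  have hn0 : n ≠ 0 := fun h0 ↦ (orderOf_pos g).ne' (zero_dvd_iff.1 (h0 ▸ hn))
  rw [orderOf_pow_of_dvd hn0 hn, Nat.mul_div_cancel' hn]

theorem orderOf_mul_dvd_card_of_pow [Finite P] [N.Normal] {d n : ℕ}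
    (hgen : N ⊔ Subgroup.zpowers g = ⊤) (hn : n ∣ orderOf (QuotientGroup.mk g : P ⧸ N))
    (hd : orderOf (g ^ n) * d ∣ orderOf (QuotientGroup.mk (g ^ n) : P ⧸ N) * Nat.card N) :
    orderOf g * d ∣ Nat.card P := by
  have hng : n ∣ orderOf g := hn.trans (orderOf_map_dvd (QuotientGroup.mk' N) g)
  calc orderOf g * d = n * (orderOf (g ^ n) * d) := by
        rw [orderOf_eq_mul_orderOf_pow hng, mul_assoc]
    _ ∣ n * (orderOf (QuotientGroup.mk (g ^ n) : P ⧸ N) * Nat.card N) := mul_dvd_mul_left n hd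
    _ = Nat.card N * orderOf (QuotientGroup.mk g : P ⧸ N) := by
        rw [orderOf_eq_mul_orderOf_pow hn, QuotientGroup.mk_pow]; ring
    _ = Nat.card P := by rw [← card_sup_zpowers, hgen, Subgroup.card_top]

-- The distinct conjugates of `S` under the powers of `g` commute and are permuted by `g` in a cycle
-- of length `n`, so `ρ` looks like a representation tensor induced from the normalizer of `S`, and
-- the trace of `ρ g` is governed by the trace of `g ^ n` on a single tensor factor.
theorem IsProjectiveRep.orderOf_pow_mul_finrank_dvd_mul_card [Finite P] (h : IsProjectiveRep ℂ ρ)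
    (hker : h.ker = ⊥) (hi : IsIrreducibleFamily fun x : N ↦ ρ x) (hS : S ≤ ⁅S, S⁆) (hSN : S ≤ N)
    (hNT : N ≤ Subgroup.normalizer (S : Set P)) (hNS : N ≤ S ⊔ Subgroup.centralizer S) {n : ℕ}
    (hn : 1 ≤ n) (hconj : ∀ i, 0 < i → i < n → MulAut.conj (g ^ i) • S ≤ Subgroup.centralizer S)
    (hgT : g ^ n ∈ Subgroup.normalizer (S : Set P))
    (hdisj : Disjoint (Subgroup.zpowers (g ^ n)) (Subgroup.centralizer S)) {m : ℕ}
    (hm : (g ^ n) ^ m ∈ N) (hg : LinearMap.trace ℂ V (ρ g) ≠ 0)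
    (ih : ∀ (K : Subgroup (Subgroup.normalizer (S : Set P))) [K.Normal] (H : Subgroup (_ ⧸ K)),
      OrderDegreeDvd H) :
    orderOf (g ^ n) * Module.finrank ℂ V ∣ m * Nat.card N := by
  set T := Subgroup.normalizer (S : Set P)
  have hST : S ≤ T := Subgroup.le_normalizer
  have hT := h.restrict T
  have hkerT : hT.ker = ⊥ := (Subgroup.eq_bot_iff_forall _).2 fun t ht ↦
    Subtype.ext ((Subgroup.eq_bot_iff_forall _).1 hker t ht)
  have : (S.subgroupOf T).Normal := Subgroup.normal_in_normalizer
  have hST' : S.subgroupOf T ≤ ⁅S.subgroupOf T, S.subgroupOf T⁆ := subgroupOf_le_commutator hST hS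
  have hiT := hi.subgroupOf hNT
  have hNST : N.subgroupOf T ≤ S.subgroupOf T ⊔ Subgroup.centralizer (S.subgroupOf T) := by
    rw [← centralizer_subgroupOf hST,
      ← Subgroup.subgroupOf_sup hST (Subgroup.centralizer_le_normalizer _)]
    exact Subgroup.comap_mono hNS
  have hdisjT : Disjoint (Subgroup.zpowers (⟨g ^ n, hgT⟩ : T))
      (Subgroup.centralizer (S.subgroupOf T)) := by
    rw [← centralizer_subgroupOf hST, Subgroup.disjoint_def]
    rintro x ⟨j, rfl⟩ hx
    exact Subtype.ext (Subgroup.disjoint_def.1 hdisj ⟨j, rfl⟩ hx)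
  obtain ⟨d, _, ⟨φ⟩⟩ := hT.exists_algEquiv_matrix_env hST' (.mono (ρ := fun t : T ↦ ρ t) hNST hiT)
  obtain ⟨D⟩ := hT.nonempty_tensorFactorization (S.subgroupOf T)
    (φ.trans (Matrix.toLinAlgEquiv' : _ ≃ₐ[ℂ] Module.End ℂ (Fin d → ℂ)))
  have := D.orderOf_mul_finrank_dvd_mul_card (N := N.subgroupOf T) hT hkerT hST'
    (Subgroup.comap_mono hSN) hNST hiT
    (D.trace_σ_ne_zero h hST hS hn hconj hgT hg) hdisjT (m := m) hm ih
  rwa [← Subgroup.orderOf_coe, Nat.card_congr (Subgroup.subgroupOfEquivOfLe hNT).toEquiv] at this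

theorem IsProjectiveRep.orderOf_mul_finrank_dvd_of_minimal_ne [Finite P] (h : IsProjectiveRep ℂ ρ)
    (hker : h.ker = ⊥) (hN : IsMinimalNormalizedBy ⊤ N) (hNperf : N ≤ ⁅N, N⁆)
    (hi : IsIrreducibleFamily fun x : N ↦ ρ x) (hS : IsMinimalNormalizedBy N S) (hSN : S ≤ N)
    (hne : S ≠ N) (hgen : N ⊔ Subgroup.zpowers g = ⊤) (hg : LinearMap.trace ℂ V (ρ g) ≠ 0)
    (ih : ∀ (Q : Type) [Group Q] [Finite Q], Nat.card Q < Nat.card P → OrderDegreeDvd Q) :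
    orderOf g * Module.finrank ℂ V ∣ Nat.card P := by
  have := hN.normal
  have hT : Subgroup.normalizer (S : Set P) ≠ ⊤ :=
    ne_of_mem_of_not_mem' (Subgroup.mem_top g) (hN.notMem_normalizer hS hSN hgen hne) |>.symm
  have centralizer_N : Subgroup.centralizer (N : Set P) = ⊥ :=
    le_bot_iff.1 (hker ▸ h.centralizer_le_ker hNperf hi)
  set n := MulAction.period (MulAut.conj g) S
  have pow_mem (j : ℕ) : g ^ j ∈ Subgroup.normalizer (S : Set P) ↔ n ∣ j := by
    rw [← conj_smul_eq_self_iff, map_pow, MulAction.pow_smul_eq_iff_period_dvd]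
  have n_dvd : n ∣ orderOf (QuotientGroup.mk g : P ⧸ N) :=
    (pow_mem _).1 (hS.le_normalizer (pow_orderOf_mk_mem N g))
  have hn : 1 ≤ n := Nat.pos_of_dvd_of_pos n_dvd (orderOf_pos _)
  have hconj (i : ℕ) (hi0 : 0 < i) (hin : i < n) :
      MulAut.conj (g ^ i) • S ≤ Subgroup.centralizer S :=
    (hS.conj_smul_eq_self_or_le_centralizer hSN _).resolve_left fun heq ↦
      Nat.not_dvd_of_pos_of_lt hi0 hin ((pow_mem i).1 (conj_smul_eq_self_iff.1 heq))
  have hdisj : Disjoint (Subgroup.zpowers (g ^ n)) (Subgroup.centralizer S) := by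
    rw [Subgroup.disjoint_def]
    rintro x hx hxS
    obtain ⟨j, rfl⟩ := Subgroup.zpowers_le.2 (Subgroup.npow_mem_zpowers g n) hx
    rw [← Subgroup.mem_bot, ← centralizer_N]
    exact hN.zpow_mem_centralizer hS hSN hgen hxS
  refine orderOf_mul_dvd_card_of_pow hgen n_dvd ?_
  refine h.orderOf_pow_mul_finrank_dvd_mul_card hker hi
    (hN.le_commutator hS hSN hgen centralizer_N) hSN hS.le_normalizer
    (hN.le_sup_centralizer hS hSN hgen) hn hconj ((pow_mem n).2 dvd_rfl) hdisj
    (pow_orderOf_mk_mem N (g ^ n)) hg fun K _ H ↦ ih H ?_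
  calc Nat.card H ≤ Nat.card (Subgroup.normalizer (S : Set P) ⧸ K) := H.card_le_card_group
    _ ≤ Nat.card (Subgroup.normalizer (S : Set P)) :=
      Nat.card_le_card_of_surjective _ (QuotientGroup.mk_surjective (s := K))
    _ < Nat.card P := card_lt_of_ne_top hT

end Reductions

/-! ### Finite perfect covers -/

section FDRep

open CategoryTheory

universe u v

theorem simple_of_forall_commute_exists_eq_smul {k G V : Type u} [Field k] [IsAlgClosed k] [Group G]
    [Finite G] [NeZero (Nat.card G : k)] [AddCommGroup V] [Module k V] [FiniteDimensional k V]
    [Nontrivial V] (ρ : Representation k G V)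
    (hρ : ∀ a : Module.End k V, (∀ x, Commute (ρ x) a) → ∃ c : k, a = c • 1) :
    Simple (FDRep.of ρ) := by
  have id_ne_zero : 𝟙 (FDRep.of ρ) ≠ 0 := fun h0 ↦ by
    obtain ⟨v, hv⟩ := exists_ne (0 : V)
    exact hv (congrArg (fun f : FDRep.of ρ ⟶ FDRep.of ρ ↦ f.hom.hom.hom v) h0)
  rw [FDRep.simple_iff_end_is_rank_one, finrank_eq_one_iff_of_nonzero' _ id_ne_zero]
  intro f
  obtain ⟨c, hc⟩ := hρ f.hom.hom.hom fun x ↦ LinearMap.ext fun v ↦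
    (congrArg (fun f ↦ f.hom.hom v) (f.comm x)).symm
  refine ⟨c, Action.Hom.ext ?_⟩
  ext v
  exact (LinearMap.congr_fun hc v).symm

variable {k : Type u} [Field k] {G : Type v} [Monoid G] (V : FDRep k G)

theorem nontrivial_of_simple [Simple V] : Nontrivial V := by
  by_contra hV
  rw [not_nontrivial_iff_subsingleton] at hV
  refine id_nonzero V (Action.Hom.ext ?_)
  ext v
  exact Subsingleton.elim (α := V) _ _

theorem isIrreducibleFamily_of_simple [Simple V] : IsIrreducibleFamily fun g ↦ V.ρ g := by
  refine ⟨nontrivial_of_simple V, fun W hW ↦ ?_⟩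
  let ρW : Representation k G W :=
    { toFun g := (V.ρ g).restrict (hW g)
      map_one' := by ext w; simp
      map_mul' x y := by ext w; simp }
  let incl : FDRep.of ρW ⟶ V :=
    ⟨InducedCategory.homMk (ModuleCat.ofHom W.subtype), fun g ↦ by ext w; rfl⟩
  have : Mono incl := by
    apply (Action.forget (FGModuleCat k) G).mono_of_mono_map
    exact ConcreteCategory.mono_of_injective _ Subtype.val_injective
  by_cases incl_eq : incl = 0
  · refine .inl (eq_bot_iff.2 fun w hw ↦ ?_)
    exact congrArg (fun f : FDRep.of ρW ⟶ V ↦ f.hom.hom.hom (⟨w, hw⟩ : W)) incl_eq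
  · have := isIso_of_mono_of_nonzero incl_eq
    refine .inr (eq_top_iff.2 fun v _ ↦ ?_)
    have incl_inv : (((inv incl).hom.hom.hom v : W) : V) = v :=
      congrArg (fun f : V ⟶ V ↦ f.hom.hom.hom v) (IsIso.inv_hom_id incl)
    exact incl_inv ▸ ((inv incl).hom.hom.hom v : W).2

end FDRep

section CentralExtensions

open scoped commutatorElement

variable {G P : Type*} [Group G] [Group P] {L K : Subgroup G} {π : G →* P} {N : Subgroup P}

theorem commutatorElement_mul_center {z w : G} (hz : z ∈ Subgroup.center G)
    (hw : w ∈ Subgroup.center G) (x y : G) : ⁅x * z, y * w⁆ = ⁅x, y⁆ := by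
  rw [Subgroup.mem_center_iff] at hz hw
  calc ⁅x * z, y * w⁆ = x * (z * (y * w)) * (z⁻¹ * x⁻¹) * (w⁻¹ * y⁻¹) := by
        rw [commutatorElement_def]; group
    _ = x * (y * (w * x⁻¹)) * (w⁻¹ * y⁻¹) := by rw [← hz]; group
    _ = ⁅x, y⁆ := by rw [← hw, commutatorElement_def]; group

theorem commutator_le_commutator_of_le_sup_center (hK : K ≤ L ⊔ Subgroup.center G) :
    ⁅K, K⁆ ≤ ⁅L, L⁆ := by
  refine Subgroup.commutator_le.2 fun x hx y hy ↦ ?_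
  obtain ⟨l, hl, z, hz, rfl⟩ := Subgroup.mem_sup_of_normal_right.1 (hK hx)
  obtain ⟨m, hm, w, hw, rfl⟩ := Subgroup.mem_sup_of_normal_right.1 (hK hy)
  rw [commutatorElement_mul_center hz hw]
  exact Subgroup.commutator_mem_commutator hl hm

theorem commutator_le_of_sup_zpowers_eq_top [L.Normal] {h : G}
    (hgen : L ⊔ Subgroup.zpowers h = ⊤) : commutator G ≤ L := by
  have zpowers_mk : Subgroup.zpowers (QuotientGroup.mk' L h) = ⊤ := by
    rw [← MonoidHom.map_zpowers,
      ← Subgroup.map_top_of_surjective _ (QuotientGroup.mk'_surjective L), ← hgen,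
      Subgroup.map_sup, (Subgroup.map_eq_bot_iff L).2 (QuotientGroup.ker_mk' L).ge, bot_sup_eq]
  have : IsCyclic (G ⧸ L) := ⟨_, fun x ↦ zpowers_mk ▸ Subgroup.mem_top x⟩
  exact (Subgroup.Normal.quotient_commutative_iff_commutator_le).1 ⟨inferInstance⟩

theorem finite_commutatorSet_of_ker_le_center [Finite P] (hπ : Function.Surjective π)
    (hker : π.ker ≤ Subgroup.center G) : Finite (commutatorSet G) := by
  obtain ⟨s, hs⟩ := hπ.hasRightInverse
  refine (Set.finite_range fun p : P × P ↦ ⁅s p.1, s p.2⁆).subset ?_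
  rintro _ ⟨x, y, rfl⟩
  have mem_center (x : G) : (s (π x))⁻¹ * x ∈ Subgroup.center G :=
    hker (MonoidHom.mem_ker.2 (by rw [map_mul, map_inv, hs, inv_mul_cancel]))
  refine ⟨(π x, π y), ?_⟩
  simpa only [mul_inv_cancel_left] using
    (commutatorElement_mul_center (mem_center x) (mem_center y) (s (π x)) (s (π y))).symm

theorem map_commutator_comap (hπ : Function.Surjective π) (hN : ⁅N, N⁆ = N) :
    (⁅N.comap π, N.comap π⁆).map π = N := by
  rw [Subgroup.map_commutator, Subgroup.map_comap_eq_self_of_surjective hπ, hN]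

theorem commutator_commutator_comap (hπ : Function.Surjective π)
    (hker : π.ker ≤ Subgroup.center G) (hN : ⁅N, N⁆ = N) :
    ⁅⁅N.comap π, N.comap π⁆, ⁅N.comap π, N.comap π⁆⁆ = ⁅N.comap π, N.comap π⁆ := by
  refine le_antisymm (Subgroup.commutator_mono ?_ ?_) (commutator_le_commutator_of_le_sup_center ?_)
  · exact Subgroup.commutator_le_self _
  · exact Subgroup.commutator_le_self _
  · calc N.comap π = (⁅N.comap π, N.comap π⁆.map π).comap π := by
          rw [map_commutator_comap hπ hN]
      _ = ⁅N.comap π, N.comap π⁆ ⊔ π.ker := Subgroup.comap_map_eq π _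
      _ ≤ ⁅N.comap π, N.comap π⁆ ⊔ Subgroup.center G := sup_le_sup_left hker _

theorem exists_lift_pow_mem (hπ : Function.Surjective π) (hker : π.ker ≤ Subgroup.center G)
    {n : ℕ} (hdiv : ∀ z ∈ π.ker, ∃ w ∈ π.ker, w ^ n = z) {g : P} (hg : g ^ n ∈ L.map π) :
    ∃ t, π t = g ∧ t ^ n ∈ L := by
  obtain ⟨q, rfl⟩ := hπ g
  obtain ⟨l, hl, hlq⟩ := hg
  obtain ⟨w, hw, hwn⟩ := hdiv ((q ^ n)⁻¹ * l)
    (MonoidHom.mem_ker.2 (by rw [map_mul, map_inv, map_pow, hlq, inv_mul_cancel]))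
  refine ⟨q * w, by rw [map_mul, MonoidHom.mem_ker.1 hw, mul_one], ?_⟩
  have comm : Commute q w := Subgroup.mem_center_iff.1 (hker hw) q
  rwa [comm.mul_pow, hwn, mul_inv_cancel_left]

theorem finite_sup_zpowers [L.Normal] [Finite L] {t : G} {n : ℕ} (hn : 0 < n) (ht : t ^ n ∈ L) :
    Finite (L ⊔ Subgroup.zpowers t : Subgroup G) := by
  have : IsOfFinOrder (QuotientGroup.mk t : G ⧸ L) :=
    isOfFinOrder_iff_pow_eq_one.2 ⟨n, hn, (QuotientGroup.eq_one_iff _).2 ht⟩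
  refine Nat.finite_of_card_ne_zero ?_
  rw [card_sup_zpowers]
  exact mul_ne_zero Nat.card_pos.ne' this.orderOf_pos.ne'

theorem ker_inf_sup_zpowers_le [L.Normal] [(L.map π).Normal] {t : G}
    (ht : t ^ orderOf (QuotientGroup.mk (π t) : P ⧸ L.map π) ∈ L) :
    π.ker ⊓ (L ⊔ Subgroup.zpowers t) ≤ L := by
  rintro x ⟨hx, hxL⟩
  obtain ⟨l, hl, _, ⟨i, rfl⟩, rfl⟩ := Subgroup.mem_sup_of_normal_left.1 hxL
  have pow_mem : π t ^ i ∈ L.map π := by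
    have : (π l)⁻¹ = π t ^ i := by
      rw [inv_eq_iff_mul_eq_one, ← map_zpow, ← map_mul]
      exact hx
    exact this ▸ inv_mem (Subgroup.mem_map_of_mem π hl)
  rw [← QuotientGroup.eq_one_iff, QuotientGroup.mk_zpow, ← orderOf_dvd_iff_zpow_eq_one] at pow_mem
  obtain ⟨j, rfl⟩ := pow_mem
  refine mul_mem hl ?_
  simpa only [zpow_mul, zpow_natCast] using zpow_mem ht j

end CentralExtensions

/-- `π` exhibits `H` as a central extension of `P` whose derived subgroup is perfect, contains the
kernel and maps onto `N`. For `N` nonabelian simple with trivial centralizer this makes the derived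
subgroup of `H` quasi-simple with centre `Z(H)`, as Conjecture 2.4 demands. -/
structure IsPerfectCover {H P : Type*} [Group H] [Group P] (π : H →* P) (N : Subgroup P) :
    Prop where
  surjective : Function.Surjective π
  ker_le_center : π.ker ≤ Subgroup.center H
  ker_le_commutator : π.ker ≤ commutator H
  map_commutator : (commutator H).map π = N
  commutator_commutator : ⁅commutator H, commutator H⁆ = commutator H

namespace IsPerfectCover

section

variable {H P : Type*} [Group H] [Group P] {π : H →* P} {N : Subgroup P}

theorem center_eq_ker (hπ : IsPerfectCover π N) (hN : Subgroup.centralizer (N : Set P) = ⊥) :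
    Subgroup.center H = π.ker := by
  refine le_antisymm (fun x hx ↦ ?_) hπ.ker_le_center
  rw [MonoidHom.mem_ker, ← Subgroup.mem_bot, ← hN]
  intro n _
  obtain ⟨y, rfl⟩ := hπ.surjective n
  rw [← map_mul, ← map_mul, Subgroup.mem_center_iff.1 hx y]

theorem mem_center_commutator (hπ : IsPerfectCover π N)
    (hN : Subgroup.centralizer (N : Set P) = ⊥) {x : commutator H} :
    x ∈ Subgroup.center (commutator H) ↔ π x = 1 := by
  refine ⟨fun hx ↦ ?_, fun hx ↦ Subgroup.mem_center_iff.2 fun y ↦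
    Subtype.ext (Subgroup.mem_center_iff.1 (hπ.ker_le_center hx) y)⟩
  rw [← Subgroup.mem_bot, ← hN, ← hπ.map_commutator]
  rintro _ ⟨y, hy, rfl⟩
  rw [← map_mul, ← map_mul]
  exact congrArg (fun z : commutator H ↦ π z) (Subgroup.mem_center_iff.1 hx ⟨y, hy⟩)

theorem map_center_commutator (hπ : IsPerfectCover π N)
    (hN : Subgroup.centralizer (N : Set P) = ⊥) :
    (Subgroup.center (commutator H)).map (commutator H).subtype = Subgroup.center H := by
  rw [hπ.center_eq_ker hN]
  ext x
  constructor
  · rintro ⟨y, hy, rfl⟩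
    exact (hπ.mem_center_commutator hN).1 hy
  · exact fun hx ↦ ⟨⟨x, hπ.ker_le_commutator hx⟩, (hπ.mem_center_commutator hN).2 hx, rfl⟩

theorem isQuasisimple (hπ : IsPerfectCover π N) (hN : Subgroup.centralizer (N : Set P) = ⊥)
    [IsSimpleGroup N] : IsQuasisimple (commutator H) := by
  refine ⟨Group.isPerfect_def.1 (Subgroup.isPerfect_iff.2 hπ.commutator_commutator), ?_⟩
  have center_eq : Subgroup.center (commutator H) = (π.subgroupMap (commutator H)).ker := by
    ext x
    rw [hπ.mem_center_commutator hN, MonoidHom.mem_ker, Subtype.ext_iff]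
    rfl
  exact ((QuotientGroup.quotientMulEquivOfEq center_eq).trans
    ((QuotientGroup.quotientKerEquivOfSurjective _ (π.subgroupMap_surjective _)).trans
      (MulEquiv.subgroupCongr hπ.map_commutator))).isSimpleGroup

theorem orderOf_mk_center (hπ : IsPerfectCover π N)
    (hN : Subgroup.centralizer (N : Set P) = ⊥) (h : H) :
    orderOf (QuotientGroup.mk h : H ⧸ Subgroup.center H) = orderOf (π h) := by
  refine orderOf_eq_orderOf_iff.2 fun n ↦ ?_
  rw [← QuotientGroup.mk_pow, QuotientGroup.eq_one_iff, hπ.center_eq_ker hN, MonoidHom.mem_ker,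
    map_pow]

theorem index_center (hπ : IsPerfectCover π N) (hN : Subgroup.centralizer (N : Set P) = ⊥) :
    (Subgroup.center H).index = Nat.card P := by
  rw [hπ.center_eq_ker hN, Subgroup.index_ker, MonoidHom.range_eq_top.2 hπ.surjective,
    Subgroup.card_top]

end

theorem orderOf_mul_finrank_dvd {H P V : Type} [Group H] [Finite H] [Group P] [AddCommGroup V]
    [Module ℂ V] [FiniteDimensional ℂ V] {π : H →* P} {N : Subgroup P} (C : Conjecture24)
    (hπ : IsPerfectCover π N) [IsSimpleGroup N] (hN : Subgroup.centralizer (N : Set P) = ⊥)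
    {r : Representation ℂ H V} (hr : IsIrreducibleFamily r) (hinj : Function.Injective r) {h : H}
    (hh : LinearMap.trace ℂ V (r h) ≠ 0) (hgen : commutator H ⊔ Subgroup.zpowers h = ⊤) :
    orderOf (π h) * Module.finrank ℂ V ∣ Nat.card P := by
  have := hr.nontrivial
  rw [← hπ.orderOf_mk_center hN, ← hπ.index_center hN]
  exact C H (hπ.isQuasisimple hN) (hπ.map_center_commutator hN) (FDRep.of r)
    (simple_of_forall_commute_exists_eq_smul r fun _ ↦ hr.exists_eq_smul_one) hinj h hh hgen

end IsPerfectCover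

section Construction

variable {G P : Type*} [Group G] [Group P] {π : G →* P} {L : Subgroup G} {t : G}

theorem subgroupOf_sup_zpowers_eq_top (L : Subgroup G) (t : G) :
    L.subgroupOf (L ⊔ Subgroup.zpowers t) ⊔ Subgroup.zpowers ⟨t, mem_sup_zpowers L t⟩ = ⊤ := by
  refine Subgroup.map_injective (Subgroup.subtype_injective _) ?_
  rw [Subgroup.map_sup, Subgroup.map_subgroupOf_eq_of_le le_sup_left, MonoidHom.map_zpowers,
    ← MonoidHom.range_eq_map, Subgroup.range_subtype]
  rfl

theorem commutator_sup_zpowers [L.Normal] (hL : ⁅L, L⁆ = L) :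
    commutator (L ⊔ Subgroup.zpowers t : Subgroup G) =
      L.subgroupOf (L ⊔ Subgroup.zpowers t) :=
  le_antisymm (commutator_le_of_sup_zpowers_eq_top (subgroupOf_sup_zpowers_eq_top L t))
    ((subgroupOf_le_commutator le_sup_left hL.ge).trans (Subgroup.commutator_mono le_top le_top))

theorem isPerfectCover_sup_zpowers [L.Normal] (hL : ⁅L, L⁆ = L) (hker : π.ker ≤ Subgroup.center G)
    [(L.map π).Normal] (hgen : L.map π ⊔ Subgroup.zpowers (π t) = ⊤)
    (ht : t ^ orderOf (QuotientGroup.mk (π t) : P ⧸ L.map π) ∈ L) :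
    IsPerfectCover (π.comp (L ⊔ Subgroup.zpowers t).subtype) (L.map π) where
  surjective := by
    rw [← MonoidHom.range_eq_top, MonoidHom.range_comp, Subgroup.range_subtype, Subgroup.map_sup,
      MonoidHom.map_zpowers, hgen]
  ker_le_center x hx := Subgroup.mem_center_iff.2 fun y ↦
    Subtype.ext (Subgroup.mem_center_iff.1 (hker hx) y)
  ker_le_commutator := by
    rw [commutator_sup_zpowers hL]
    exact fun x hx ↦ ker_inf_sup_zpowers_le ht ⟨hx, x.2⟩
  map_commutator := by
    rw [commutator_sup_zpowers hL, ← Subgroup.map_map,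
      Subgroup.map_subgroupOf_eq_of_le le_sup_left]
  commutator_commutator := by
    rw [commutator_sup_zpowers hL]
    exact le_antisymm (Subgroup.commutator_le_self _) (subgroupOf_le_commutator le_sup_left hL.ge)

theorem exists_finite_isPerfectCover [Finite P] (hπ : Function.Surjective π)
    (hker : π.ker ≤ Subgroup.center G)
    (hdiv : ∀ n ≠ 0, ∀ z ∈ π.ker, ∃ w ∈ π.ker, w ^ n = z) {N : Subgroup P} [N.Normal]
    (hN : ⁅N, N⁆ = N) {g : P} (hgen : N ⊔ Subgroup.zpowers g = ⊤) :
    ∃ (H : Subgroup G) (t : H), Finite H ∧ IsPerfectCover (π.comp H.subtype) N ∧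
      commutator H ⊔ Subgroup.zpowers t = ⊤ ∧ π t = g := by
  obtain ⟨L, hL, hLnormal, hLfinite, rfl⟩ :
      ∃ L : Subgroup G, ⁅L, L⁆ = L ∧ L.Normal ∧ Finite L ∧ L.map π = N := by
    have := finite_commutatorSet_of_ker_le_center hπ hker
    exact ⟨⁅N.comap π, N.comap π⁆, commutator_commutator_comap hπ hker hN, inferInstance,
      .of_injective _ (Subgroup.inclusion_injective (K := commutator G)
        (Subgroup.commutator_mono le_top le_top)),
      map_commutator_comap hπ hN⟩
  obtain ⟨t, rfl, ht⟩ := exists_lift_pow_mem hπ hker (hdiv _ (orderOf_pos _).ne')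
    (pow_orderOf_mk_mem (L.map π) g)
  exact ⟨L ⊔ Subgroup.zpowers t, ⟨t, mem_sup_zpowers L t⟩, finite_sup_zpowers (orderOf_pos _) ht,
    isPerfectCover_sup_zpowers hL hker hgen ht,
    (commutator_sup_zpowers hL).symm ▸ subgroupOf_sup_zpowers_eq_top L t, rfl⟩

end Construction

namespace IsProjectiveRep

section Extension

variable {k P A : Type*} [Field k] [Group P] [Ring A] [Algebra k A] {ρ : P → A}

/-- The central extension of `P` by `kˣ` through which the projective representation `ρ` becomes
linear: pairs of an element of `P` and a unit which agrees with its image under `ρ` up to a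
scalar. -/
def extension (h : IsProjectiveRep k ρ) : Subgroup (Aˣ × P) where
  carrier := {p | ScalarEquiv k (p.1 : A) (ρ p.2)}
  one_mem' := h.one.symm
  mul_mem' {p q} hp hq := (ScalarEquiv.mul hp hq).trans (h.mul p.2 q.2)
  inv_mem' {p} hp := by
    have inv_mul : ScalarEquiv k (ρ p.2⁻¹ * p.1) 1 :=
      (ScalarEquiv.mul (.refl _) hp).trans (by simpa using h.mul_inv p.2⁻¹)
    exact .of_mul_right p.1.isUnit (by simpa using inv_mul.symm)

/-- The projection of `h.extension` onto `P`, with kernel the scalars. -/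
def extensionProj (h : IsProjectiveRep k ρ) : h.extension →* P :=
  (MonoidHom.snd Aˣ P).comp h.extension.subtype

/-- The linear lift of `ρ` to `h.extension`. -/
def extensionRep (h : IsProjectiveRep k ρ) : h.extension →* A :=
  (Units.coeHom A).comp ((MonoidHom.fst Aˣ P).comp h.extension.subtype)

variable (h : IsProjectiveRep k ρ)

theorem extensionRep_equiv (p : h.extension) :
    ScalarEquiv k (h.extensionRep p) (ρ (h.extensionProj p)) :=
  p.2

theorem extension_ext {p q : h.extension} (hrep : h.extensionRep p = h.extensionRep q)
    (hproj : h.extensionProj p = h.extensionProj q) : p = q :=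
  Subtype.ext (Prod.ext (Units.ext hrep) hproj)

theorem extensionProj_surjective : Function.Surjective h.extensionProj := fun x ↦
  let ⟨u, hu⟩ := h.isUnit x
  ⟨⟨(u, x), 1, by simpa using hu⟩, rfl⟩

theorem extensionRep_equiv_one {p : h.extension} (hp : p ∈ h.extensionProj.ker) :
    ScalarEquiv k (h.extensionRep p) 1 := by
  have := h.extensionRep_equiv p
  rw [MonoidHom.mem_ker.1 hp] at this
  exact this.trans h.one

theorem ker_extensionProj_le_center : h.extensionProj.ker ≤ Subgroup.center h.extension := by
  refine fun z hz ↦ Subgroup.mem_center_iff.2 fun p ↦ h.extension_ext ?_ ?_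
  · rw [map_mul, map_mul]
    exact ((h.extensionRep_equiv_one hz).commute_of_one _).symm
  · rw [map_mul, map_mul, MonoidHom.mem_ker.1 hz, mul_one, one_mul]

theorem exists_pow_eq_of_mem_ker_extensionProj [IsAlgClosed k] {n : ℕ} (hn : n ≠ 0)
    {z : h.extension} (hz : z ∈ h.extensionProj.ker) : ∃ w ∈ h.extensionProj.ker, w ^ n = z := by
  obtain ⟨c, hc⟩ := h.extensionRep_equiv_one hz
  obtain ⟨ν, hν⟩ := IsAlgClosed.exists_pow_nat_eq (c : k) (Nat.pos_of_ne_zero hn)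
  have hν0 : ν ≠ 0 := by
    rintro rfl
    exact c.ne_zero (by rw [← hν, zero_pow hn])
  have mem : (Units.map (algebraMap k A : k →* A) (Units.mk0 ν hν0), (1 : P)) ∈ h.extension := by
    refine .trans ⟨Units.mk0 ν hν0, ?_⟩ h.one.symm
    exact Algebra.algebraMap_eq_smul_one ν
  refine ⟨⟨_, mem⟩, rfl, h.extension_ext ?_ ?_⟩
  · rw [map_pow, hc]
    change algebraMap k A ν ^ n = (c : k) • 1
    rw [← map_pow, hν, Algebra.algebraMap_eq_smul_one]
  · rw [map_pow, MonoidHom.mem_ker.1 hz]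
    exact one_pow n

theorem extensionRep_injective (hker : h.ker = ⊥) : Function.Injective h.extensionRep := by
  refine (injective_iff_map_eq_one _).2 fun p hp ↦ ?_
  have proj_mem : h.extensionProj p ∈ h.ker :=
    h.mem_ker.2 ((h.extensionRep_equiv p).symm.trans (hp ▸ .refl _))
  rw [hker, Subgroup.mem_bot] at proj_mem
  exact h.extension_ext (hp.trans (map_one _).symm) (proj_mem.trans (map_one _).symm)

end Extension

theorem orderOf_mul_finrank_dvd_of_isSimpleGroup {P V : Type} [Group P] [Finite P]
    [AddCommGroup V] [Module ℂ V] [FiniteDimensional ℂ V] {ρ : P → Module.End ℂ V}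
    {N : Subgroup P} {g : P} (C : Conjecture24) (h : IsProjectiveRep ℂ ρ) (hker : h.ker = ⊥)
    [N.Normal] [IsSimpleGroup N] (hN : ⁅N, N⁆ = N) (hi : IsIrreducibleFamily fun x : N ↦ ρ x)
    (hgen : N ⊔ Subgroup.zpowers g = ⊤) (hg : LinearMap.trace ℂ V (ρ g) ≠ 0) :
    orderOf g * Module.finrank ℂ V ∣ Nat.card P := by
  have centralizer_N : Subgroup.centralizer (N : Set P) = ⊥ :=
    le_bot_iff.1 (hker ▸ h.centralizer_le_ker hN.ge hi)
  obtain ⟨H, t, _, hH, hgenH, rfl⟩ := exists_finite_isPerfectCover h.extensionProj_surjective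
    h.ker_extensionProj_le_center (fun _ hn _ ↦ h.exists_pow_eq_of_mem_ker_extensionProj hn) hN hgen
  have irreducible_H : IsIrreducibleFamily (h.extensionRep.comp H.subtype) :=
    hi.of_subgroup.of_forall_exists_equiv fun x ↦
      let ⟨p, hp⟩ := hH.surjective x
      ⟨p, hp ▸ (h.extensionRep_equiv p).symm⟩
  exact hH.orderOf_mul_finrank_dvd C centralizer_N irreducible_H
    ((h.extensionRep_injective hker).comp Subtype.val_injective)
    (((h.extensionRep_equiv t).map_ne_zero _).2 hg) hgenH

end IsProjectiveRep

/-! ### The main induction -/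

theorem IsProjectiveRep.ker_eq_top_of_sup_zpowers_eq_top {k P V : Type*} [Field k]
    [IsAlgClosed k] [Group P] [AddCommGroup V] [Module k V] [FiniteDimensional k V]
    {ρ : P → Module.End k V} (h : IsProjectiveRep k ρ) (hi : IsIrreducibleFamily ρ) {g : P}
    (hgen : h.ker ⊔ Subgroup.zpowers g = ⊤) : h.ker = ⊤ := by
  have stabilizer_eq_top : h.stabilizer (ρ g) = ⊤ := by
    refine top_le_iff.1 (hgen.ge.trans (sup_le (fun x hx ↦ ?_) (Subgroup.zpowers_le.2 ?_)))
    · exact h.mem_stabilizer.2 ((h.mem_ker.1 hx).commute_of_one _)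
    · exact h.mem_stabilizer.2 (Commute.refl _)
  have g_mem : g ∈ h.ker := h.mem_ker.2 <| hi.equiv_one (h.isUnit g) fun x ↦
    h.mem_stabilizer.1 (stabilizer_eq_top ▸ Subgroup.mem_top x)
  exact top_le_iff.1 (hgen.ge.trans (sup_le le_rfl (Subgroup.zpowers_le.2 g_mem)))

section MainInduction

variable {P V : Type} [Group P] [Finite P] [AddCommGroup V] [Module ℂ V] [FiniteDimensional ℂ V]
  {ρ : P → Module.End ℂ V} {N : Subgroup P} {g : P}

theorem IsProjectiveRep.orderOf_mul_finrank_dvd_of_irreducible_minimal (C : Conjecture24)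
    (h : IsProjectiveRep ℂ ρ) (hker : h.ker = ⊥) (hN : IsMinimalNormalizedBy ⊤ N)
    (hi : IsIrreducibleFamily fun x : N ↦ ρ x)
    (ih : ∀ (Q : Type) [Group Q] [Finite Q], Nat.card Q < Nat.card P → OrderDegreeDvd Q)
    (hg : LinearMap.trace ℂ V (ρ g) ≠ 0) :
    orderOf g * Module.finrank ℂ V ∣ Nat.card P := by
  have := hN.normal
  by_cases hgen : N ⊔ Subgroup.zpowers g = ⊤
  swap
  · exact ((ih _ (card_lt_of_ne_top hgen)).orderOf_mul_finrank_dvd_card h (hi.mono (ρ := ρ)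
      le_sup_left) (mem_sup_zpowers N g) hg).trans (Subgroup.card_subgroup_dvd_card _)
  rcases hN.le_centralizer_or_le_commutator with hab | hperf
  · exact h.orderOf_mul_finrank_dvd_of_le_centralizer hker hN hab hi
      (fun hne ↦ ih N (card_lt_of_ne_top hne)) hgen
  obtain ⟨S, hSN, hS⟩ := IsMinimalNormalizedBy.exists_le hN.ne_bot N.le_normalizer
  by_cases hne : S = N
  · subst hne
    have := hS.isSimpleGroup
    exact h.orderOf_mul_finrank_dvd_of_isSimpleGroup C hker
      (le_antisymm (Subgroup.commutator_le_self S) hperf) hi hgen hg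
  · exact h.orderOf_mul_finrank_dvd_of_minimal_ne hker hN hperf hi hS hSN hne hgen hg ih

theorem TensorFactorization.orderOf_mul_finrank_dvd {U : Type} [AddCommGroup U] [Module ℂ U]
    [FiniteDimensional ℂ U] (D : TensorFactorization ρ N U) (h : IsProjectiveRep ℂ ρ)
    (hi : IsIrreducibleFamily ρ)
    (hsup : OrderDegreeDvd ((D.isProjectiveRep_τ h).ker ⊔ Subgroup.zpowers g : Subgroup P))
    (hquot : OrderDegreeDvd (P ⧸ (D.isProjectiveRep_τ h).ker))
    (hg : LinearMap.trace ℂ V (ρ g) ≠ 0) :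
    orderOf g * Module.finrank ℂ V ∣ Nat.card P := by
  set K := (D.isProjectiveRep_τ h).ker with hK
  rw [D.trace_eq] at hg
  have hNK : N ≤ K ⊔ Subgroup.zpowers g :=
    le_sup_of_le_left fun x hx ↦ (D.isProjectiveRep_τ h).mem_ker.2 (D.τ_equiv_one h hx)
  have σ_dvd : orderOf g * Module.finrank ℂ U ∣
      Nat.card K * orderOf (QuotientGroup.mk g : P ⧸ K) := by
    rw [← card_sup_zpowers]
    exact hsup.orderOf_mul_finrank_dvd_card (D.isProjectiveRep_σ h)
      ((D.irreducible_σ h).mono (ρ := D.σ) hNK) (mem_sup_zpowers _ g) (left_ne_zero_of_mul hg)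
  have τ_dvd : orderOf (QuotientGroup.mk g : P ⧸ K) * Module.finrank ℂ (LinearMap.range D.e) ∣
      Nat.card (P ⧸ K) :=
    hquot.orderOf_mk_mul_finrank_dvd (D.isProjectiveRep_τ h) (D.irreducible_τ h (.id P) hi) hK.le
      (right_ne_zero_of_mul hg)
  refine Nat.dvd_of_mul_dvd_mul_right (orderOf_pos (QuotientGroup.mk g : P ⧸ K)) ?_
  rw [D.finrank_eq, K.card_eq_card_quotient_mul_card_subgroup]
  convert mul_dvd_mul σ_dvd τ_dvd using 1 <;> ac_rfl

theorem TensorFactorization.orderOf_mul_finrank_dvd_of_minimal {U : Type} [AddCommGroup U]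
    [Module ℂ U] [FiniteDimensional ℂ U] (C : Conjecture24) (D : TensorFactorization ρ N U)
    (h : IsProjectiveRep ℂ ρ) (hker : h.ker = ⊥) (hi : IsIrreducibleFamily ρ)
    (hN : IsMinimalNormalizedBy ⊤ N)
    (ih : ∀ (Q : Type) [Group Q] [Finite Q], Nat.card Q < Nat.card P → OrderDegreeDvd Q)
    (hg : LinearMap.trace ℂ V (ρ g) ≠ 0) :
    orderOf g * Module.finrank ℂ V ∣ Nat.card P := by
  have hσ := D.isProjectiveRep_σ h
  have hτ := D.isProjectiveRep_τ h
  have hiτ : IsIrreducibleFamily D.τ := D.irreducible_τ h (.id P) hi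
  have hN_le : N ≤ hτ.ker := fun x hx ↦ hτ.mem_ker.2 (D.τ_equiv_one h hx)
  by_cases hgen : hτ.ker ⊔ Subgroup.zpowers g = ⊤
  · have τ_scalar (x : P) : ScalarEquiv ℂ (D.τ x) 1 := hτ.mem_ker.1
      (hτ.ker_eq_top_of_sup_zpowers_eq_top hiτ hgen ▸ Subgroup.mem_top x)
    have hker_σ : hσ.ker = ⊥ := eq_bot_iff.2 fun x hx ↦
      hker ▸ h.mem_ker.2 (D.equiv_one (hσ.mem_ker.1 hx) (τ_scalar x))
    rw [D.finrank_eq, hiτ.finrank_eq_one τ_scalar, mul_one]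
    rw [D.trace_eq] at hg
    exact hσ.orderOf_mul_finrank_dvd_of_irreducible_minimal C hker_σ hN (D.irreducible_σ h) ih
      (left_ne_zero_of_mul hg)
  · exact D.orderOf_mul_finrank_dvd h hi (ih _ (card_lt_of_ne_top hgen))
      (ih _ (card_quotient_lt_of_ne_bot (ne_bot_of_le_ne_bot hN.ne_bot hN_le))) hg

theorem Conjecture24.orderDegreeDvd_of_forall_card_lt (C : Conjecture24)
    (ih : ∀ (Q : Type) [Group Q] [Finite Q], Nat.card Q < Nat.card P → OrderDegreeDvd Q) :
    OrderDegreeDvd P := by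
  intro V _ _ _ ρ h hi g hg
  by_cases hker : h.ker = ⊥
  swap
  · exact h.orderOf_mul_finrank_dvd_of_quotient_ker hi (ih _ (card_quotient_lt_of_ne_bot hker)) hg
  rcases subsingleton_or_nontrivial P with hP | hP
  · have finrank_eq_one : Module.finrank ℂ V = 1 :=
      hi.finrank_eq_one fun x ↦ Subsingleton.elim x 1 ▸ h.one
    simp [finrank_eq_one, Subsingleton.elim g 1]
  obtain ⟨N, -, hN⟩ := IsMinimalNormalizedBy.exists_le (P := P) top_ne_bot Subgroup.le_normalizer
  have := hN.normal
  rcases h.exists_algEquiv_matrix_or_imprimitivityIdempotent hi N with ⟨n, _, ⟨φ⟩⟩ | ⟨e, he⟩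
  · obtain ⟨D⟩ := h.nonempty_tensorFactorization N
      (φ.trans (Matrix.toLinAlgEquiv' : _ ≃ₐ[ℂ] Module.End ℂ (Fin n → ℂ)))
    exact D.orderOf_mul_finrank_dvd_of_minimal C h hker hi hN ih hg
  · exact he.orderOf_mul_finrank_dvd h hi (ih _ (card_lt_of_ne_top (he.stabilizer_ne_top h hi))) hg

theorem Conjecture24.orderDegreeDvd (C : Conjecture24) (P : Type) [Group P] [Finite P] :
    OrderDegreeDvd P := by
  induction hn : Nat.card P using Nat.strong_induction_on generalizing P with
  | _ n ih =>
    subst hn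
    exact C.orderDegreeDvd_of_forall_card_lt fun Q _ _ hQ ↦ ih _ hQ Q rfl

end MainInduction

/-! ### Irreducibility on the derived subgroup -/

section RestrictionIrreducible

open Module.End in
theorem eq_one_of_pow_eq_one_of_forall_hasEigenvalue {k W : Type*} [Field k] [IsAlgClosed k]
    [AddCommGroup W] [Module k W] [FiniteDimensional k W] {T : Module.End k W} {n : ℕ}
    (hn : (n : k) ≠ 0) (hT : T ^ n = 1) (h : ∀ μ, T.HasEigenvalue μ → μ = 1) : T = 1 := by
  have semisimple : T.IsSemisimple := by
    refine isSemisimple_of_squarefree_aeval_eq_zero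
      (Polynomial.separable_X_pow_sub_C (1 : k) hn one_ne_zero).squarefree ?_
    simp [hT]
  have eigenspace_one : T.eigenspace 1 = ⊤ := by
    refine top_le_iff.1 (semisimple.iSup_eigenspace_eq_top.ge.trans (iSup_le fun μ ↦ ?_))
    by_cases hμ : T.HasEigenvalue μ
    · rw [h μ hμ]
    · simp [not_not.1 hμ]
  ext v
  have hv : v ∈ T.eigenspace 1 := eigenspace_one ▸ Submodule.mem_top
  simpa using mem_eigenspace_iff.1 hv

variable {k P V : Type*} [Field k] [Group P] [AddCommGroup V] [Module k V]

theorem eq_one_of_mul_eq_smul_mul {a b : Module.End k V} {μ : k} (hb : IsUnit b)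
    (hab : a * b = μ • (b * a)) (ha : LinearMap.trace k V a ≠ 0) : μ = 1 := by
  obtain ⟨u, rfl⟩ := hb
  have conj_eq : a = μ • (u * a * (↑u⁻¹ : Module.End k V)) := by
    rw [← smul_mul_assoc, ← hab, Units.mul_inv_cancel_right]
  have trace_eq := congrArg (LinearMap.trace k V) conj_eq
  rw [map_smul, LinearMap.trace_conj, smul_eq_mul] at trace_eq
  exact (mul_eq_right₀ ha).1 trace_eq.symm

theorem IsIrreducibleFamily.isUnit [FiniteDimensional k V] {X : Type*} {ρ : X → Module.End k V}
    (h : IsIrreducibleFamily ρ) {b : Module.End k V} (hb : b ≠ 0)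
    (hρ : ∀ x, ScalarEquiv k (b * ρ x) (ρ x * b)) : IsUnit b := by
  refine (LinearMap.isUnit_iff_ker_eq_bot b).2 ?_
  refine (h.eq_bot_or_eq_top _ fun x w hw ↦ ?_).resolve_right (mt LinearMap.ker_eq_top.1 hb)
  obtain ⟨c, hc⟩ := hρ x
  simpa [LinearMap.mem_ker.1 hw] using LinearMap.congr_fun hc w

namespace IsProjectiveRep

theorem stabilizer_conj_of_normal {A : Type*} [Ring A] [Algebra k A] {ρ : P → A}
    (h : IsProjectiveRep k ρ) {L : Subgroup P} [L.Normal] {b : A} (hL : L ≤ h.stabilizer b)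
    (g : P) : L ≤ h.stabilizer (h.conj g b) := fun l hl ↦ by
  have fixed : h.conj (g⁻¹ * l * g) b = b := hL (Subgroup.Normal.conj_mem' ‹_› l hl g)
  change h.conj l (h.conj g b) = h.conj g b
  rw [← AlgEquiv.mul_apply, ← map_mul, (by group : l * g = g * (g⁻¹ * l * g)), map_mul,
    AlgEquiv.mul_apply, fixed]

variable {ρ : P → Module.End k V} {L : Subgroup P} {g : P}

theorem conj_equiv_self_of_sup_zpowers_eq_top (h : IsProjectiveRep k ρ)
    (hgen : L ⊔ Subgroup.zpowers g = ⊤) {b : Module.End k V} (hL : L ≤ h.stabilizer b)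
    (hg : ScalarEquiv k (h.conj g b) b) (x : P) : ScalarEquiv k (h.conj x b) b := by
  let lineStabilizer : Subgroup P :=
    { carrier := {x | ScalarEquiv k (h.conj x b) b}
      one_mem' := by simpa using ScalarEquiv.refl b
      mul_mem' {x y} hx hy := by
        simpa using (hy.map (h.conj x).toLinearMap).trans hx
      inv_mem' {x} hx := by
        simpa [← AlgEquiv.mul_apply, ← map_mul] using (hx.map (h.conj x⁻¹).toLinearMap).symm }
  have stabilizer_le : h.stabilizer b ≤ lineStabilizer := fun y (hy : h.conj y b = b) ↦
    ⟨1, by rw [hy, one_smul]⟩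
  have sup_le_lineStabilizer : L ⊔ Subgroup.zpowers g ≤ lineStabilizer :=
    sup_le (hL.trans stabilizer_le) (Subgroup.zpowers_le.2 hg)
  exact sup_le_lineStabilizer (hgen ▸ Subgroup.mem_top x)

variable [FiniteDimensional k V]

theorem eq_one_of_conj_apply_eq_smul (h : IsProjectiveRep k ρ) (hi : IsIrreducibleFamily ρ)
    (hgen : L ⊔ Subgroup.zpowers g = ⊤) (hg : LinearMap.trace k V (ρ g) ≠ 0)
    {b : Module.End k V} (hb : b ≠ 0) (hL : L ≤ h.stabilizer b) {μ : k}
    (hμ : h.conj g b = μ • b) : μ = 1 := by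
  have hμ0 : μ ≠ 0 := by
    rintro rfl
    exact hb (by simpa using hμ)
  have line_stable := h.conj_equiv_self_of_sup_zpowers_eq_top hgen hL ⟨Units.mk0 μ hμ0, hμ⟩
  have isUnit_b : IsUnit b := hi.isUnit hb fun x ↦ by
    rw [← h.conj_apply_mul]
    exact (line_stable x).symm.mul (.refl _)
  exact eq_one_of_mul_eq_smul_mul isUnit_b
    (by rw [← smul_mul_assoc, ← hμ, h.conj_apply_mul]) hg

variable [IsAlgClosed k] [CharZero k] [Finite P] [L.Normal]

theorem commute_of_le_stabilizer (h : IsProjectiveRep k ρ) (hi : IsIrreducibleFamily ρ)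
    (hgen : L ⊔ Subgroup.zpowers g = ⊤) (hg : LinearMap.trace k V (ρ g) ≠ 0)
    {a : Module.End k V} (ha : L ≤ h.stabilizer a) : Commute (ρ g) a := by
  let fixed : Submodule k (Module.End k V) := (Subalgebra.centralizer k (ρ '' L)).toSubmodule
  have mem_fixed (b : Module.End k V) : b ∈ fixed ↔ L ≤ h.stabilizer b := by
    simp [fixed, Subalgebra.mem_centralizer_iff, SetLike.le_def, h.mem_stabilizer, Commute,
      SemiconjBy]
  have fixed_stable : ∀ b ∈ fixed, (h.conj g).toLinearMap b ∈ fixed := fun b hb ↦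
    (mem_fixed _).2 (h.stabilizer_conj_of_normal ((mem_fixed b).1 hb) g)
  let T : Module.End k fixed := (h.conj g).toLinearMap.restrict fixed_stable
  have T_pow : T ^ orderOf g = 1 := by
    have conj_pow : (h.conj g).toLinearMap ^ orderOf g = 1 := by
      rw [← AlgEquiv.pow_toLinearMap, ← map_pow, pow_orderOf_eq_one, map_one]
      rfl
    ext b : 2
    rw [Module.End.pow_restrict, LinearMap.coe_restrict_apply, conj_pow]
    rfl
  have T_eq_one : T = 1 := by
    refine eq_one_of_pow_eq_one_of_forall_hasEigenvalue
      (Nat.cast_ne_zero.2 (orderOf_pos g).ne') T_pow fun μ hμ ↦ ?_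
    obtain ⟨⟨b, hb⟩, hbμ⟩ := hμ.exists_hasEigenvector
    exact h.eq_one_of_conj_apply_eq_smul hi hgen hg (fun h0 ↦ hbμ.2 (Subtype.ext h0))
      ((mem_fixed b).1 hb) (congrArg Subtype.val hbμ.apply_eq_smul)
  exact h.mem_stabilizer.1 (congrArg Subtype.val
    (LinearMap.congr_fun T_eq_one ⟨a, (mem_fixed a).2 ha⟩))

theorem exists_eq_smul_one_of_le_stabilizer (h : IsProjectiveRep k ρ) (hi : IsIrreducibleFamily ρ)
    (hgen : L ⊔ Subgroup.zpowers g = ⊤) (hg : LinearMap.trace k V (ρ g) ≠ 0)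
    {a : Module.End k V} (ha : L ≤ h.stabilizer a) : ∃ c : k, a = c • 1 := by
  have stabilizer_eq_top : h.stabilizer a = ⊤ := by
    rw [← top_le_iff, ← hgen, sup_le_iff, Subgroup.zpowers_le]
    exact ⟨ha, h.mem_stabilizer.2 (h.commute_of_le_stabilizer hi hgen hg ha)⟩
  exact hi.exists_eq_smul_one fun x ↦ h.mem_stabilizer.1 (stabilizer_eq_top ▸ Subgroup.mem_top x)

end IsProjectiveRep

universe u

theorem isIrreducibleFamily_subgroup_of_trace_ne_zero {k G V : Type u} [Field k] [IsAlgClosed k]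
    [CharZero k] [Group G] [Finite G] [AddCommGroup V] [Module k V] [FiniteDimensional k V]
    {r : Representation k G V} (hr : IsIrreducibleFamily r) {L : Subgroup G} [L.Normal] {g : G}
    (hgen : L ⊔ Subgroup.zpowers g = ⊤) (hg : LinearMap.trace k V (r g) ≠ 0) :
    IsIrreducibleFamily fun x : L ↦ r x := by
  have h : IsProjectiveRep k r := .of_monoidHom r
  have := hr.nontrivial
  have : CategoryTheory.Simple (FDRep.of (r.comp L.subtype)) :=
    simple_of_forall_commute_exists_eq_smul _ fun a ha ↦
      h.exists_eq_smul_one_of_le_stabilizer hr hgen hg fun x hx ↦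
        h.mem_stabilizer.2 (ha ⟨x, hx⟩)
  exact isIrreducibleFamily_of_simple (FDRep.of (r.comp L.subtype))

end RestrictionIrreducible

section Converse

theorem solvableResidual_eq_commutator {H : Type*} [Group H]
    (hperf : ⁅commutator H, commutator H⁆ = commutator H) :
    solvableResidual H = commutator H := by
  refine le_antisymm ((iInf_le _ 1).trans (derivedSeries_one H).le) (le_iInf fun n ↦ ?_)
  induction n with
  | zero => exact le_top
  | succ n ih => exact hperf.ge.trans (Subgroup.commutator_mono ih ih)

theorem isSimpleGroup_map_mk_center {H : Type*} [Group H] {L : Subgroup H}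
    (hL : IsSimpleGroup (L ⧸ Subgroup.center L))
    (hZ : (Subgroup.center L).map L.subtype = Subgroup.center H) :
    IsSimpleGroup (L.map (QuotientGroup.mk' (Subgroup.center H))) := by
  let f := (QuotientGroup.mk' (Subgroup.center H)).subgroupMap L
  have center_eq : Subgroup.center L = f.ker := by
    ext x
    rw [MonoidHom.mem_ker, Subtype.ext_iff, ← Subgroup.mem_map_iff_mem L.subtype_injective, hZ]
    exact (QuotientGroup.eq_one_iff _).symm
  exact ((QuotientGroup.quotientMulEquivOfEq center_eq).trans
    (QuotientGroup.quotientKerEquivOfSurjective f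
      (MonoidHom.subgroupMap_surjective _ _))).symm.isSimpleGroup

theorem map_le_commutator_map {G P : Type*} [Group G] [Group P] (f : G →* P) {L : Subgroup G}
    (hL : L ≤ ⁅L, L⁆) : L.map f ≤ ⁅L.map f, L.map f⁆ :=
  Subgroup.map_commutator L L f ▸ Subgroup.map_mono hL

theorem exists_mul_ne_mul_of_le_commutator {P : Type*} [Group P] {S : Subgroup P} (hS : S ≠ ⊥)
    (hperf : S ≤ ⁅S, S⁆) : ∃ a b : S, a * b ≠ b * a := by
  by_contra! comm
  have commutator_eq_bot : ⁅S, S⁆ = ⊥ := Subgroup.commutator_eq_bot_iff_le_centralizer.2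
    fun x hx y hy ↦ congrArg Subtype.val (comm ⟨y, hy⟩ ⟨x, hx⟩)
  exact hS (le_bot_iff.1 (commutator_eq_bot ▸ hperf))

section Faithful

variable {k G V : Type*} [Field k] [Group G] [AddCommGroup V] [Module k V]
  {r : Representation k G V}

theorem mem_center_of_equiv_one (hinj : Function.Injective r) {x : G} (hx : ScalarEquiv k (r x) 1) :
    x ∈ Subgroup.center G :=
  Subgroup.mem_center_iff.2 fun y ↦ hinj <| by
    rw [map_mul, map_mul]
    exact (hx.commute_of_one _).symm.eq

variable [IsAlgClosed k] [FiniteDimensional k V]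

theorem center_le_ker (hr : IsIrreducibleFamily r) (h : IsProjectiveRep k r) :
    Subgroup.center G ≤ h.ker := fun z hz ↦
  hr.equiv_one (h.isUnit z) fun x ↦ by
    rw [Commute, SemiconjBy, ← map_mul, ← map_mul, Subgroup.mem_center_iff.1 hz]

theorem centralizer_map_mk_center_eq_bot (hinj : Function.Injective r) {L : Subgroup G}
    (hr : IsIrreducibleFamily fun x : L ↦ r x) (hL : L ≤ ⁅L, L⁆) :
    Subgroup.centralizer
      (L.map (QuotientGroup.mk' (Subgroup.center G)) : Set (G ⧸ Subgroup.center G)) = ⊥ := by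
  have h : IsProjectiveRep k r := .of_monoidHom r
  have center_le := center_le_ker hr.of_subgroup h
  have irreducible : IsIrreducibleFamily fun q : L.map (QuotientGroup.mk' (Subgroup.center G)) ↦
      r (q : G ⧸ Subgroup.center G).out :=
    hr.of_forall_exists_equiv fun x ↦
      ⟨⟨_, Subgroup.mem_map_of_mem _ x.2⟩, (h.out_equiv center_le x).symm⟩
  refine eq_bot_iff.2 fun q hq ↦ ?_
  have scalar : ScalarEquiv k (r q.out) 1 := (h.quotient center_le).centralizer_le_ker
    (map_le_commutator_map _ hL) irreducible hq
  rw [Subgroup.mem_bot, ← q.out_eq']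
  exact (QuotientGroup.eq_one_iff _).2 (mem_center_of_equiv_one hinj scalar)

end Faithful

theorem conjecture24_of_conjecture21 (C : Conjecture21) : Conjecture24 := by
  rintro H _ _ ⟨hperf, hsimple⟩ hZ V hV hinj h hh hgen
  have perfect : ⁅commutator H, commutator H⁆ = commutator H :=
    Subgroup.isPerfect_iff.1 (Group.isPerfect_def.2 hperf)
  have residual := solvableResidual_eq_commutator perfect
  have irreducible : IsIrreducibleFamily fun x : commutator H ↦ V.ρ x :=
    isIrreducibleFamily_subgroup_of_trace_ne_zero (isIrreducibleFamily_of_simple V) hgen hh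
  let S := (commutator H).map (QuotientGroup.mk' (Subgroup.center H))
  have S_simple : IsSimpleGroup S := isSimpleGroup_map_mk_center hsimple hZ
  refine C H ⟨S, .map inferInstance _ (QuotientGroup.mk'_surjective _), S_simple,
    exists_mul_ne_mul_of_le_commutator ((Subgroup.nontrivial_iff_ne_bot S).1 inferInstance)
      (map_le_commutator_map _ perfect.ge),
    centralizer_map_mk_center_eq_bot hinj irreducible perfect.ge⟩ V hV hinj ?_ h hh ?_
  · have := irreducible.nontrivial
    rw [residual]
    exact simple_of_forall_commute_exists_eq_smul _ fun _ ↦ irreducible.exists_eq_smul_one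
  · rw [residual, eq_top_iff, ← hgen]
    exact sup_le_sup_right le_sup_left _

end Converse

/-- The divisibility of Conjectures 2.1 and 2.4, asserted for all finite groups and all their
irreducible complex characters. -/
def CenterOrderDegreeDvd : Prop :=
  ∀ (G : Type) [Group G] [Finite G] (V : FDRep ℂ G), CategoryTheory.Simple V →
    ∀ g : G, V.character g ≠ 0 →
      orderOf (QuotientGroup.mk g : G ⧸ Subgroup.center G) * Module.finrank ℂ V ∣
        (Subgroup.center G).index

theorem Conjecture24.centerOrderDegreeDvd (C : Conjecture24) : CenterOrderDegreeDvd := by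
  intro G _ _ V _ g hg
  have projective : IsProjectiveRep ℂ V.ρ := .of_monoidHom V.ρ
  have irreducible : IsIrreducibleFamily V.ρ := isIrreducibleFamily_of_simple V
  exact (C.orderDegreeDvd (G ⧸ Subgroup.center G)).orderOf_mk_mul_finrank_dvd projective irreducible
    (center_le_ker irreducible projective) hg

theorem conjecture21_iff_conjecture24_general :
    [Conjecture21, Conjecture24, CenterOrderDegreeDvd].TFAE := by
  tfae_have 1 → 2 := conjecture24_of_conjecture21
  tfae_have 2 → 3 := Conjecture24.centerOrderDegreeDvd
  tfae_have 3 → 1 := fun h G _ _ _ V hV _ _ g hg _ ↦ h G V hV g hg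
  tfae_finish

/-- **Lemma 2.5'.** Conjecture 2.1 and Conjecture 2.4 are equivalent. -/
theorem conjecture21_iff_conjecture24 : Conjecture21 ↔ Conjecture24 := by
  exact conjecture21_iff_conjecture24_general.out 0 1
end

section
/- Let G and H be finite groups with G/Z(G) ≅ H/Z(H), and let L be a group together with injective homomorphisms ι_G : L → G and ι_H : L → H whose images are the solvable residuals G^(∞) of G and H^(∞) of H respectively. Let χ be a faithful irreducible complex character of G and ψ a faithful irreducible complex character of H such that the restrictions agree, χ(ι_G(x)) = ψ(ι_H(x)) for all x ∈ L, and this common restriction is an irreducible character of L. Let g ∈ G and h ∈ H be such that G = ⟨ι_G(L), Z(G), g⟩, H = ⟨ι_H(L), Z(H), h⟩, χ(g) ≠ 0, ψ(h) ≠ 0, and conjugation by g and by h induce the same automorphism of L (i.e. there is an automorphism α of L with ι_G(α(x)) = g·ι_G(x)·g⁻¹ and ι_H(α(x)) = h·ι_H(x)·h⁻¹ for all x ∈ L). If o(gZ(G))·χ(1) divides |G : Z(G)|, then o(hZ(H))·ψ(1) divides |H : Z(H)|. -/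
/-!
Since `G` is generated by `L`, `Z(G)` and `g`, a power of `g` is central as soon as it centralizes
`L`. Hence `o(gZ(G))` is the order of the automorphism that `g` induces on `L`; as `h` induces the
same automorphism, `o(gZ(G)) = o(hZ(H))`. The degrees agree because the characters agree at `1`, and
the indices agree because the central quotients are isomorphic.
-/

section

variable {G H L : Type*} [Group G] [Group H] [Group L]

theorem pow_mem_center_iff_mem_centralizer {A : Subgroup G} {g : G}
    (hgen : A ⊔ Subgroup.center G ⊔ Subgroup.zpowers g = ⊤) (n : ℕ) :
    g ^ n ∈ Subgroup.center G ↔ g ^ n ∈ Subgroup.centralizer (A : Set G) := by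
  refine ⟨fun hc ↦ Subgroup.center_le_centralizer _ hc, fun hA ↦ ?_⟩
  have hle : A ⊔ Subgroup.center G ⊔ Subgroup.zpowers g ≤ Subgroup.centralizer {g ^ n} := by
    refine sup_le (sup_le ?_ (Subgroup.center_le_centralizer _)) ?_
    · exact fun a ha ↦ Subgroup.mem_centralizer_singleton_iff.mpr (hA a ha)
    · rw [Subgroup.zpowers_le, Subgroup.mem_centralizer_singleton_iff]
      exact Commute.self_pow g n
  rw [hgen, top_le_iff, Subgroup.centralizer_eq_top_iff_subset] at hle
  exact hle rfl

theorem map_mulAut_pow_apply {ι : L →* G} {g : G} {α : MulAut L}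
    (hα : ∀ x, ι (α x) = g * ι x * g⁻¹) (n : ℕ) (x : L) :
    ι ((α ^ n) x) = g ^ n * ι x * (g ^ n)⁻¹ := by
  induction n generalizing x with
  | zero => simp
  | succ n ih => rw [pow_succ, MulAut.mul_apply, ih, hα]; group

theorem mulAut_pow_eq_one_iff_mem_centralizer_range {ι : L →* G} (hι : Function.Injective ι)
    {g : G} {α : MulAut L} (hα : ∀ x, ι (α x) = g * ι x * g⁻¹) (n : ℕ) :
    α ^ n = 1 ↔ g ^ n ∈ Subgroup.centralizer (ι.range : Set G) := by
  simp only [MulEquiv.ext_iff, ← hι.eq_iff, map_mulAut_pow_apply hα, MulAut.one_apply,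
    mul_inv_eq_iff_eq_mul, Subgroup.mem_centralizer_iff, MonoidHom.coe_range,
    Set.forall_mem_range]
  exact forall_congr' fun _ ↦ eq_comm

theorem orderOf_mk_center_eq_orderOf_mulAut {ι : L →* G} (hι : Function.Injective ι) {g : G}
    (hgen : ι.range ⊔ Subgroup.center G ⊔ Subgroup.zpowers g = ⊤)
    {α : MulAut L} (hα : ∀ x, ι (α x) = g * ι x * g⁻¹) :
    orderOf (g : G ⧸ Subgroup.center G) = orderOf α := by
  rw [orderOf_eq_orderOf_iff]
  intro n
  rw [← QuotientGroup.mk_pow, QuotientGroup.eq_one_iff, pow_mem_center_iff_mem_centralizer hgen,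
    mulAut_pow_eq_one_iff_mem_centralizer_range hι hα]

theorem finrank_eq_of_character_one_eq {k : Type*} [Field k] [CharZero k]
    {V : FDRep k G} {W : FDRep k H} (hVW : V.character 1 = W.character 1) :
    Module.finrank k V = Module.finrank k W := by
  rw [FDRep.char_one, FDRep.char_one] at hVW
  exact_mod_cast hVW

theorem conjecture21_transfer_general [(Subgroup.center G).FiniteIndex]
    (e : (G ⧸ Subgroup.center G) ≃* (H ⧸ Subgroup.center H))
    {ιG : L →* G} {ιH : L →* H}
    (hinjG : Function.Injective ιG) (hinjH : Function.Injective ιH) {g : G} {h : H}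
    (hgenG : ιG.range ⊔ Subgroup.center G ⊔ Subgroup.zpowers g = ⊤)
    (hgenH : ιH.range ⊔ Subgroup.center H ⊔ Subgroup.zpowers h = ⊤)
    {α : MulAut L} (hαG : ∀ x, ιG (α x) = g * ιG x * g⁻¹)
    (hαH : ∀ x, ιH (α x) = h * ιH x * h⁻¹) {d : ℕ}
    (hdvd : orderOf (g : G ⧸ Subgroup.center G) * d ∣ (Subgroup.center G).index) :
    orderOf (h : H ⧸ Subgroup.center H) * d ∣ (Subgroup.center H).index := by
  have horder : orderOf (g : G ⧸ Subgroup.center G) = orderOf (h : H ⧸ Subgroup.center H) :=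
    (orderOf_mk_center_eq_orderOf_mulAut hinjG hgenG hαG).trans
      (orderOf_mk_center_eq_orderOf_mulAut hinjH hgenH hαH).symm
  have hindex : (Subgroup.center G).index = (Subgroup.center H).index := Nat.card_congr e.toEquiv
  rwa [horder, hindex] at hdvd

end

/-- **Lemma 2.5.** Let `G`, `H` be finite groups with `G/Z(G) ≅ H/Z(H)`, and
let `L` be a group with injective homomorphisms `ιG : L → G`, `ιH : L → H` whose images are
`G^(∞)` and `H^(∞)`. Let `χ` (afforded by `V`) and `ψ` (afforded by `W`) be faithful
irreducible complex characters of `G` and `H` whose restrictions along `ιG`, `ιH` agree and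
are an irreducible character of `L`. Let `g ∈ G`, `h ∈ H` with `G = ⟨ιG(L), Z(G), g⟩`,
`H = ⟨ιH(L), Z(H), h⟩`, `χ(g) ≠ 0`, `ψ(h) ≠ 0`, and such that conjugation by `g` and by `h`
induce the same automorphism of `L`. If `o(gZ(G))·χ(1) ∣ |G : Z(G)|`, then
`o(hZ(H))·ψ(1) ∣ |H : Z(H)|`. -/
theorem conjecture21_transfer
    (G H L : Type) [Group G] [Group H] [Group L] [Finite G] [Finite H]
    (e : Nonempty ((G ⧸ Subgroup.center G) ≃* (H ⧸ Subgroup.center H)))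
    (ιG : L →* G) (ιH : L →* H)
    (hinjG : Function.Injective ιG) (hinjH : Function.Injective ιH)
    (hrG : ιG.range = solvableResidual G) (hrH : ιH.range = solvableResidual H)
    (V : FDRep ℂ G) (hVsimple : CategoryTheory.Simple V)
    (hVfaith : Function.Injective V.ρ)
    (W : FDRep ℂ H) (hWsimple : CategoryTheory.Simple W)
    (hWfaith : Function.Injective W.ρ)
    (hres : ∀ x : L, V.character (ιG x) = W.character (ιH x))
    (hresirr : ∃ U : FDRep ℂ L, CategoryTheory.Simple U ∧
      ∀ x : L, U.character x = V.character (ιG x))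
    (g : G) (h : H)
    (hgenG : ιG.range ⊔ Subgroup.center G ⊔ Subgroup.zpowers g = ⊤)
    (hgenH : ιH.range ⊔ Subgroup.center H ⊔ Subgroup.zpowers h = ⊤)
    (hgne : V.character g ≠ 0) (hhne : W.character h ≠ 0)
    (hsameaut : ∃ α : MulAut L, ∀ x : L,
      ιG (α x) = g * ιG x * g⁻¹ ∧ ιH (α x) = h * ιH x * h⁻¹)
    (hdvd : orderOf (QuotientGroup.mk g : G ⧸ Subgroup.center G) * Module.finrank ℂ V ∣
      (Subgroup.center G).index) :
    orderOf (QuotientGroup.mk h : H ⧸ Subgroup.center H) * Module.finrank ℂ W ∣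
      (Subgroup.center H).index := by
  obtain ⟨e⟩ := e
  obtain ⟨α, hα⟩ := hsameaut
  have hdegree : Module.finrank ℂ V = Module.finrank ℂ W :=
    finrank_eq_of_character_one_eq (by simpa only [map_one] using hres 1)
  exact conjecture21_transfer_general e hinjG hinjH hgenG hgenH (fun x ↦ (hα x).1)
    (fun x ↦ (hα x).2) (hdegree ▸ hdvd)
end

section
/- Let k be a field, V a finite-dimensional k-vector space, h : V → V a linear endomorphism, and n ≥ 1 an integer. Let T be the linear endomorphism of the n-fold tensor power V ⊗ V ⊗ ⋯ ⊗ V (n factors) determined on simple tensors by T(v₁ ⊗ v₂ ⊗ ⋯ ⊗ v_n) = h(v_n) ⊗ v₁ ⊗ v₂ ⊗ ⋯ ⊗ v_{n-1}. Then the trace of T equals the trace of h. -/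
open scoped TensorProduct

/-!
In a basis `b` of `V`, the trace of `T` is a sum over index tuples `p : Fin n → κ` of a product of
matrix entries: the `(p 0, p (n - 1))` entry of `f`, and the `(p i, p (i - 1))` entry of the
identity for each `i ≠ 0`. The identity entries kill every tuple that is not constant, and the
constant tuple at `c` contributes the diagonal entry of `f` at `c`.
-/

section PiTensorProduct

variable {ι R : Type*} {M κ : ι → Type*} [Fintype ι] [DecidableEq ι] [CommSemiring R]
  [∀ i, AddCommMonoid (M i)] [∀ i, Module R (M i)] [∀ i, Fintype (κ i)] [∀ i, DecidableEq (κ i)]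

theorem trace_piTensorProduct_eq_sum_prod_toMatrix (b : ∀ i, Module.Basis (κ i) R (M i))
    (σ : ι → ι) (f : ∀ i, M (σ i) →ₗ[R] M i) (T : (⨂[R] i, M i) →ₗ[R] ⨂[R] i, M i)
    (hT : ∀ v : ∀ i, M i,
      T (PiTensorProduct.tprod R v) = PiTensorProduct.tprod R fun i => f i (v (σ i))) :
    LinearMap.trace R (⨂[R] i, M i) T =
      ∑ p : ∀ i, κ i, ∏ i, LinearMap.toMatrix (b (σ i)) (b i) (f i) (p i) (p (σ i)) := by
  rw [LinearMap.trace_eq_matrix_trace R (Basis.piTensorProduct b)]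
  simp only [Matrix.trace, Matrix.diag_apply, LinearMap.toMatrix_apply,
    Basis.piTensorProduct_apply, hT, Basis.piTensorProduct_repr_tprod_apply]

end PiTensorProduct

section CyclicShift

variable {n : ℕ} [NeZero n]

theorem eq_apply_zero_of_forall_eq_apply_sub_one {α : Type*} {p : Fin n → α}
    (hp : ∀ i ≠ 0, p i = p (i - 1)) (i : Fin n) : p i = p 0 := by
  obtain ⟨m, rfl⟩ := Nat.exists_eq_succ_of_ne_zero (NeZero.ne n)
  induction i using Fin.induction with
  | zero => rfl
  | succ i ih =>
    have succ_sub_one : i.succ - 1 = i.castSucc := by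
      rw [sub_eq_iff_eq_add, Fin.coeSucc_eq_succ]
    rw [hp i.succ i.succ_ne_zero, succ_sub_one, ih]

theorem sum_prod_mulSingle_zero_eq_trace {R κ : Type*} [CommSemiring R] [Fintype κ]
    [DecidableEq κ] (A : Matrix κ κ R) :
    ∑ p : Fin n → κ, ∏ i, (Pi.mulSingle 0 A : Fin n → Matrix κ κ R) i (p i) (p (i - 1)) =
      A.trace := by
  symm
  refine Fintype.sum_of_injective (Function.const (Fin n)) Function.const_injective _ _ ?_ ?_
  · intro p not_const
    obtain ⟨i, hi, apply_ne⟩ : ∃ i ≠ 0, p i ≠ p (i - 1) := by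
      by_contra! eq_sub_one
      exact not_const
        ⟨p 0, funext fun i => (eq_apply_zero_of_forall_eq_apply_sub_one eq_sub_one i).symm⟩
    refine Finset.prod_eq_zero (Finset.mem_univ i) ?_
    rw [Pi.mulSingle_eq_of_ne hi, Matrix.one_apply_ne apply_ne]
  · intro c
    rw [Fintype.prod_eq_single 0 fun i hi => by simp [Pi.mulSingle_eq_of_ne hi]]
    simp

theorem trace_twisted_cyclic_shift_tensorPower_general {R M : Type*} [CommSemiring R]
    [AddCommMonoid M] [Module R M] [Module.Free R M] [Module.Finite R M] (f : M →ₗ[R] M)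
    (T : ⨂[R]^n M →ₗ[R] ⨂[R]^n M)
    (hT : ∀ v : Fin n → M,
      T (PiTensorProduct.tprod R v) =
        PiTensorProduct.tprod R fun i => if i = 0 then f (v (i - 1)) else v (i - 1)) :
    LinearMap.trace R (⨂[R]^n M) T = LinearMap.trace R M f := by
  classical
  let b := Module.Free.chooseBasis R M
  let twist : Fin n → Module.End R M := Pi.mulSingle 0 f
  have T_tprod (v : Fin n → M) : T (PiTensorProduct.tprod R v) =
      PiTensorProduct.tprod R fun i => twist i (v (i - 1)) := by
    rw [hT]
    congr with i
    by_cases hi : i = 0 <;> simp [twist, hi]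
  have toMatrix_twist (i : Fin n) : LinearMap.toMatrix b b (twist i) =
      (Pi.mulSingle 0 (LinearMap.toMatrix b b f) : Fin n → Matrix _ _ R) i :=
    Pi.apply_mulSingle (fun _ => LinearMap.toMatrix b b) (fun _ => LinearMap.toMatrix_one b) 0 f i
  rw [trace_piTensorProduct_eq_sum_prod_toMatrix (fun _ => b) (· - 1) twist T T_tprod]
  simp only [toMatrix_twist]
  rw [sum_prod_mulSingle_zero_eq_trace, LinearMap.trace_eq_matrix_trace R b]

end CyclicShift

/-- Let `V` be a finite-dimensional vector space over a field `k`,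
`f : V → V` linear, and `n ≥ 1`. If `T` is the endomorphism of the `n`-fold tensor power
`V^{⊗n}` determined on simple tensors by
`T(v₁ ⊗ v₂ ⊗ ⋯ ⊗ vₙ) = f(vₙ) ⊗ v₁ ⊗ v₂ ⊗ ⋯ ⊗ v_{n-1}`, then `trace T = trace f`.
(In `Fin n` indexing, the output entry at `i = 0` is `f (v (i - 1)) = f (v (n-1))`,
and at `i ≠ 0` it is `v (i - 1)`, where subtraction is the cyclic subtraction of `Fin n`.) -/
theorem trace_twisted_cyclic_shift_tensorPower
    (k : Type*) [Field k] (V : Type*) [AddCommGroup V] [Module k V]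
    [FiniteDimensional k V] (n : ℕ) [NeZero n] (f : V →ₗ[k] V)
    (T : ⨂[k]^n V →ₗ[k] ⨂[k]^n V)
    (hT : ∀ v : Fin n → V,
      T (PiTensorProduct.tprod k v) =
        PiTensorProduct.tprod k fun i => if i = 0 then f (v (i - 1)) else v (i - 1)) :
    LinearMap.trace k (⨂[k]^n V) T = LinearMap.trace k V f :=
  trace_twisted_cyclic_shift_tensorPower_general f T hT
end

section
/- Let G be a finite group, L ⊴ G a normal subgroup, and h ∈ G an element with G = ⟨L, h⟩ (so G/L is cyclic, generated by the image of h). If χ is an irreducible complex character of G with χ(h) ≠ 0, then the restriction χ|_L is an irreducible character of L. -/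
/-!
Let `A` be the algebra of `L`-endomorphisms of `V`, on which `h` acts by conjugation `σ`.
Since `G` is generated by `L` and `h`, a nonzero `σ`-eigenvector `S ∈ A` with eigenvalue `c` is
multiplied by a scalar under conjugation by any element of `G`. So `ker S` is `G`-stable and `S` is
invertible; comparing traces in `ρ(h) S = c S ρ(h)` gives `c = 1` because `χ(h) ≠ 0`. Hence `S`
commutes with `G` and is a scalar by Schur's lemma. If `σ ≠ 1`, then the range of `σ - 1` contains
an eigenvector, hence a scalar `a ≠ 0`; but `tr(ρ(h) (σ T - T)) = 0` for all `T`, which forces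
`a χ(h) = 0`, a contradiction. So `A` commutes with `G` and consists of scalars. As `V` is
semisimple over `L` by Clifford's theorem, it is irreducible over `L`.
-/

open CategoryTheory LinearMap Module Representation
open scoped MonoidAlgebra

section LinearAlgebra

theorem trace_eq_mul_trace_of_mul_eq_smul_mul {R M : Type*} [CommRing R] [AddCommGroup M]
    [Module R M] {x s : End R M} {c : R} (hs : IsUnit s) (hxs : x * s = c • (s * x)) :
    trace R M x = c * trace R M x := by
  obtain ⟨u, rfl⟩ := hs
  calc trace R M x = trace R M (x * u * ↑u⁻¹) := by rw [Units.mul_inv_cancel_right]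
    _ = c * trace R M (u * x * ↑u⁻¹) := by rw [hxs, smul_mul_assoc, map_smul, smul_eq_mul]
    _ = c * trace R M x := by rw [trace_mul_comm, Units.inv_mul_cancel_left]

theorem exists_mem_range_apply_eq_smul {K U : Type*} [Field K] [IsAlgClosed K] [AddCommGroup U]
    [Module K U] [FiniteDimensional K U] {f : End K U} (hf : f ≠ 0) :
    ∃ c : K, ∃ u ∈ range f, u ≠ 0 ∧ f u = c • u := by
  have : Nontrivial (range f) :=
    Submodule.nontrivial_iff_ne_bot.2 fun hbot ↦ hf (range_eq_bot.1 hbot)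
  obtain ⟨c, hc⟩ := End.exists_eigenvalue (f.restrict fun u (_ : u ∈ range f) ↦ mem_range_self f u)
  obtain ⟨⟨u, hu⟩, heig⟩ := hc.exists_hasEigenvector
  exact ⟨c, u, hu, fun h0 ↦ heig.2 (Subtype.ext h0), congrArg Subtype.val heig.apply_eq_smul⟩

theorem isSimpleModule_of_forall_surjective {R M : Type*} [Ring R] [AddCommGroup M] [Module R M]
    [Nontrivial M] [IsSemisimpleModule R M]
    (hsurj : ∀ f : End R M, f ≠ 0 → Function.Surjective f) : IsSimpleModule R M := by
  rw [isSimpleModule_iff]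
  refine { eq_bot_or_eq_top := fun N ↦ or_iff_not_imp_left.2 fun hN ↦ ?_ }
  obtain ⟨N', hcompl⟩ := exists_isCompl N
  have hrange := Submodule.range_projection hcompl
  have hproj : N.projection N' hcompl ≠ 0 := fun h0 ↦ hN (by rw [← hrange, h0, range_zero])
  rw [← hrange, range_eq_top.2 (hsurj _ hproj)]

end LinearAlgebra

section Semiinvariant

variable {k G V : Type*} [CommRing k] [Group G] [AddCommGroup V] [Module k V]
  (ρ : Representation k G V) {h : G} {v : V}

theorem apply_zpow_eq_zpow_smul {c : kˣ} (hv : ρ h v = c • v) (n : ℤ) :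
    ρ (h ^ n) v = c ^ n • v := by
  have hv_inv : ρ h⁻¹ v = c⁻¹ • v := by
    rw [eq_inv_smul_iff, ← map_smul_of_tower, ← hv, inv_self_apply]
  induction n with
  | zero => simp
  | succ n ih => rw [zpow_add_one, map_mul, End.mul_apply, hv, map_smul_of_tower, ih, smul_smul,
      zpow_add_one, mul_comm]
  | pred n ih => rw [zpow_sub_one, map_mul, End.mul_apply, hv_inv, map_smul_of_tower, ih,
      smul_smul, zpow_sub_one, mul_comm]

variable {L : Subgroup G} [L.Normal]

theorem exists_apply_eq_zpow_smul (hgen : L ⊔ Subgroup.zpowers h = ⊤)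
    (hL : v ∈ invariants (ρ.comp L.subtype)) {c : kˣ} (hv : ρ h v = c • v) (g : G) :
    ∃ n : ℤ, ρ g v = c ^ n • v := by
  obtain ⟨l, hl, _, ⟨n, rfl⟩, rfl⟩ :=
    Subgroup.mem_sup_of_normal_left.1 (hgen ▸ Subgroup.mem_top g)
  refine ⟨n, ?_⟩
  rw [map_mul, End.mul_apply, apply_zpow_eq_zpow_smul ρ hv, map_smul_of_tower]
  exact congrArg _ (hL ⟨l, hl⟩)

theorem mem_invariants_of_apply_eq_self (hgen : L ⊔ Subgroup.zpowers h = ⊤)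
    (hL : v ∈ invariants (ρ.comp L.subtype)) (hv : ρ h v = v) : v ∈ invariants ρ := fun g ↦ by
  obtain ⟨n, hn⟩ := exists_apply_eq_zpow_smul ρ hgen hL (hv.trans (one_smul kˣ v).symm) g
  rw [hn, one_zpow, one_smul]

end Semiinvariant

theorem nontrivial_subrepresentation_iff {k G V : Type*} [CommRing k] [Monoid G] [AddCommGroup V]
    [Module k V] (ρ : Representation k G V) : Nontrivial (Subrepresentation ρ) ↔ Nontrivial V := by
  rw [← Submodule.nontrivial_iff k (M := V)]
  exact ⟨fun _ ↦ Subrepresentation.toSubmodule_injective.nontrivial (α := Subrepresentation ρ),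
    fun _ ↦ ⟨⊥, ⊤, fun h ↦ bot_ne_top (congrArg Subrepresentation.toSubmodule h)⟩⟩

theorem nontrivial_of_isIrreducible {k G V : Type*} [Field k] [Monoid G] [AddCommGroup V]
    [Module k V] (ρ : Representation k G V) [hρ : IsIrreducible ρ] : Nontrivial V :=
  (nontrivial_subrepresentation_iff ρ).1 hρ.toNontrivial

section NormalSubgroup

variable {k G V : Type*} [CommRing k] [Group G] [AddCommGroup V] [Module k V]
  (ρ : Representation k G V) (L : Subgroup G) [L.Normal]

theorem mul_asAlgebraHom_comp_subtype (g : G) (r : k[L]) :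
    ρ g * asAlgebraHom (ρ.comp L.subtype) r =
      asAlgebraHom (ρ.comp L.subtype)
        (MonoidAlgebra.mapDomainRingEquiv k (MulAut.conjNormal g) r) * ρ g := by
  induction r using MonoidAlgebra.induction_linear with
  | zero => simp
  | add r s hr hs => rw [map_add, map_add, map_add, mul_add, add_mul, hr, hs]
  | single l a => simp [asAlgebraHom_single, ← map_mul]

/-- The operator `ρ g` as a semilinear endomorphism of the `k[L]`-module underlying the restriction
of `ρ` to a normal subgroup `L`, over the ring automorphism of `k[L]` induced by conjugation by `g`.
It shows that `G` permutes the `L`-submodules of `V`. -/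
noncomputable def conjSemilinearMap (g : G) :
    asModule (ρ.comp L.subtype)
      →ₛₗ[(MonoidAlgebra.mapDomainRingEquiv k (MulAut.conjNormal g : L ≃* L) : k[L] →+* k[L])]
      asModule (ρ.comp L.subtype) where
  toFun v := (asModuleEquiv (ρ.comp L.subtype)).symm (ρ g (asModuleEquiv (ρ.comp L.subtype) v))
  map_add' v w := by simp only [map_add]
  map_smul' r v := by
    rw [LinearEquiv.symm_apply_eq, asModuleEquiv_map_smul, asModuleEquiv_map_smul]
    exact LinearMap.congr_fun (mul_asAlgebraHom_comp_subtype ρ L g r) _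

end NormalSubgroup

section Conjugation

variable {k G V : Type*} [CommRing k] [Group G] [AddCommGroup V] [Module k V]
  {ρ : Representation k G V}

theorem mul_eq_smul_mul_of_linHom_eq_smul {g : G} {S : End k V} {c : k}
    (hS : linHom ρ ρ g S = c • S) : ρ g * S = c • (S * ρ g) := by
  rw [← smul_mul_assoc, ← hS]
  ext v
  simp

theorem trace_mul_linHom_sub (g : G) (T : End k V) :
    trace k V (ρ g * (linHom ρ ρ g T - T)) = 0 := by
  have hcomm : linHom ρ ρ g T * ρ g = ρ g * T := by ext v; simp
  rw [mul_sub, map_sub, trace_mul_comm, hcomm, sub_self]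

end Conjugation

section Irreducible

variable {k G V : Type*} [Field k] [Group G] [AddCommGroup V] [Module k V]

theorem isSemisimpleRepresentation_comp_subtype (ρ : Representation k G V) [IsIrreducible ρ]
    [FiniteDimensional k V] (L : Subgroup G) [L.Normal] :
    IsSemisimpleRepresentation (ρ.comp L.subtype) := by
  have hV : Nontrivial V := nontrivial_of_isIrreducible ρ
  let M := asModule (ρ.comp L.subtype)
  have : Nontrivial M := hV
  have : FiniteDimensional k M := ‹FiniteDimensional k V›
  have : IsArtinian k[L] M := isArtinian_of_tower k inferInstance
  have : IsNoetherian k[L] M := isNoetherian_of_tower k inferInstance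
  rw [isSemisimpleRepresentation_iff_isSemisimpleModule_asModule,
    IsArtinian.isSemisimpleModule_iff_jacobson]
  let J : Subrepresentation ρ :=
    ⟨(Subrepresentation.ofSubmodule' (jacobson k[L] M)).toSubmodule, fun g _ hv ↦
      le_comap_jacobson (conjSemilinearMap ρ L g) hv⟩
  rcases eq_bot_or_eq_top J with hbot | htop
  · exact (Submodule.eq_bot_iff _).2 fun v hv ↦ hbot.le hv
  · exact absurd (eq_top_iff.2 fun v _ ↦ htop.ge trivial) (jacobson_lt_top k[L] M).ne

variable {ρ : Representation k G V} [IsIrreducible ρ]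

theorem ker_eq_bot_of_forall_exists_linHom_eq_smul {S : End k V} (hS : S ≠ 0)
    (heig : ∀ g, ∃ c : k, linHom ρ ρ g S = c • S) : ker S = ⊥ := by
  let K : Subrepresentation ρ :=
    { toSubmodule := ker S
      apply_mem_toSubmodule := fun g v hv ↦ by
        obtain ⟨c, hc⟩ := heig g⁻¹
        have h := LinearMap.congr_fun hc v
        rw [mem_ker] at hv ⊢
        apply (ρ.apply_bijective g⁻¹).1
        simpa [hv] using h }
  rcases eq_bot_or_eq_top K with hbot | htop
  · exact congrArg Subrepresentation.toSubmodule hbot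
  · exact absurd (ker_eq_top.1 (congrArg Subrepresentation.toSubmodule htop)) hS

variable [FiniteDimensional k V] {L : Subgroup G} [L.Normal] {h : G}

theorem linHom_apply_eq_self_of_linHom_eq_smul (hgen : L ⊔ Subgroup.zpowers h = ⊤)
    (htr : trace k V (ρ h) ≠ 0) {S : End k V}
    (hSL : S ∈ invariants ((linHom ρ ρ).comp L.subtype)) {c : k}
    (hc : linHom ρ ρ h S = c • S) : linHom ρ ρ h S = S := by
  rcases eq_or_ne S 0 with rfl | hS
  · exact map_zero _
  have hc_ne : c ≠ 0 := by
    rintro rfl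
    rw [zero_smul, map_eq_zero_iff _ ((linHom ρ ρ).apply_bijective h).injective] at hc
    exact hS hc
  lift c to kˣ using hc_ne.isUnit
  have hker : ker S = ⊥ := ker_eq_bot_of_forall_exists_linHom_eq_smul hS fun g ↦
    (exists_apply_eq_zpow_smul _ hgen hSL hc g).imp' (fun n ↦ ↑(c ^ n)) fun _ ↦ id
  have hc_one : (c : k) = 1 := (mul_eq_right₀ htr).1 (trace_eq_mul_trace_of_mul_eq_smul_mul
    ((isUnit_iff_ker_eq_bot S).2 hker) (mul_eq_smul_mul_of_linHom_eq_smul hc)).symm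
  rw [hc, hc_one, one_smul]

variable [IsAlgClosed k]

theorem exists_eq_smul_one_of_mem_invariants {T : End k V} (hT : T ∈ invariants (linHom ρ ρ)) :
    ∃ a : k, T = a • 1 := by
  obtain ⟨a, ha⟩ := IsIrreducible.algebraMap_intertwiningMap_bijective_of_isAlgClosed.2
    (invariantsEquivIntertwiningMap ρ ρ ⟨T, hT⟩)
  exact ⟨a, (congrArg IntertwiningMap.toLinearMap ha).symm⟩

theorem linHom_apply_eq_self_of_mem_invariants_comp_subtype
    (hgen : L ⊔ Subgroup.zpowers h = ⊤) (htr : trace k V (ρ h) ≠ 0) {T : End k V}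
    (hT : T ∈ invariants ((linHom ρ ρ).comp L.subtype)) : linHom ρ ρ h T = T := by
  suffices hconj : toInvariants (linHom ρ ρ) L h - 1 = 0 from
    sub_eq_zero.1 (congrArg Subtype.val (LinearMap.congr_fun hconj ⟨T, hT⟩))
  by_contra hne
  obtain ⟨c, ⟨S, hSL⟩, ⟨R, hR⟩, hS_ne, hS⟩ := exists_mem_range_apply_eq_smul hne
  have hSR : linHom ρ ρ h R.1 - R.1 = S := congrArg Subtype.val hR
  have heig : linHom ρ ρ h S = (c + 1) • S := by
    rw [add_smul, one_smul]
    exact sub_eq_iff_eq_add.1 (congrArg Subtype.val hS)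
  obtain ⟨a, rfl⟩ := exists_eq_smul_one_of_mem_invariants (mem_invariants_of_apply_eq_self _ hgen
    hSL (linHom_apply_eq_self_of_linHom_eq_smul hgen htr hSL heig))
  have htr_smul : a * trace k V (ρ h) = 0 := by
    rw [← trace_mul_linHom_sub h R.1, hSR, mul_smul_comm, mul_one, map_smul, smul_eq_mul]
  have ha : a = 0 := (mul_eq_zero.1 htr_smul).resolve_right htr
  exact hS_ne (Subtype.ext (ha ▸ zero_smul k 1))

theorem exists_eq_smul_one_of_mem_invariants_comp_subtype (hgen : L ⊔ Subgroup.zpowers h = ⊤)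
    (htr : trace k V (ρ h) ≠ 0) {T : End k V}
    (hT : T ∈ invariants ((linHom ρ ρ).comp L.subtype)) : ∃ a : k, T = a • 1 :=
  exists_eq_smul_one_of_mem_invariants (mem_invariants_of_apply_eq_self _ hgen hT
    (linHom_apply_eq_self_of_mem_invariants_comp_subtype hgen htr hT))

theorem isIrreducible_comp_subtype_of_trace_ne_zero (hgen : L ⊔ Subgroup.zpowers h = ⊤)
    (htr : trace k V (ρ h) ≠ 0) : IsIrreducible (ρ.comp L.subtype) := by
  have hV : Nontrivial V := nontrivial_of_isIrreducible ρ
  have : Nontrivial (asModule (ρ.comp L.subtype)) := hV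
  have := (isSemisimpleRepresentation_iff_isSemisimpleModule_asModule _).1
    (isSemisimpleRepresentation_comp_subtype ρ L)
  rw [irreducible_iff_isSimpleModule_asModule]
  refine isSimpleModule_of_forall_surjective fun f hf ↦ ?_
  let T := (IntertwiningMap.equivAlgEnd (ρ := ρ.comp L.subtype)).symm f
  have hT : T.toLinearMap ∈ invariants ((linHom ρ ρ).comp L.subtype) :=
    ((invariantsEquivIntertwiningMap _ _).symm T).2
  obtain ⟨a, ha⟩ := exists_eq_smul_one_of_mem_invariants_comp_subtype hgen htr hT
  have hfa (v : V) : f v = a • v := LinearMap.congr_fun ha v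
  have ha_ne : a ≠ 0 := by
    rintro rfl
    exact hf (LinearMap.ext fun v ↦ (hfa v).trans (zero_smul k (v : V)))
  exact fun v ↦ ⟨(a⁻¹ • v : V), (hfa _).trans (smul_inv_smul₀ ha_ne _)⟩

end Irreducible

universe u v

section FDRep

variable {k : Type u} {G : Type v} [CommRing k] [Monoid G]

/-- The intertwining map underlying a morphism of `FDRep k G`. -/
def toIntertwiningMap {V W : FDRep k G} (f : V ⟶ W) : IntertwiningMap V.ρ W.ρ :=
  ⟨f.hom.hom.hom, fun g ↦ congrArg (fun φ ↦ φ.hom.hom) (f.comm g)⟩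

theorem isZero_iff_subsingleton (V : FDRep k G) : Limits.IsZero V ↔ Subsingleton V := by
  rw [Limits.IsZero.iff_id_eq_zero]
  refine ⟨fun h ↦ ⟨fun v w ↦ ?_⟩, fun h ↦ ?_⟩
  · have hz (v : V) : v = 0 := congrArg (fun f : V ⟶ V ↦ f.hom.hom.hom v) h
    rw [hz v, hz w]
  · ext v
    exact Subsingleton.elim (α := V) _ _

end FDRep

section Simple

variable {k : Type u} {G : Type v} [Field k] [Monoid G]

/-- The inclusion of a subrepresentation as a morphism of `FDRep k G`. -/
noncomputable def subtypeHom (V : FDRep k G) (W : Subrepresentation V.ρ) :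
    FDRep.of W.toRepresentation ⟶ V :=
  ⟨InducedCategory.homMk (ModuleCat.ofHom W.toSubmodule.subtype), fun _ ↦ by ext1; rfl⟩

theorem simple_of_isIrreducible (V : FDRep k G) [IsIrreducible V.ρ] : Simple V := by
  have hV : ¬Subsingleton V :=
    not_subsingleton_iff_nontrivial.2 (nontrivial_of_isIrreducible V.ρ)
  refine ⟨fun {W} f _ ↦ ⟨?_, fun hf ↦ ?_⟩⟩
  · rintro _ rfl
    exact hV ((isZero_iff_subsingleton V).1 ((Limits.IsZero.iff_id_eq_zero V).2
      ((IsIso.inv_hom_id (0 : W ⟶ V)).symm.trans Limits.comp_zero)))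
  · have hsurj := (IsIrreducible.surjective_or_eq_zero (toIntertwiningMap f)).resolve_right
      fun h0 ↦ hf (by ext v; exact congrArg (fun φ : IntertwiningMap W.ρ V.ρ ↦ φ v) h0)
    have : Epi f := ConcreteCategory.epi_of_surjective f hsurj
    exact isIso_of_mono_of_epi f

theorem isIrreducible_of_simple (V : FDRep k G) [Simple V] : IsIrreducible V.ρ := by
  have : Nontrivial (Subrepresentation V.ρ) := by
    rw [nontrivial_subrepresentation_iff, ← not_subsingleton_iff_nontrivial,
      ← isZero_iff_subsingleton]
    exact Simple.not_isZero V
  refine { eq_bot_or_eq_top := fun W ↦ or_iff_not_imp_left.2 fun hW ↦ ?_ }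
  have : Mono (subtypeHom V W) := ConcreteCategory.mono_of_injective _ Subtype.val_injective
  have hne : subtypeHom V W ≠ 0 := fun h0 ↦ hW (eq_bot_iff.2 fun w hw ↦
    congrArg (fun f : FDRep.of W.toRepresentation ⟶ V ↦ f.hom.hom.hom ⟨w, hw⟩) h0)
  have : IsIso (subtypeHom V W) := (Simple.mono_isIso_iff_nonzero _).2 hne
  refine eq_top_iff.2 fun v _ ↦ ?_
  have hv : subtypeHom V W (inv (subtypeHom V W) v) = v := by simp
  exact hv ▸ (inv (subtypeHom V W) v).2

end Simple

theorem restriction_simple_of_char_ne_zero_general {k : Type u} [Field k] [IsAlgClosed k]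
    {G : Type v} [Group G] (L : Subgroup G) [L.Normal] (h : G)
    (hgen : L ⊔ Subgroup.zpowers h = ⊤) (V : FDRep k G) [Simple V]
    (hne : V.character h ≠ 0) : Simple (FDRep.of (V.ρ.comp L.subtype)) := by
  have := isIrreducible_of_simple V
  have : IsIrreducible (FDRep.of (V.ρ.comp L.subtype)).ρ :=
    isIrreducible_comp_subtype_of_trace_ne_zero hgen hne
  exact simple_of_isIrreducible _

/-- Let `G` be a finite group, `L ⊴ G`, and `h ∈ G` with `G = ⟨L, h⟩`.
If `χ` is an irreducible complex character of `G` with `χ(h) ≠ 0`, then the restriction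
`χ|_L` is an irreducible character of `L`. -/
theorem restriction_simple_of_char_ne_zero
    (G : Type) [Group G] [Finite G] (L : Subgroup G) [L.Normal]
    (h : G) (hgen : L ⊔ Subgroup.zpowers h = ⊤)
    (V : FDRep ℂ G) (hV : CategoryTheory.Simple V)
    (hne : V.character h ≠ 0) :
    CategoryTheory.Simple (FDRep.of (V.ρ.comp L.subtype)) :=
  restriction_simple_of_char_ne_zero_general L h hgen V hne
end
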